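/- arXiv:2103.04587 — 3 statements merged into one kernel-verified Lean document; each statement's English description precedes it below -/
import Mathlib

section
/- Let n ∈ ℕ and let H be a connected simple graph with |H| ≤ n. Then q(P_n ∨ H) = 2 if and only if |H| ≥ n − 2. -/
open Matrix Filter

/-- `A ∈ S(G)`: real symmetric matrix whose off-diagonal zero pattern is given by `G`. -/
def inS {V : Type*} (G : SimpleGraph V) (A : Matrix V V ℝ) : Prop :=
  A.IsSymm ∧ ∀ i j : V, i ≠ j → (A i j ≠ 0 ↔ G.Adj i j)

/-- The spectrum of a matrix, as the multiset of roots of its characteristic polynomial. -/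
noncomputable def specMultiset {V : Type*} [Fintype V] [DecidableEq V]
    (A : Matrix V V ℝ) : Multiset ℝ :=
  A.charpoly.roots

/-- The number of distinct eigenvalues of a matrix. -/
noncomputable def qMat {V : Type*} [Fintype V] [DecidableEq V] (A : Matrix V V ℝ) : ℕ :=
  (specMultiset A).toFinset.card

/-- `q(G)`: the minimum number of distinct eigenvalues over matrices in `S(G)`. -/
noncomputable def qGraph {V : Type*} [Fintype V] [DecidableEq V] (G : SimpleGraph V) : ℕ :=
  sInf {q | ∃ A : Matrix V V ℝ, inS G A ∧ qMat A = q}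

/-- The strong spectral property. -/
def HasSSP {V : Type*} [Fintype V] [DecidableEq V] (A : Matrix V V ℝ) : Prop :=
  ∀ X : Matrix V V ℝ, X.IsSymm → A * X = X * A →
    Matrix.hadamard A X = 0 → Matrix.hadamard (1 : Matrix V V ℝ) X = 0 → X = 0

/-- Generic realisability of a multiset of eigenvalues for a graph. -/
def GenericallyRealisable {V : Type*} [Fintype V] [DecidableEq V]
    (G : SimpleGraph V) (σ : Multiset ℝ) : Prop :=
  ∀ Y : Finset (V → ℝ), (∀ y ∈ Y, y ≠ 0) →
    ∃ (d : V → ℝ) (U : Matrix V V ℝ),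
      Multiset.map d Finset.univ.val = σ ∧ Uᵀ * U = 1 ∧
      inS G (U * Matrix.diagonal d * Uᵀ) ∧
      ∀ y ∈ Y, ∀ i, U.mulVec y i ≠ 0

/-- The partial join `(G₁, X) ∨ G₂`: the disjoint union of `G₁` and `G₂` together with all
edges joining vertices of `X ⊆ V(G₁)` to vertices of `G₂`. -/
def partialJoin {α β : Type*} (G₁ : SimpleGraph α) (X : Set α) (G₂ : SimpleGraph β) :
    SimpleGraph (α ⊕ β) where
  Adj x y :=
    (∃ a b, G₁.Adj a b ∧ x = Sum.inl a ∧ y = Sum.inl b) ∨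
    (∃ a b, G₂.Adj a b ∧ x = Sum.inr a ∧ y = Sum.inr b) ∨
    (∃ a ∈ X, ∃ b, x = Sum.inl a ∧ y = Sum.inr b) ∨
    (∃ a ∈ X, ∃ b, x = Sum.inr b ∧ y = Sum.inl a)
  symm := by
    refine ⟨?_⟩
    rintro x y (⟨a, b, hab, rfl, rfl⟩ | ⟨a, b, hab, rfl, rfl⟩ | ⟨a, ha, b, rfl, rfl⟩ |
      ⟨a, ha, b, rfl, rfl⟩)
    · exact Or.inl ⟨b, a, hab.symm, rfl, rfl⟩
    · exact Or.inr (Or.inl ⟨b, a, hab.symm, rfl, rfl⟩)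
    · exact Or.inr (Or.inr (Or.inr ⟨a, ha, b, rfl, rfl⟩))
    · exact Or.inr (Or.inr (Or.inl ⟨a, ha, b, rfl, rfl⟩))
  loopless := by
    refine ⟨?_⟩
    rintro x (⟨a, b, hab, rfl, h⟩ | ⟨a, b, hab, rfl, h⟩ | ⟨a, ha, b, rfl, h⟩ | ⟨a, ha, b, rfl, h⟩)
    · cases h; exact hab.ne rfl
    · cases h; exact hab.ne rfl
    · exact (Sum.inl_ne_inr h).elim
    · exact (Sum.inr_ne_inl h).elim

/-- The join `G₁ ∨ G₂` of two graphs. -/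
def graphJoin {α β : Type*} (G₁ : SimpleGraph α) (G₂ : SimpleGraph β) : SimpleGraph (α ⊕ β) :=
  partialJoin G₁ Set.univ G₂

/-- The disjoint union of a family of graphs. -/
def sigmaGraph {ι : Type*} {α : ι → Type*} (G : ∀ i, SimpleGraph (α i)) :
    SimpleGraph (Σ i, α i) where
  Adj x y := ∃ (i : ι) (a b : α i), (G i).Adj a b ∧ x = ⟨i, a⟩ ∧ y = ⟨i, b⟩
  symm := by
    refine ⟨?_⟩
    rintro x y ⟨i, a, b, hab, rfl, rfl⟩
    exact ⟨i, b, a, hab.symm, rfl, rfl⟩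
  loopless := by
    refine ⟨?_⟩
    rintro x ⟨i, a, b, hab, rfl, h⟩
    obtain rfl : a = b := by simpa using h
    exact hab.ne rfl


theorem spec_mem {V : Type*} [Fintype V] [DecidableEq V] (A : Matrix V V ℝ) (hA : A.IsHermitian)
   (i : V) : hA.eigenvalues i ∈ specMultiset A := by
  unfold specMultiset
  rw [hA.roots_charpoly_eq_eigenvalues]
  simp

theorem herm_of_symm {V : Type*} {A : Matrix V V ℝ} (hA : A.IsSymm) : A.IsHermitian := by
  rw [Matrix.IsHermitian, Matrix.conjTranspose_eq_transpose_of_trivial]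
  exact hA

theorem quad_zero {V : Type*} [Fintype V] [DecidableEq V] (A : Matrix V V ℝ) (hA : A.IsSymm)
    (s t : ℝ) (hr : ∀ r ∈ specMultiset A, r * r = s * r + t) : A * A = s • A + t • 1 := by
  have hH := herm_of_symm hA
  have key : ∀ i, (A * A) *ᵥ (hH.eigenvectorBasis i).ofLp = (s • A + t • 1) *ᵥ (hH.eigenvectorBasis i).ofLp := by
    intro i
    have h1 := hH.mulVec_eigenvectorBasis i
    have h2 := hr _ (spec_mem A hH i)
    rw [← Matrix.mulVec_mulVec, Matrix.add_mulVec, Matrix.smul_mulVec, Matrix.smul_mulVec, h1,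
      Matrix.mulVec_smul, h1, Matrix.one_mulVec, smul_smul, h2, add_smul, smul_smul]
  have := hH.eigenvectorBasis.toBasis.ext (f₁ := Matrix.toEuclideanLin (A * A))
    (f₂ := Matrix.toEuclideanLin (s • A + t • 1)) (by
      intro i
      simp only [OrthonormalBasis.coe_toBasis, Matrix.toLpLin_apply]
      rw [key i])
  exact Matrix.toEuclideanLin.injective this

theorem qMat_ge {V : Type*} [Fintype V] [DecidableEq V] (G : SimpleGraph V) (A : Matrix V V ℝ)
    (hA : inS G A) (u v : V) (huv : G.Adj u v) : 2 ≤ qMat A := by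
  by_contra hlt
  have h1 : (specMultiset A).toFinset.card ≤ 1 := by unfold qMat at hlt; omega
  rw [Finset.card_le_one] at h1
  have hH := herm_of_symm hA.1
  have heq : ∀ i, hH.eigenvalues i = hH.eigenvalues u := fun i =>
    h1 _ (by simpa using spec_mem A hH i) _ (by simpa using spec_mem A hH u)
  have h0 : Matrix.toEuclideanLin A = Matrix.toEuclideanLin (hH.eigenvalues u • (1 : Matrix V V ℝ)) := by
    apply hH.eigenvectorBasis.toBasis.ext
    intro i
    simp only [OrthonormalBasis.coe_toBasis, Matrix.toLpLin_apply]
    rw [hH.mulVec_eigenvectorBasis i, heq i, Matrix.smul_mulVec, Matrix.one_mulVec]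
  have h3 := Matrix.toEuclideanLin.injective h0
  have h4 := (hA.2 u v huv.ne).2 huv
  rw [h3] at h4
  simp [huv.ne] at h4

theorem qMat_le {V : Type*} [Fintype V] [DecidableEq V] (A : Matrix V V ℝ) (R : ℝ)
    (hA : A * A = (R * R) • 1) : qMat A ≤ 2 := by
  unfold qMat
  have : (specMultiset A).toFinset ⊆ {R, -R} := by
    intro r hr
    simp only [specMultiset, Multiset.mem_toFinset] at hr
    have hr := (Polynomial.mem_roots'.1 hr).2
    rw [Polynomial.IsRoot, Matrix.eval_charpoly, ← Matrix.exists_mulVec_eq_zero_iff] at hr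
    obtain ⟨v, hv, h⟩ := hr
    have h1 : A *ᵥ v = r • v := by
      rw [Matrix.sub_mulVec, sub_eq_zero] at h
      rw [← h]; ext i; simp [Matrix.scalar_apply, Matrix.mulVec_diagonal]
    have h2 : (R * R) • v = (r * r) • v := by
      have := congrArg (· *ᵥ v) hA
      simp only [← Matrix.mulVec_mulVec, h1, Matrix.mulVec_smul, Matrix.smul_mulVec, Matrix.one_mulVec, smul_smul] at this
      exact this.symm
    have h3 : R * R = r * r := smul_left_injective ℝ hv h2
    have := mul_self_eq_mul_self_iff.1 h3.symm
    simpa using this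
  exact (Finset.card_le_card this).trans Finset.card_le_two

theorem join_ll {α β : Type*} (G : SimpleGraph α) (H : SimpleGraph β) (a b : α) :
    (graphJoin G H).Adj (Sum.inl a) (Sum.inl b) ↔ G.Adj a b := by
  simp [graphJoin, partialJoin]
theorem join_rr {α β : Type*} (G : SimpleGraph α) (H : SimpleGraph β) (a b : β) :
    (graphJoin G H).Adj (Sum.inr a) (Sum.inr b) ↔ H.Adj a b := by
  simp [graphJoin, partialJoin]
theorem join_lr {α β : Type*} (G : SimpleGraph α) (H : SimpleGraph β) (a : α) (b : β) :
    (graphJoin G H).Adj (Sum.inl a) (Sum.inr b) := by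
  simp [graphJoin, partialJoin]

theorem forward (n h : ℕ) (H : SimpleGraph (Fin h))
    (hq : qGraph (graphJoin (SimpleGraph.pathGraph n) H) = 2) : n ≤ h + 2 := by
  obtain ⟨A, hA, hq2⟩ : 2 ∈ {q | ∃ A, inS (graphJoin (SimpleGraph.pathGraph n) H) A ∧ qMat A = q} := by
    rw [← hq]
    apply Nat.sInf_mem
    by_contra hne
    rw [Set.not_nonempty_iff_eq_empty] at hne
    simp [qGraph, hne] at hq
  obtain ⟨l, m, -, hlm⟩ := Finset.card_eq_two.1 hq2
  have hsq := quad_zero A hA.1 (l + m) (-(l * m)) (by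
    intro r hr
    have : r ∈ (specMultiset A).toFinset := by simpa using hr
    rw [hlm] at this
    simp only [Finset.mem_insert, Finset.mem_singleton] at this
    rcases this with rfl | rfl <;> ring)
  by_contra hlt
  obtain ⟨k, rfl⟩ : ∃ k, n = k + 2 := ⟨n - 2, by omega⟩
  have hz : ∀ i j : Fin (k+2), i ≠ j → ¬ (SimpleGraph.pathGraph (k+2)).Adj i j → A (Sum.inl i) (Sum.inl j) = 0 := by
    intro i j hij hadj
    by_contra h0
    exact hadj ((join_ll _ _ _ _).1 ((hA.2 _ _ (by simpa using hij)).1 h0))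
  have hnz : ∀ i j : Fin (k+2), (SimpleGraph.pathGraph (k+2)).Adj i j → A (Sum.inl i) (Sum.inl j) ≠ 0 := by
    intro i j hadj
    exact (hA.2 _ _ (by simpa using hadj.ne)).2 ((join_ll _ _ _ _).2 hadj)
  simp only [SimpleGraph.pathGraph_adj] at hz hnz
  let ρ : Fin k → Fin (k+2) := fun i => ⟨i, by omega⟩
  let σ : Fin k → Fin (k+2) := fun i => ⟨i + 2, by omega⟩
  let B1 : Matrix (Fin k) (Fin h) ℝ := fun i j => A (Sum.inl (ρ i)) (Sum.inr j)
  let B2 : Matrix (Fin h) (Fin k) ℝ := fun j i => A (Sum.inr j) (Sum.inl (σ i))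
  have ent : ∀ i j : Fin k, i ≤ j → (B1 * B2) i j = - ∑ m : Fin (k+2), A (Sum.inl (ρ i)) (Sum.inl m) * A (Sum.inl m) (Sum.inl (σ j)) := by
    intro i j hij
    have := congrFun (congrFun hsq (Sum.inl (ρ i))) (Sum.inl (σ j))
    rw [Matrix.mul_apply, Fintype.sum_sum_type] at this
    have hne : ρ i ≠ σ j := by
      simp only [ρ, σ, ne_eq, Fin.mk.injEq]; have : (i : ℕ) ≤ j := hij; omega
    have h0 : A (Sum.inl (ρ i)) (Sum.inl (σ j)) = 0 := by
      apply hz _ _ hne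
      have : (i : ℕ) ≤ j := hij
      simp only [ρ, σ]; omega
    simp only [Matrix.add_apply, Matrix.smul_apply, h0, Matrix.one_apply, Sum.inl.injEq, hne, if_false] at this
    rw [Matrix.mul_apply]
    simp only [B1, B2]
    simp at this
    linarith
  have hdet : (B1 * B2).det ≠ 0 := by
    rw [Matrix.det_of_isLowerTriangular, Finset.prod_ne_zero_iff]
    · intro i _
      rw [ent i i le_rfl, neg_ne_zero, Finset.sum_eq_single (⟨i+1, by omega⟩ : Fin (k+2))]
      · apply mul_ne_zero <;> apply hnz <;> simp [ρ, σ]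
      · intro m _ hm
        have hm' : (m : ℕ) ≠ i + 1 := fun h => hm (Fin.ext h)
        by_cases h1 : (m : ℕ) ≤ i
        · rw [hz m (σ i), mul_zero]
          · intro h; rw [h] at h1; simp [σ] at h1
          · simp [σ]; omega
        · rw [hz (ρ i) m, zero_mul]
          · intro h; rw [← h] at h1; simp [ρ] at h1
          · simp [ρ]; omega
      · simp
    · intro i j hij
      have hij : (i : ℕ) < j := hij
      rw [ent i j hij.le, neg_eq_zero]
      apply Finset.sum_eq_zero
      intro m _
      by_cases h1 : (m : ℕ) ≤ i + 1
      · rw [hz m (σ j), mul_zero]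
        · intro h; rw [h] at h1; simp [σ] at h1; omega
        · simp [σ]; omega
      · rw [hz (ρ i) m, zero_mul]
        · intro h; rw [← h] at h1; simp [ρ] at h1
        · simp [ρ]; omega
  have hr := Matrix.rank_of_isUnit (B1 * B2) ((Matrix.isUnit_iff_isUnit_det _).2 hdet.isUnit)
  have h1 := Matrix.rank_mul_le_left B1 B2
  have h2 := Matrix.rank_le_width B1
  simp at hr
  omega

/-- The generic nonvanishing determinant, as a polynomial in the start vector. -/
noncomputable def gramPoly {ι : Type*} [Fintype ι] (d x : ι → ℝ) (a : ℕ) :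
    Matrix (Fin (a+1)) (Fin (a+1)) (MvPolynomial ι ℝ) :=
  fun c b => if (c : ℕ) < a then ∑ l, MvPolynomial.C (d l ^ (c : ℕ) * d l ^ (b : ℕ)) * MvPolynomial.X l ^ 2
    else ∑ l, MvPolynomial.C (x l * d l ^ (b : ℕ)) * MvPolynomial.X l

theorem gramPoly_eval {ι : Type*} [Fintype ι] (d x : ι → ℝ) (a : ℕ) (w : ι → ℝ) (v : Fin (a+1) → ℝ)
    (hv : v ≠ 0)
    (h1 : ∀ c < a, ∑ l, d l ^ c * w l * (∑ b, v b * (d l ^ (b : ℕ) * w l)) = 0)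
    (h2 : ∑ l, x l * (∑ b, v b * (d l ^ (b : ℕ) * w l)) = 0) :
    MvPolynomial.eval w (gramPoly d x a).det = 0 := by
  rw [RingHom.map_det, ← Matrix.exists_mulVec_eq_zero_iff]
  refine ⟨v, hv, ?_⟩
  ext c
  simp only [Matrix.mulVec, dotProduct, RingHom.mapMatrix_apply, Matrix.map_apply, gramPoly,
    Pi.zero_apply]
  split_ifs with hc
  · rw [← h1 c hc]
    simp only [map_sum, map_mul, map_pow, MvPolynomial.eval_C, MvPolynomial.eval_X,
      Finset.sum_mul, Finset.mul_sum]
    rw [Finset.sum_comm]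
    refine Finset.sum_congr rfl fun l _ => Finset.sum_congr rfl fun b _ => by ring
  · rw [← h2]
    simp only [map_sum, map_mul, map_pow, MvPolynomial.eval_C, MvPolynomial.eval_X,
      Finset.sum_mul, Finset.mul_sum]
    rw [Finset.sum_comm]
    refine Finset.sum_congr rfl fun l _ => Finset.sum_congr rfl fun b _ => by ring

theorem gramPoly_eval_conv {ι : Type*} [Fintype ι] (d x : ι → ℝ) (a : ℕ) (w : ι → ℝ)
    (h : MvPolynomial.eval w (gramPoly d x a).det = 0) :
    ∃ v : Fin (a+1) → ℝ, v ≠ 0 ∧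
    (∀ c < a, ∑ l, d l ^ c * w l * (∑ b, v b * (d l ^ (b : ℕ) * w l)) = 0) ∧
    ∑ l, x l * (∑ b, v b * (d l ^ (b : ℕ) * w l)) = 0 := by
  rw [RingHom.map_det, ← Matrix.exists_mulVec_eq_zero_iff] at h
  obtain ⟨v, hv, h⟩ := h
  refine ⟨v, hv, ?_, ?_⟩
  · intro c hc
    have := congrFun h ⟨c, by omega⟩
    simp only [Matrix.mulVec, dotProduct, RingHom.mapMatrix_apply, Matrix.map_apply, gramPoly,
      Pi.zero_apply, hc, if_true] at this
    rw [← this]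
    simp only [map_sum, map_mul, map_pow, MvPolynomial.eval_C, MvPolynomial.eval_X,
      Finset.sum_mul, Finset.mul_sum]
    rw [Finset.sum_comm]
    refine Finset.sum_congr rfl fun l _ => Finset.sum_congr rfl fun b _ => by ring
  · have := congrFun h ⟨a, by omega⟩
    simp only [Matrix.mulVec, dotProduct, RingHom.mapMatrix_apply, Matrix.map_apply, gramPoly,
      Pi.zero_apply, lt_irrefl, if_false] at this
    rw [← this]
    simp only [map_sum, map_mul, map_pow, MvPolynomial.eval_C, MvPolynomial.eval_X,
      Finset.sum_mul, Finset.mul_sum]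
    rw [Finset.sum_comm]
    refine Finset.sum_congr rfl fun l _ => Finset.sum_congr rfl fun b _ => by ring

open Polynomial in
theorem coeffs_zero {ι : Type*} (d : ι → ℝ) (hd : Function.Injective d) (L : Finset ι)
    (m : ℕ) (hL : L.card = m) (v : Fin m → ℝ)
    (h : ∀ l ∈ L, ∑ b, v b * d l ^ (b : ℕ) = 0) : v = 0 := by
  let p : ℝ[X] := ∑ b : Fin m, C (v b) * X ^ (b : ℕ)
  have hp : p = 0 := by
    classical
    by_contra hne
    have h1 : p.degree < m := by
      refine (Polynomial.degree_sum_fin_lt v)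
    have h2 : (L.map ⟨d, hd⟩).card ≤ p.roots.toFinset.card := by
      apply Finset.card_le_card
      intro y hy
      simp only [Finset.mem_map, Function.Embedding.coeFn_mk] at hy
      obtain ⟨l, hl, rfl⟩ := hy
      simp only [Multiset.mem_toFinset, Polynomial.mem_roots hne, Polynomial.IsRoot]
      simpa [p, Polynomial.eval_finsetSum] using h l hl
    have h3 := (Multiset.toFinset_card_le p.roots).trans (Polynomial.card_roots' p)
    rw [Finset.card_map, hL] at h2
    have := (Polynomial.natDegree_lt_iff_degree_lt hne).2 h1
    omega
  ext b
  have := congrArg (fun q => q.coeff (b : ℕ)) hp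
  simpa [p, Polynomial.finsetSum_coeff, Polynomial.coeff_X_pow, Fin.ext_iff.symm] using this

open Polynomial in
theorem gramPoly_ne {ι : Type*} [Fintype ι] [DecidableEq ι] (d x : ι → ℝ) (hd : Function.Injective d)
    (hx : x ≠ 0) (a : ℕ) (ha : a < Fintype.card ι) : (gramPoly d x a).det ≠ 0 := by
  obtain ⟨k, hk⟩ := Function.ne_iff.1 hx
  obtain ⟨L, hkL, -, hL⟩ := Finset.exists_subsuperset_card_eq (s := {k}) (t := Finset.univ)
    (n := a + 1) (by simp) (by simp) (by simpa using ha)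
  have hkL : k ∈ L := by simpa using hkL
  let π : ι → ℝ := fun l => ∏ m ∈ L.erase l, (d l - d m)
  have hπ : ∀ l, π l ≠ 0 := by
    intro l
    refine Finset.prod_ne_zero_iff.2 fun m hm => ?_
    rw [sub_ne_zero]
    exact fun h => (Finset.ne_of_mem_erase hm) (hd h).symm
  let w : ι → ℝ := fun l => if l ∈ L then (if x l = 0 then 1 else (x l * π l)⁻¹) else 0
  intro h0
  obtain ⟨v, hv, h1, h2⟩ := gramPoly_eval_conv d x a w (by rw [h0, map_zero])
  let p : ℝ[X] := ∑ b : Fin (a+1), C (v b) * X ^ (b : ℕ)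
  have hp : ∀ l, ∑ b, v b * (d l ^ (b : ℕ) * w l) = p.eval (d l) * w l := by
    intro l
    simp only [p, Polynomial.eval_finsetSum, Polynomial.eval_mul, Polynomial.eval_C,
      Polynomial.eval_pow, Polynomial.eval_X, Finset.sum_mul, mul_assoc]
  simp only [hp] at h1 h2
  have hwL : ∀ l ∈ L, w l ≠ 0 := by
    intro l hl
    simp only [w, hl, if_true]
    split_ifs with h
    · exact one_ne_zero
    · exact inv_ne_zero (mul_ne_zero h (hπ l))
  have hw0 : ∀ l ∉ L, w l = 0 := by
    intro l hl
    simp [w, hl]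
  -- functional on polynomials of degree < a
  have h3 : ∀ r : ℝ[X], r.natDegree < a → ∑ l ∈ L, p.eval (d l) * w l ^ 2 * r.eval (d l) = 0 := by
    intro r hr
    have : ∑ l ∈ L, p.eval (d l) * w l ^ 2 * r.eval (d l) = ∑ l, p.eval (d l) * w l ^ 2 * r.eval (d l) := by
      apply Finset.sum_subset (Finset.subset_univ _)
      intro l _ hl
      simp [hw0 l hl]
    rw [this]
    have h4 : ∀ l, p.eval (d l) * w l ^ 2 * r.eval (d l) =
        ∑ c ∈ Finset.range a, r.coeff c * (d l ^ c * w l * (p.eval (d l) * w l)) := by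
      intro l
      rw [Polynomial.eval_eq_sum_range' hr, Finset.mul_sum]
      exact Finset.sum_congr rfl fun c _ => by ring
    simp only [h4]
    rw [Finset.sum_comm]
    apply Finset.sum_eq_zero
    intro c hc
    rw [← Finset.mul_sum, h1 c (Finset.mem_range.1 hc), mul_zero]
  have h5 : ∀ l ∈ L, p.eval (d l) * w l ^ 2 * π l = p.eval (d k) * w k ^ 2 * π k := by
    intro l hl
    by_cases hlk : l = k
    · rw [hlk]
    have hkl : k ∈ L.erase l := Finset.mem_erase.2 ⟨Ne.symm hlk, hkL⟩
    have hlk' : l ∈ L.erase k := Finset.mem_erase.2 ⟨hlk, hl⟩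
    let r : ℝ[X] := ∏ m ∈ (L.erase l).erase k, (X - C (d m))
    have hcard : ((L.erase l).erase k).card + 1 = a := by
      rw [Finset.card_erase_of_mem hkl, Finset.card_erase_of_mem hl, hL]
      have : 0 < (L.erase l).card := Finset.card_pos.2 ⟨k, hkl⟩
      rw [Finset.card_erase_of_mem hl, hL] at this
      omega
    have hr : r.natDegree < a := by
      simp only [r, Polynomial.natDegree_finsetProd_X_sub_C_eq_card]
      omega
    have h6 := h3 r hr
    have hre : ∀ y, r.eval y = ∏ m ∈ (L.erase l).erase k, (y - d m) := by
      intro y; simp [r, Polynomial.eval_prod]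
    rw [← Finset.add_sum_erase L _ hl, ← Finset.add_sum_erase (L.erase l) _ hkl,
      Finset.sum_eq_zero (s := (L.erase l).erase k)] at h6
    · have e1 : π l = (d l - d k) * r.eval (d l) := by
        rw [hre]; exact (Finset.mul_prod_erase _ (fun m => d l - d m) hkl).symm
      have e2 : π k = (d k - d l) * r.eval (d k) := by
        rw [hre, Finset.erase_right_comm]; exact (Finset.mul_prod_erase _ (fun m => d k - d m) hlk').symm
      rw [e1, e2]
      linear_combination (d l - d k) * h6
    · intro m hm
      rw [hre, Finset.prod_eq_zero hm (sub_self _), mul_zero]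
  set κ := p.eval (d k) * w k ^ 2 * π k with hκ
  have h7 : ∑ l ∈ L, κ * x l ^ 2 = 0 := by
    rw [← h2, ← Finset.sum_subset (Finset.subset_univ L) (fun l _ hl => by simp [hw0 l hl])]
    refine Finset.sum_congr rfl fun l hl => ?_
    rw [← h5 l hl]
    by_cases h : x l = 0
    · rw [h]; ring
    · have : w l * (x l * π l) = 1 := by
        simp only [w, hl, h, if_true, if_false]
        exact inv_mul_cancel₀ (mul_ne_zero h (hπ l))
      linear_combination (p.eval (d l) * w l * x l) * this
  rw [← Finset.mul_sum] at h7
  have h8 : 0 < ∑ l ∈ L, x l ^ 2 :=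
    Finset.sum_pos' (fun l _ => sq_nonneg _) ⟨k, hkL, by have : x k ≠ 0 := hk; positivity⟩
  have h9 : κ = 0 := (mul_eq_zero.1 h7).resolve_right h8.ne'
  apply hv
  apply coeffs_zero d hd L (a+1) hL
  intro l hl
  have h10 := h5 l hl
  rw [h9, mul_eq_zero, mul_eq_zero] at h10
  have h11 := (h10.resolve_right (hπ l)).resolve_right (pow_ne_zero 2 (hwL l hl))
  rw [← h11]
  simp [p, Polynomial.eval_finsetSum]

open Polynomial in
theorem orthopoly {ι : Type*} [Fintype ι] [DecidableEq ι] (n : ℕ) (hn : Fintype.card ι = n)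
    (d w : ι → ℝ) (hd : Function.Injective d) (hw : ∀ l, w l ≠ 0) :
    ∃ P : Fin n → ℝ[X], (∀ a, (P a).natDegree ≤ a) ∧
      (∀ a b, ∑ l, (P a).eval (d l) * w l * ((P b).eval (d l) * w l) = if a = b then 1 else 0) ∧
      ∀ (a : Fin n) (r : ℝ[X]), r.natDegree < a → ∑ l, (P a).eval (d l) * w l * (r.eval (d l) * w l) = 0 := by
  let k : Fin n → EuclideanSpace ℝ ι := fun a => WithLp.toLp 2 (fun l => d l ^ (a : ℕ) * w l)
  have hk : LinearIndependent ℝ k := by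
    rw [Fintype.linearIndependent_iff]
    intro g hg
    refine congrFun (coeffs_zero d hd Finset.univ n (by simpa using hn) g ?_)
    intro l _
    have := congrArg (fun z : EuclideanSpace ℝ ι => z l) hg
    simp only [k, WithLp.ofLp_sum, WithLp.ofLp_smul, Finset.sum_apply, Pi.smul_apply, smul_eq_mul,
      ← mul_assoc, ← Finset.sum_mul, WithLp.ofLp_zero, Pi.zero_apply] at this
    exact (mul_eq_zero.1 this).resolve_right (hw l)
  let q := InnerProductSpace.gramSchmidtNormed ℝ k
  have hq : Orthonormal ℝ q := InnerProductSpace.gramSchmidtNormed_orthonormal hk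
  have hP : ∀ a : Fin n, ∃ P : ℝ[X], P.natDegree ≤ a ∧ ∀ l, q a l = P.eval (d l) * w l := by
    intro a
    have hmem : q a ∈ Submodule.span ℝ (Set.image k (Set.Iic a)) :=
      Submodule.smul_mem _ _ (InnerProductSpace.gramSchmidt_mem_span ℝ k le_rfl)
    generalize q a = z at hmem
    induction hmem using Submodule.span_induction with
    | mem x hx =>
      obtain ⟨b, hb, rfl⟩ := hx
      exact ⟨X ^ (b : ℕ), by simpa using hb, fun l => by simp [k]⟩
    | zero => exact ⟨0, by simp, by simp⟩
    | add x y _ _ hx hy =>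
      obtain ⟨P, hP, hP'⟩ := hx
      obtain ⟨P2, hP2, hP2'⟩ := hy
      exact ⟨P + P2, (Polynomial.natDegree_add_le _ _).trans (max_le hP hP2),
        fun l => by simp [hP', hP2', add_mul]⟩
    | smul c x _ hx =>
      obtain ⟨P, hP, hP'⟩ := hx
      exact ⟨C c * P, (Polynomial.natDegree_C_mul_le _ _).trans hP, fun l => by simp [hP', mul_assoc]⟩
  choose P hP1 hP2 using hP
  refine ⟨P, hP1, ?_, ?_⟩
  · intro a b
    have := (orthonormal_iff_ite.1 hq) b a
    rw [PiLp.inner_apply] at this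
    simp only [hP2, RCLike.inner_apply, conj_trivial] at this
    rw [this]
    simp [eq_comm]
  · intro a r hr
    have h1 : ∀ c < (a : ℕ), ∑ l, (P a).eval (d l) * w l * (d l ^ c * w l) = 0 := by
      intro c hc
      have := InnerProductSpace.gramSchmidt_inv_triangular ℝ k (i := ⟨c, by omega⟩) (j := a) hc
      have h2 : inner ℝ (q a) (k ⟨c, by omega⟩) = 0 := by
        simp only [q, InnerProductSpace.gramSchmidtNormed, inner_smul_left, this, mul_zero]
      rw [PiLp.inner_apply] at h2
      simp only [hP2, RCLike.inner_apply, conj_trivial, k] at h2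
      rw [← h2]
      exact Finset.sum_congr rfl fun l _ => mul_comm _ _
    have h4 : ∀ l, (P a).eval (d l) * w l * (r.eval (d l) * w l) =
        ∑ c ∈ Finset.range a, r.coeff c * ((P a).eval (d l) * w l * (d l ^ c * w l)) := by
      intro l
      rw [Polynomial.eval_eq_sum_range' hr, Finset.sum_mul, Finset.mul_sum]
      exact Finset.sum_congr rfl fun c _ => by ring
    simp only [h4]
    rw [Finset.sum_comm]
    apply Finset.sum_eq_zero
    intro c hc
    rw [← Finset.mul_sum, h1 c (Finset.mem_range.1 hc), mul_zero]

open Polynomial in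
theorem lanczos {ι κ : Type*} [Fintype ι] [DecidableEq ι] [Fintype κ] (n : ℕ) (hn : Fintype.card ι = n)
    (d : ι → ℝ) (hd : Function.Injective d) (x : κ → ι → ℝ) (hx : ∀ j, x j ≠ 0) :
    ∃ Q : Matrix (Fin n) ι ℝ, Q * Qᵀ = 1 ∧ Qᵀ * Q = 1 ∧
      (∀ a b, a ≠ b → ((Q * Matrix.diagonal d * Qᵀ) a b ≠ 0 ↔ (SimpleGraph.pathGraph n).Adj a b)) ∧
      ∀ a j, (Q *ᵥ x j) a ≠ 0 := by
  obtain ⟨w, hw⟩ : ∃ w : ι → ℝ, MvPolynomial.eval w ((∏ l, MvPolynomial.X l) *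
      ∏ a : Fin n, ∏ j, (gramPoly d (x j) a).det) ≠ 0 := by
    by_contra hcon
    push Not at hcon
    have h0 : ((∏ l, MvPolynomial.X l) * ∏ a : Fin n, ∏ j, (gramPoly d (x j) a).det :
      MvPolynomial ι ℝ) = 0 := MvPolynomial.funext (fun w => by rw [hcon w, map_zero])
    revert h0
    refine mul_ne_zero (Finset.prod_ne_zero_iff.2 fun l _ => MvPolynomial.X_ne_zero l)
      (Finset.prod_ne_zero_iff.2 fun a _ => Finset.prod_ne_zero_iff.2 fun j _ => ?_)
    exact gramPoly_ne d (x j) hd (hx j) a (by omega)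
  simp only [map_mul, map_prod, MvPolynomial.eval_X] at hw
  have hw1 := Finset.prod_ne_zero_iff.1 (left_ne_zero_of_mul hw)
  have hw2 := Finset.prod_ne_zero_iff.1 (right_ne_zero_of_mul hw)
  obtain ⟨P, hP1, hP2, hP3⟩ := orthopoly n hn d w hd (fun l => hw1 l (Finset.mem_univ l))
  have hlead : ∀ a : Fin n, (P a).natDegree = a := by
    intro a
    by_contra hne
    have h1 := hP3 a (P a) (lt_of_le_of_ne (hP1 a) hne)
    rw [hP2 a a] at h1
    simp at h1
  have hne : ∀ a : Fin n, P a ≠ 0 := by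
    intro a h0
    have := hP2 a a
    simp [h0] at this
  let Q : Matrix (Fin n) ι ℝ := Matrix.of fun a l => (P a).eval (d l) * w l
  have hQ : Q * Qᵀ = 1 := by
    ext a b
    simp only [Matrix.mul_apply, Matrix.transpose_apply, Q, Matrix.of_apply, Matrix.one_apply]
    exact hP2 a b
  have hT : ∀ a b, (Q * Matrix.diagonal d * Qᵀ) a b =
      ∑ l, (P a).eval (d l) * w l * ((X * P b).eval (d l) * w l) := by
    intro a b
    rw [Matrix.mul_apply]
    simp only [Matrix.mul_diagonal, Matrix.transpose_apply, Q, Matrix.of_apply]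
    exact Finset.sum_congr rfl fun l _ => by simp; ring
  have hsymm : ∀ a b, (Q * Matrix.diagonal d * Qᵀ) a b = (Q * Matrix.diagonal d * Qᵀ) b a := by
    intro a b
    rw [hT, hT]
    exact Finset.sum_congr rfl fun l _ => by simp; ring
  have hdeg : ∀ b : Fin n, (X * P b).natDegree = (b : ℕ) + 1 := by
    intro b
    rw [Polynomial.natDegree_X_mul (hne b), hlead]
  have hlow : ∀ a b : Fin n, b < a →
      ((Q * Matrix.diagonal d * Qᵀ) a b ≠ 0 ↔ (SimpleGraph.pathGraph n).Adj a b) := by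
    intro a b hab
    have hab : (b : ℕ) < a := hab
    rw [SimpleGraph.pathGraph_adj]
    by_cases h1 : (b : ℕ) + 1 = a
    · refine iff_of_true ?_ (Or.inr h1)
      rw [hT]
      set c := (X * P b).leadingCoeff / (P a).leadingCoeff with hc
      have hXne : X * P b ≠ 0 := mul_ne_zero Polynomial.X_ne_zero (hne b)
      have hc0 : c ≠ 0 := div_ne_zero (Polynomial.leadingCoeff_ne_zero.2 hXne)
        (Polynomial.leadingCoeff_ne_zero.2 (hne a))
      have h2 : (X * P b - C c * P a).degree < (X * P b).degree := by
        apply Polynomial.degree_sub_lt_left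
        · rw [Polynomial.degree_C_mul hc0, Polynomial.degree_eq_natDegree hXne,
            Polynomial.degree_eq_natDegree (hne a), hdeg, hlead, h1]
        · exact hXne
        · rw [Polynomial.leadingCoeff_mul (C c), Polynomial.leadingCoeff_C, hc,
            div_mul_cancel₀ _ (Polynomial.leadingCoeff_ne_zero.2 (hne a))]
      have h3 : (X * P b - C c * P a).natDegree < (a : ℕ) := by
        rw [Polynomial.degree_eq_natDegree hXne, hdeg, h1] at h2
        by_cases h4 : X * P b - C c * P a = 0
        · rw [h4]; simp; omega
        · exact (Polynomial.natDegree_lt_iff_degree_lt h4).2 h2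
      have h5 := hP3 a _ h3
      have h6 := hP2 a a
      rw [if_pos rfl] at h6
      have h7 : ∑ l, (P a).eval (d l) * w l * ((X * P b).eval (d l) * w l) = c := by
        have : ∑ l, (P a).eval (d l) * w l * ((X * P b).eval (d l) * w l) =
          ∑ l, (P a).eval (d l) * w l * ((X * P b - C c * P a).eval (d l) * w l) +
          c * ∑ l, (P a).eval (d l) * w l * ((P a).eval (d l) * w l) := by
          rw [Finset.mul_sum, ← Finset.sum_add_distrib]
          exact Finset.sum_congr rfl fun l _ => by simp; ring
        rw [this, h5, h6]; ring
      rw [h7]; exact hc0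
    · refine iff_of_false ?_ (by omega)
      rw [hT, not_not]
      apply hP3
      rw [hdeg]; omega
  refine ⟨Q, hQ, ?_, ?_, ?_⟩
  · exact (Matrix.mul_eq_one_comm_of_card_eq _ _ _ (by simp [hn])).1 hQ
  · intro a b hab
    rcases lt_or_gt_of_ne hab with h | h
    · rw [hsymm, SimpleGraph.adj_comm]; exact hlow b a h
    · exact hlow a b h
  · intro a j h0
    refine Finset.prod_ne_zero_iff.1 (hw2 a (Finset.mem_univ a)) j (Finset.mem_univ j) ?_
    have hv : ∀ l, ∑ b : Fin ((a:ℕ)+1), (P a).coeff b * (d l ^ (b : ℕ) * w l) = (P a).eval (d l) * w l := by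
      intro l
      rw [Fin.sum_univ_eq_sum_range (fun b => (P a).coeff b * (d l ^ b * w l)),
        Polynomial.eval_eq_sum_range' (Nat.lt_succ_of_le (hP1 a)), Finset.sum_mul]
      exact Finset.sum_congr rfl fun b _ => by ring
    apply gramPoly_eval d (x j) a w (fun b => (P a).coeff b)
    · intro h1
      have h2 := congrFun h1 (Fin.last a)
      simp only [Fin.val_last, Pi.zero_apply] at h2
      rw [← hlead a] at h2
      exact Polynomial.leadingCoeff_ne_zero.2 (hne a) h2
    · intro c hc
      simp only [hv]
      rw [← hP3 a (X ^ c) (by simpa using hc)]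
      exact Finset.sum_congr rfl fun l _ => by simp; ring
    · simp only [hv]
      rw [← h0]
      simp only [Matrix.mulVec, dotProduct, Q, Matrix.of_apply]
      exact Finset.sum_congr rfl fun l _ => by ring

theorem pair_li {ι E : Type*} [AddCommGroup E] [Module ℝ E] {f : ι → E}
    (hf : LinearIndependent ℝ f) {a b : ι} (hne : a ≠ b) : LinearIndependent ℝ ![f a, f b] := by
  have h1 : Function.Injective ![a, b] := by
    intro i j hij
    fin_cases i <;> fin_cases j
    · rfl
    · exact (hne hij).elim
    · exact (hne hij.symm).elim
    · rfl
  have h2 := hf.comp ![a, b] h1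
  convert h2 using 1
  ext i : 1
  fin_cases i <;> rfl

/-- Every graph has a matrix in `S(H)` with distinct eigenvalues. -/
theorem exists_simple (h : ℕ) (H : SimpleGraph (Fin h)) :
    ∃ C : Matrix (Fin h) (Fin h) ℝ, inS H C ∧ ∃ hC : C.IsHermitian, Function.Injective hC.eigenvalues := by
  classical
  let ε : ℝ := 1 / (2 * (h + 1))
  have hε : 0 < ε := by positivity
  let C : Matrix (Fin h) (Fin h) ℝ := Matrix.of fun i j => if i = j then (i : ℝ) else if H.Adj i j then ε else 0
  have hS : inS H C := by
    constructor
    · ext i j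
      simp only [C, Matrix.transpose_apply, Matrix.of_apply, H.adj_comm, eq_comm]
      split_ifs with h1 <;> simp_all
    · intro i j hij
      simp only [C, Matrix.of_apply, hij, if_false]
      split_ifs with h1 <;> simp [h1, hε.ne']
  refine ⟨C, hS, herm_of_symm hS.1, ?_⟩
  set hC := herm_of_symm hS.1
  -- an eigenvector vanishing at a suitable coordinate is zero
  have key : ∀ μ : ℝ, ∃ k : Fin h → Prop, (∀ i j, k i → k j → i = j) ∧
      ∀ v : Fin h → ℝ, C *ᵥ v = μ • v → (∀ i, k i → v i = 0) → v = 0 := by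
    intro μ
    refine ⟨fun i => |(i : ℝ) - μ| < 1 / 2, ?_, ?_⟩
    · intro i j hi hj
      rw [abs_lt] at hi hj
      have h1 : (i : ℝ) < j + 1 := by linarith
      have h2 : (j : ℝ) < i + 1 := by linarith
      have h1' : (i : ℕ) < j + 1 := by exact_mod_cast h1
      have h2' : (j : ℕ) < i + 1 := by exact_mod_cast h2
      exact Fin.ext (by omega)
    · intro v hv hk
      by_contra hne
      obtain ⟨i0, hi0⟩ := Function.ne_iff.1 hne
      obtain ⟨i, -, hi⟩ := Finset.exists_max_image Finset.univ (fun i => |v i|) ⟨i0, Finset.mem_univ _⟩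
      have hpos : 0 < |v i| := lt_of_lt_of_le (abs_pos.2 hi0) (hi i0 (Finset.mem_univ _))
      have hfar : 1 / 2 ≤ |(i : ℝ) - μ| := by
        by_contra hlt
        have := hk i (not_le.1 hlt)
        simp [this] at hpos
      have hrow := congrFun hv i
      simp only [Matrix.mulVec, dotProduct, Pi.smul_apply, smul_eq_mul] at hrow
      rw [← Finset.add_sum_erase _ _ (Finset.mem_univ i)] at hrow
      have hcii : C i i = (i : ℝ) := by simp [C]
      rw [hcii] at hrow
      have h1 : ((i : ℝ) - μ) * v i = - ∑ j ∈ Finset.univ.erase i, C i j * v j := by linarith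
      have h2 : |∑ j ∈ Finset.univ.erase i, C i j * v j| ≤ h * (ε * |v i|) := by
        refine (Finset.abs_sum_le_sum_abs _ _).trans ?_
        have h3 : ∀ j ∈ Finset.univ.erase i, |C i j * v j| ≤ ε * |v i| := by
          intro j hj
          rw [abs_mul]
          refine mul_le_mul ?_ (hi j (Finset.mem_univ _)) (abs_nonneg _) hε.le
          have : i ≠ j := (Finset.ne_of_mem_erase hj).symm
          simp only [C, Matrix.of_apply, this, if_false]
          split_ifs
          · rw [abs_of_pos hε]
          · simpa using hε.le
        refine (Finset.sum_le_card_nsmul _ _ _ h3).trans ?_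
        rw [nsmul_eq_mul]
        refine mul_le_mul_of_nonneg_right ?_ (by positivity)
        have : (Finset.univ.erase i).card ≤ h := (Finset.card_le_univ _).trans (by simp)
        exact_mod_cast this
      have h4 : |(i : ℝ) - μ| * |v i| ≤ h * (ε * |v i|) := by
        rw [← abs_mul, h1, abs_neg]; exact h2
      have h5 : h * ε < 1 / 2 := by
        simp only [ε]
        rw [mul_one_div, div_lt_div_iff₀ (by positivity) (by positivity)]
        linarith
      nlinarith
  intro a b hab
  by_contra hne
  obtain ⟨k, hk1, hk2⟩ := key (hC.eigenvalues a)
  let u := (hC.eigenvectorBasis a).ofLp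
  let v := (hC.eigenvectorBasis b).ofLp
  have hu : C *ᵥ u = hC.eigenvalues a • u := hC.mulVec_eigenvectorBasis a
  have hv : C *ᵥ v = hC.eigenvalues a • v := by rw [hab]; exact hC.mulVec_eigenvectorBasis b
  have hli := hC.eigenvectorBasis.toBasis.linearIndependent
  have hpair := pair_li hli hne
  have hind : ∀ s t : ℝ, s • u + t • v = 0 → s = 0 ∧ t = 0 := by
    intro s t hst
    have := LinearIndependent.pair_iff.1 hpair s t
    apply this
    simp only [OrthonormalBasis.coe_toBasis]
    ext i
    exact congrFun hst i
  have hcomb : ∀ s t : ℝ, (∀ i, k i → s * u i + t * v i = 0) → s = 0 ∧ t = 0 := by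
    intro s t hst
    apply hind
    apply hk2
    · rw [Matrix.mulVec_add, Matrix.mulVec_smul, Matrix.mulVec_smul, hu, hv, smul_add,
        smul_comm s, smul_comm t]
    · intro i hi
      simpa using hst i hi
  by_cases hex : ∃ i, k i
  · obtain ⟨i, hi⟩ := hex
    have h1 := hcomb (v i) (-u i) (fun j hj => by rw [hk1 j i hj hi]; ring)
    have h2 := hcomb 1 0 (fun j hj => by rw [hk1 j i hj hi]; have := h1.2; simp at this; simp [this])
    exact one_ne_zero h2.1
  · have h2 := hcomb 1 0 (fun j hj => (hex ⟨j, hj⟩).elim)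
    exact one_ne_zero h2.1

theorem backward (h m : ℕ) (hm : m ≤ 2) (hh : 1 ≤ h) (H : SimpleGraph (Fin h)) :
    qGraph (graphJoin (SimpleGraph.pathGraph (h + m)) H) = 2 := by
  classical
  obtain ⟨C, hCS, hC, hinj⟩ := exists_simple h H
  set e := hC.eigenvalues with he
  let V : Matrix (Fin h) (Fin h) ℝ := (hC.eigenvectorUnitary : Matrix (Fin h) (Fin h) ℝ)
  have hV1 : V * Vᵀ = 1 := by
    have := Unitary.mul_star_self_of_mem hC.eigenvectorUnitary.2
    rwa [Matrix.star_eq_conjTranspose, Matrix.conjTranspose_eq_transpose_of_trivial] at this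
  have hV2 : Vᵀ * V = 1 := mul_eq_one_comm.1 hV1
  have hCV : C = V * diagonal e * Vᵀ := by
    have := hC.spectral_theorem
    rw [Unitary.conjStarAlgAut_apply, Matrix.star_eq_conjTranspose, Matrix.conjTranspose_eq_transpose_of_trivial] at this
    exact this
  obtain ⟨R, hR0, hR⟩ : ∃ R : ℝ, 0 < R ∧ ∀ i, |e i| < R := by
    refine ⟨∑ i, |e i| + 1, by positivity, fun i => ?_⟩
    have := Finset.single_le_sum (f := fun i => |e i|) (fun i _ => abs_nonneg _) (Finset.mem_univ i)
    linarith
  have hpos : ∀ i, 0 < R * R - e i * e i := by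
    intro i
    have := abs_mul_abs_self (e i)
    nlinarith [hR i, abs_nonneg (e i)]
  let s : Fin h → ℝ := fun i => Real.sqrt (R * R - e i * e i)
  have hs : ∀ i, s i * s i = R * R - e i * e i := fun i => Real.mul_self_sqrt (hpos i).le
  have hs0 : ∀ i, s i ≠ 0 := fun i => (Real.sqrt_pos.2 (hpos i)).ne'
  let g : Fin m → ℝ := fun i => if (i : ℕ) = 0 then R else -R
  have hg : ∀ i, g i * g i = R * R := by
    intro i; simp only [g]; split_ifs <;> ring
  let d : Fin h ⊕ Fin m → ℝ := Sum.elim (fun i => - e i) g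
  have hd : Function.Injective d := by
    have hne : ∀ i j, - e i ≠ g j := by
      intro i j hij
      have h1 := hpos i
      have h2 := hg j
      rw [← hij] at h2
      linarith
    rintro (i | i) (j | j) hij
    · simp only [d, Sum.elim_inl, neg_inj] at hij
      rw [hinj hij]
    · exact (hne _ _ hij).elim
    · exact (hne _ _ hij.symm).elim
    · simp only [d, Sum.elim_inr, g] at hij
      congr 1
      ext
      split_ifs at hij with h1 h2 h2 <;> first | omega | linarith
  let X : Matrix (Fin h ⊕ Fin m) (Fin h) ℝ := Matrix.fromRows (diagonal s * Vᵀ) 0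
  have hX : ∀ j, X.col j ≠ 0 := by
    intro j h0
    have h1 : ∀ i, V j i = 0 := by
      intro i
      have := congrFun h0 (Sum.inl i)
      simp only [X, Matrix.col_apply, Matrix.fromRows_apply_inl, Matrix.diagonal_mul,
        Matrix.transpose_apply, Pi.zero_apply] at this
      exact (mul_eq_zero.1 this).resolve_left (hs0 i)
    have h2 := congrFun (congrFun hV1 j) j
    simp [Matrix.mul_apply, h1] at h2
  obtain ⟨Q, hQ1, hQ2, hQ3, hQ4⟩ := lanczos (ι := Fin h ⊕ Fin m) (h + m) (by simp) d hd (fun j => X.col j) hX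
  have hD : diagonal d = Matrix.fromBlocks (diagonal fun i => - e i) 0 0 (diagonal g) := by
    rw [Matrix.fromBlocks_diagonal]
  have hss : diagonal s * diagonal s + diagonal e * diagonal e = (R * R) • (1 : Matrix (Fin h) (Fin h) ℝ) := by
    rw [Matrix.diagonal_mul_diagonal, Matrix.diagonal_mul_diagonal, Matrix.diagonal_add, Matrix.smul_one_eq_diagonal]
    congr 1; ext i; simp only [hs]; ring
  have E1 : diagonal d * diagonal d + X * Xᵀ = (R * R) • 1 := by
    have hx : X * Xᵀ = Matrix.fromBlocks (diagonal s * diagonal s) 0 0 0 := by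
      simp only [X, Matrix.transpose_fromRows, Matrix.fromRows_mul_fromCols, Matrix.transpose_zero,
        Matrix.mul_zero, Matrix.zero_mul, Matrix.transpose_mul, Matrix.transpose_transpose,
        Matrix.diagonal_transpose]
      rw [Matrix.mul_assoc, ← Matrix.mul_assoc Vᵀ, hV2, Matrix.one_mul]
    rw [hx, Matrix.diagonal_mul_diagonal, Matrix.diagonal_mul_diagonal]
    ext (i | i) (j | j)
    · by_cases hij : i = j
      · subst hij; simp [d, hs]
      · simp [hij]
    · simp
    · simp
    · by_cases hij : i = j
      · subst hij; simp [d, hg]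
      · simp [hij]
  have E2 : diagonal d * X + X * C = 0 := by
    have h1 : diagonal s * Vᵀ * C = diagonal s * diagonal e * Vᵀ := by
      rw [hCV]
      calc _ = diagonal s * (Vᵀ * V) * diagonal e * Vᵀ := by simp only [Matrix.mul_assoc]
        _ = _ := by rw [hV2, Matrix.mul_one]
    simp only [X, Matrix.fromRows_mul, h1, Matrix.zero_mul]
    ext (i | i) j
    · simp only [Matrix.add_apply, Matrix.diagonal_mul, Matrix.fromRows_apply_inl, d, Sum.elim_inl,
        Matrix.diagonal_mul_diagonal, Matrix.zero_apply]
      ring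
    · simp
  have E3 : Xᵀ * X + C * C = (R * R) • 1 := by
    have h1 : Xᵀ * X = V * (diagonal s * diagonal s) * Vᵀ := by
      simp only [X, Matrix.transpose_fromRows, Matrix.fromCols_mul_fromRows, Matrix.transpose_zero,
        Matrix.zero_mul, add_zero, Matrix.transpose_mul, Matrix.transpose_transpose,
        Matrix.diagonal_transpose, Matrix.mul_assoc]
    have h2 : C * C = V * (diagonal e * diagonal e) * Vᵀ := by
      rw [hCV]
      calc _ = V * diagonal e * (Vᵀ * V) * diagonal e * Vᵀ := by simp only [Matrix.mul_assoc]
        _ = _ := by rw [hV2, Matrix.mul_one]; simp only [Matrix.mul_assoc]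
    rw [h1, h2, ← Matrix.add_mul, ← Matrix.mul_add, hss, Matrix.mul_smul, Matrix.smul_mul, Matrix.mul_one, hV1]
  have hCt : Cᵀ = C := hCS.1
  have E4 : Xᵀ * diagonal d + C * Xᵀ = 0 := by
    have := congrArg Matrix.transpose E2
    simpa only [Matrix.transpose_add, Matrix.transpose_mul, Matrix.diagonal_transpose, hCt, Matrix.transpose_zero] using this
  let A : Matrix (Fin (h+m) ⊕ Fin h) (Fin (h+m) ⊕ Fin h) ℝ :=
    Matrix.fromBlocks (Q * diagonal d * Qᵀ) (Q * X) (Xᵀ * Qᵀ) C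
  have hAA : A * A = (R * R) • 1 := by
    simp only [A, Matrix.fromBlocks_multiply]
    rw [← Matrix.fromBlocks_one, Matrix.fromBlocks_smul, smul_zero, smul_zero]
    congr 1
    · calc _ = Q * (diagonal d * (Qᵀ * Q) * diagonal d + X * Xᵀ) * Qᵀ := by
            simp only [Matrix.mul_add, Matrix.add_mul, Matrix.mul_assoc]
        _ = _ := by rw [hQ2, Matrix.mul_one, E1, Matrix.mul_smul, Matrix.smul_mul, Matrix.mul_one, hQ1]
    · calc _ = Q * (diagonal d * (Qᵀ * Q) * X + X * C) := by
            simp only [Matrix.mul_add, Matrix.mul_assoc]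
        _ = _ := by rw [hQ2, Matrix.mul_one, E2, Matrix.mul_zero]
    · calc _ = (Xᵀ * (Qᵀ * Q) * diagonal d + C * Xᵀ) * Qᵀ := by
            simp only [Matrix.add_mul, Matrix.mul_assoc]
        _ = _ := by rw [hQ2, Matrix.mul_one, E4, Matrix.zero_mul]
    · calc _ = Xᵀ * (Qᵀ * Q) * X + C * C := by
            simp only [Matrix.mul_assoc]
        _ = _ := by rw [hQ2, Matrix.mul_one, E3]
  have hAs : A.IsSymm := by
    unfold Matrix.IsSymm
    simp only [A, Matrix.fromBlocks_transpose, Matrix.transpose_mul, Matrix.transpose_transpose,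
      Matrix.diagonal_transpose, hCt, Matrix.mul_assoc]
  have hB : ∀ a j, (Q * X) a j ≠ 0 := fun a j => hQ4 a j
  have hAS : inS (graphJoin (SimpleGraph.pathGraph (h + m)) H) A := by
    refine ⟨hAs, ?_⟩
    rintro (i | i) (j | j) hij
    · rw [join_ll]
      exact hQ3 i j (fun h => hij (by rw [h]))
    · exact iff_of_true (hB i j) (join_lr _ _ _ _)
    · refine iff_of_true ?_ (join_lr _ _ _ _).symm
      rw [← hAs.apply]
      exact hB j i
    · rw [join_rr]
      exact hCS.2 i j (fun h => hij (by rw [h]))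
  have hadj := join_lr (SimpleGraph.pathGraph (h + m)) H ⟨0, by omega⟩ ⟨0, by omega⟩
  have h2 : qMat A = 2 := le_antisymm (qMat_le A R hAA) (qMat_ge _ A hAS _ _ hadj)
  unfold qGraph
  apply le_antisymm
  · exact Nat.sInf_le ⟨A, hAS, h2⟩
  · refine le_csInf (Set.nonempty_of_mem (x := 2) ⟨A, hAS, h2⟩) ?_
    rintro q ⟨A', hA', rfl⟩
    exact qMat_ge _ A' hA' _ _ hadj

/-- Example 3.5: for a connected graph `H` with `|H| ≤ n`,
`q(P_n ∨ H) = 2` iff `|H| ≥ n − 2`. -/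
theorem statement10 (n h : ℕ) (hn : 1 ≤ n)
    (H : SimpleGraph (Fin h)) (hH : H.Connected) (hhn : h ≤ n) :
    qGraph (graphJoin (SimpleGraph.pathGraph n) H) = 2 ↔ n ≤ h + 2 := by
  refine ⟨forward n h H, fun hle => ?_⟩
  obtain ⟨m, rfl⟩ := Nat.exists_eq_add_of_le hhn
  have hh : 1 ≤ h := by
    obtain ⟨i⟩ := hH.nonempty
    exact Nat.one_le_iff_ne_zero.2 (by rintro rfl; exact i.elim0)
  exact backward h m (by omega) hh H
end

section
/- Let G and H be connected simple graphs. Then q(G ∨ H) ≤ max{ 2, | |G| − |H| | }. -/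
open Matrix Filter

theorem perturb_inj {V : Type} [Fintype V] [DecidableEq V] (d : V → ℝ)
    (hd : Function.Injective d) (U₀ : Matrix V V ℝ) (hU : U₀ᵀ * U₀ = 1)
    (hdet : (Matrix.of fun i j => U₀ i j ^ 2).det ≠ 0) (Y : Matrix V V ℝ) (b : V → ℝ)
    (h1 : Y * diagonal d - (U₀ * diagonal d * U₀ᵀ * Y + diagonal b * U₀) = 0)
    (h2 : diag (U₀ᵀ * Y + Yᵀ * U₀) = 0) : Y = 0 ∧ b = 0 := by
  have hU' : U₀ * U₀ᵀ = 1 := mul_eq_one_comm.mp hU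
  set Z := U₀ᵀ * Y with hZ
  have h3 : Z * diagonal d - diagonal d * Z = U₀ᵀ * diagonal b * U₀ := by
    have := congrArg (fun M => U₀ᵀ * M) (sub_eq_zero.mp h1)
    simp only [mul_add, ← mul_assoc] at this
    rw [hU, one_mul, mul_assoc (diagonal d)] at this
    rw [hZ, this]; abel
  have hb : b = 0 := by
    apply eq_zero_of_vecMul_eq_zero hdet
    ext j
    have := congrFun (congrFun h3 j) j
    rw [Matrix.sub_apply, mul_diagonal, diagonal_mul, mul_assoc, mul_apply] at this
    simp only [diagonal_mul, transpose_apply] at this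
    simp only [vecMul, dotProduct, of_apply, Pi.zero_apply]
    rw [mul_comm, sub_self] at this
    rw [this]
    exact Finset.sum_congr rfl fun i _ => by ring
  refine ⟨?_, hb⟩
  have hZ0 : Z = 0 := by
    ext i j
    by_cases hij : i = j
    · subst hij
      have := congrFun h2 i
      have e : Yᵀ * U₀ = Zᵀ := by rw [hZ, transpose_mul, transpose_transpose]
      rw [e] at this
      simp at this
      simpa using this
    · have := congrFun (congrFun h3 i) j
      rw [hb, Matrix.sub_apply, mul_diagonal, diagonal_mul] at this
      simp at this
      have h0 : (d i - d j) * Z i j = 0 := by linarith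
      rcases mul_eq_zero.mp h0 with h | h
      · exact absurd (hd (sub_eq_zero.mp h)) hij
      · exact h
  calc Y = U₀ * Z := by rw [hZ, ← mul_assoc, hU', one_mul]
    _ = 0 := by rw [hZ0, mul_zero]

open scoped Matrix.Norms.Operator Topology in
theorem perturb {V : Type} [Fintype V] [DecidableEq V] (d : V → ℝ) (hd : Function.Injective d)
    (U₀ : Matrix V V ℝ) (hU : U₀ᵀ * U₀ = 1)
    (hdet : (Matrix.of fun i j => U₀ i j ^ 2).det ≠ 0)
    (R : Matrix V V ℝ) (hR : R.IsSymm) (N : Set (Matrix V V ℝ)) (hN : N ∈ 𝓝 U₀) :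
    ∀ᶠ t in 𝓝 (0 : ℝ), ∃ (U : Matrix V V ℝ) (a : V → ℝ), Uᵀ * U = 1 ∧
      U * diagonal d * Uᵀ = U₀ * diagonal d * U₀ᵀ + t • R + diagonal a ∧ U ∈ N := by
  set A₀ : Matrix V V ℝ := U₀ * diagonal d * U₀ᵀ with hA₀
  have hU' : U₀ * U₀ᵀ = 1 := mul_eq_one_comm.mp hU
  let E := Matrix V V ℝ × (V → ℝ) × Matrix V V ℝ
  let dg : (V → ℝ) →L[ℝ] Matrix V V ℝ :=
    LinearMap.toContinuousLinearMap (Matrix.diagonalLinearMap V ℝ ℝ)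
  let dga : Matrix V V ℝ →L[ℝ] (V → ℝ) :=
    LinearMap.toContinuousLinearMap (Matrix.diagLinearMap V ℝ ℝ)
  let tr : Matrix V V ℝ →L[ℝ] Matrix V V ℝ :=
    LinearMap.toContinuousLinearMap (Matrix.transposeLinearEquiv V V ℝ ℝ).toLinearMap
  have hdg : ∀ a, dg a = diagonal a := fun a => rfl
  have hdga : ∀ a, dga a = diag a := fun a => rfl
  have htr : ∀ a, tr a = aᵀ := fun a => rfl
  let F : E → E := fun z =>
    (z.1 * diagonal d - (z.2.2 + dg z.2.1) * z.1, dga (tr z.1 * z.1), z.2.2)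
  let z₀ : E := (U₀, 0, A₀)
  have h1 : HasStrictFDerivAt (fun z : E => z.1) (ContinuousLinearMap.fst ℝ _ _) z₀ :=
    hasStrictFDerivAt_fst
  have h2 : HasStrictFDerivAt (fun z : E => z.2) (ContinuousLinearMap.snd ℝ _ _) z₀ :=
    hasStrictFDerivAt_snd
  have h21 := (ContinuousLinearMap.fst ℝ (V → ℝ) (Matrix V V ℝ)).hasStrictFDerivAt.comp z₀ h2
  have h22 := (ContinuousLinearMap.snd ℝ (V → ℝ) (Matrix V V ℝ)).hasStrictFDerivAt.comp z₀ h2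
  have hF := ((h1.mul_const' (diagonal d)).sub
      ((h22.add (dg.hasStrictFDerivAt.comp z₀ h21)).mul' h1)).prodMk
      ((dga.hasStrictFDerivAt.comp z₀ ((tr.hasStrictFDerivAt.comp z₀ h1).mul' h1)).prodMk h22)
  have hF' : HasStrictFDerivAt F _ z₀ := hF
  have hinj := fun (L : E →L[ℝ] E) (hL : HasStrictFDerivAt F L z₀)
    (hi : ∀ z, L z = 0 → z = 0) => hL.map_nhds_eq_of_surj (by
      have : Function.Injective (L : E →ₗ[ℝ] E) := by
        rw [← LinearMap.ker_eq_bot, LinearMap.ker_eq_bot']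
        exact hi
      have := LinearMap.injective_iff_surjective.mp this
      exact LinearMap.range_eq_top.mpr this)
  have hmap := hinj _ hF' (by
    rintro ⟨Y, b, K⟩ hz
    have k1 : Y * diagonal d - ((A₀ + diagonal 0) * Y + (K + diagonal b) * U₀) = 0 :=
      congrArg Prod.fst hz
    have k2 : diag (U₀ᵀ * Y + Yᵀ * U₀) = 0 := congrArg (fun z => z.2.1) hz
    have k3 : K = 0 := congrArg (fun z => z.2.2) hz
    subst k3
    obtain ⟨e1, e2⟩ := perturb_inj d hd U₀ hU hdet Y b (by simpa using k1) k2
    subst e1; subst e2; rfl)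
  have hFz : F z₀ = (0, 1, A₀) := by
    have e1 : U₀ * diagonal d - (A₀ + diagonal 0) * U₀ = 0 := by
      rw [diagonal_zero', add_zero, hA₀, mul_assoc, hU, mul_one, sub_self]
    have e2 : diag (U₀ᵀ * U₀) = 1 := by rw [hU]; ext i; simp
    exact Prod.ext e1 (Prod.ext e2 rfl)
  rw [hFz] at hmap
  have hNz : {z : E | z.1 ∈ N} ∈ 𝓝 z₀ := continuous_fst.continuousAt.preimage_mem_nhds hN
  have him : F '' {z : E | z.1 ∈ N} ∈ 𝓝 ((0, 1, A₀) : E) := by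
    have := Filter.image_mem_map (m := F) hNz
    exact hmap.symm.le this
  have hc : ContinuousAt (fun t : ℝ => ((0, 1, A₀ + t • R) : E)) 0 := by fun_prop
  have := hc.preimage_mem_nhds (t := F '' {z : E | z.1 ∈ N}) (by simpa using him)
  filter_upwards [this] with t ht
  obtain ⟨⟨X, a, W⟩, hX, hFX⟩ := ht
  have e1 : X * diagonal d - (W + diagonal a) * X = 0 := congrArg Prod.fst hFX
  have e2 : diag (Xᵀ * X) = 1 := congrArg (fun z => z.2.1) hFX
  have e3 : W = A₀ + t • R := congrArg (fun z => z.2.2) hFX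
  have hA₀s : A₀ᵀ = A₀ := by
    rw [hA₀]; simp [mul_assoc]
  have hs : (W + diagonal a)ᵀ = W + diagonal a := by
    rw [e3]; simp [hA₀s, hR.eq]
  have e4 : X * diagonal d = (W + diagonal a) * X := sub_eq_zero.mp e1
  have hcomm : diagonal d * (Xᵀ * X) = Xᵀ * X * diagonal d := by
    have := congrArg transpose e4
    rw [transpose_mul, transpose_mul, hs, diagonal_transpose] at this
    rw [← mul_assoc, this, mul_assoc, mul_assoc, ← e4]
  have hXX : Xᵀ * X = 1 := by
    ext i j
    by_cases hij : i = j
    · subst hij; simpa using congrFun e2 i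
    · have := congrFun (congrFun hcomm i) j
      rw [diagonal_mul, mul_diagonal] at this
      have h0 : (d i - d j) * (Xᵀ * X) i j = 0 := by linarith
      rcases mul_eq_zero.mp h0 with h | h
      · exact absurd (hd (sub_eq_zero.mp h)) hij
      · rw [h, one_apply_ne hij]
  refine ⟨X, a, hXX, ?_, hX⟩
  rw [e4, mul_assoc, mul_eq_one_comm.mp hXX, mul_one, e3]

open scoped Topology in
theorem perturb' {V : Type} [Fintype V] [DecidableEq V] (d : V → ℝ) (hd : Function.Injective d)
    (U₀ : Matrix V V ℝ) (hU : U₀ᵀ * U₀ = 1)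
    (hdet : (Matrix.of fun i j => U₀ i j ^ 2).det ≠ 0)
    (R : Matrix V V ℝ) (hR : R.IsSymm) (P : Matrix V V ℝ → Prop) (hP : ∀ᶠ U in 𝓝 U₀, P U) :
    ∃ t : ℝ, t ≠ 0 ∧ ∃ (U : Matrix V V ℝ) (a : V → ℝ), Uᵀ * U = 1 ∧
      U * diagonal d * Uᵀ = U₀ * diagonal d * U₀ᵀ + t • R + diagonal a ∧ P U := by
  have h1 := perturb d hd U₀ hU hdet R hR {U | P U} hP
  have h2 : ∀ᶠ t in 𝓝[≠] (0 : ℝ), t ≠ 0 := eventually_mem_nhdsWithin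
  exact (h2.and (h1.filter_mono nhdsWithin_le_nhds)).exists

/-- `G` has a matrix with simple spectrum, nowhere-zero eigenbasis and invertible `U ∘ U`. -/
def Good {V : Type} [Fintype V] [DecidableEq V] (G : SimpleGraph V) : Prop :=
  ∃ (d : V → ℝ) (U : Matrix V V ℝ), Function.Injective d ∧ Uᵀ * U = 1 ∧
    inS G (U * diagonal d * Uᵀ) ∧ (∀ i j, U i j ≠ 0) ∧
    (Matrix.of fun i j => U i j ^ 2).det ≠ 0

theorem good_transport {V W : Type} [Fintype V] [DecidableEq V] [Fintype W] [DecidableEq W]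
    (e : V ≃ W) (G : SimpleGraph W) (h : Good (G.comap e)) : Good G := by
  obtain ⟨d, U, hd, hU, hS, hnz, hdet⟩ := h
  have key : U.submatrix e.symm e.symm * diagonal (d ∘ e.symm) * (U.submatrix e.symm e.symm)ᵀ
      = (U * diagonal d * Uᵀ).submatrix e.symm e.symm := by
    rw [transpose_submatrix, ← submatrix_diagonal_equiv, submatrix_mul_equiv, submatrix_mul_equiv]
  refine ⟨d ∘ e.symm, U.submatrix e.symm e.symm, hd.comp e.symm.injective, ?_, ?_, ?_, ?_⟩
  · rw [transpose_submatrix, submatrix_mul_equiv, hU, submatrix_one_equiv]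
  · rw [key]
    refine ⟨hS.1.submatrix _, fun i j hij => ?_⟩
    have := hS.2 (e.symm i) (e.symm j) (fun h => hij (e.symm.injective h))
    simpa using this
  · intro i j; exact hnz _ _
  · have : (Matrix.of fun i j => (U.submatrix e.symm e.symm) i j ^ 2)
        = (Matrix.of fun i j => U i j ^ 2).submatrix e.symm e.symm := rfl
    rw [this, det_submatrix_equiv_self]; exact hdet

theorem exists_c {V : Type} [Fintype V] [DecidableEq V] (U : Matrix V V ℝ)
    (hnz : ∀ i j, U i j ≠ 0) (p : V → Prop) (u₀ : V) (hu : p u₀) :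
    ∃ c : V → ℝ, (∀ u, c u ≠ 0 ↔ p u) ∧ ∀ k, ∑ u, c u * U u k ≠ 0 := by
  classical
  let m : V → Module.Dual ℝ (V → ℝ) := fun k =>
    ∑ u, (if p u then U u k else 0) • (LinearMap.proj u : (V → ℝ) →ₗ[ℝ] ℝ)
  have hm : ∀ k f, m k f = ∑ u, (if p u then f u else 0) * U u k := by
    intro k f
    simp only [m, LinearMap.sum_apply, LinearMap.smul_apply, LinearMap.proj_apply, smul_eq_mul]
    refine Finset.sum_congr rfl fun u _ => ?_
    split_ifs <;> ring
  obtain ⟨f, hf⟩ := Module.Dual.exists_forall_ne_zero_of_forall_exists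
    (Sum.elim m (fun u => (LinearMap.proj u : (V → ℝ) →ₗ[ℝ] ℝ))) (by
      rintro (k | u)
      · refine ⟨Pi.single u₀ 1, ?_⟩
        rw [Sum.elim_inl, hm, Finset.sum_eq_single u₀]
        · simp [hu, hnz]
        · intro b _ hb; simp [hb]
        · simp
      · exact ⟨fun _ => 1, by simp⟩)
  refine ⟨fun u => if p u then f u else 0, fun u => ?_, fun k => ?_⟩
  · have := hf (Sum.inr u)
    simp only [Sum.elim_inr, LinearMap.proj_apply] at this
    by_cases h : p u <;> simp [h, this]
  · have := hf (Sum.inl k)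
    rwa [Sum.elim_inl, hm] at this

open scoped Topology in
theorem exists_x {V : Type} [Fintype V] [DecidableEq V] [Nonempty V] (d : V → ℝ)
    (hd : Function.Injective d) (U : Matrix V V ℝ) (hnz : ∀ i j, U i j ≠ 0)
    (s : V → ℝ) (hs : ∀ k, s k ≠ 0) :
    ∃ x : ℝ, (∀ k, x ≠ d k) ∧ ∀ i, ∑ l, U i l * ((x - d l)⁻¹ * s l) ≠ 0 := by
  classical
  obtain ⟨k⟩ := ‹Nonempty V›
  have h1 : ∀ᶠ x in 𝓝[≠] (d k), ∀ i, ∑ l, U i l * ((x - d l)⁻¹ * s l) ≠ 0 := by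
    rw [eventually_all]
    intro i
    have hc : ContinuousAt (fun x => U i k * s k + (x - d k) *
        ∑ l ∈ Finset.univ.erase k, U i l * ((x - d l)⁻¹ * s l)) (d k) := by
      refine continuousAt_const.add ((by fun_prop : ContinuousAt (fun x => x - d k) (d k)).mul ?_)
      refine tendsto_finsetSum _ fun l hl => ?_
      refine tendsto_const_nhds.mul (Tendsto.mul ?_ tendsto_const_nhds)
      refine ContinuousAt.inv₀ (by fun_prop) ?_
      intro h
      exact Finset.ne_of_mem_erase hl (hd (sub_eq_zero.mp h)).symm
    have h2 := hc.eventually_ne (y := 0) (by simp [hnz i k, hs k])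
    filter_upwards [h2.filter_mono nhdsWithin_le_nhds, eventually_mem_nhdsWithin] with x hx hxk h0
    apply hx
    have hxk' : x - d k ≠ 0 := sub_ne_zero.mpr hxk
    rw [← Finset.add_sum_erase _ _ (Finset.mem_univ k)] at h0
    have := congrArg (fun y => (x - d k) * y) h0
    simp only [mul_add, mul_zero] at this
    rw [← this]
    field_simp
  have h3 : ∀ᶠ x in 𝓝[≠] (d k), ∀ l, x ≠ d l := by
    rw [eventually_all]
    intro l
    by_cases hl : l = k
    · subst hl; exact eventually_mem_nhdsWithin
    · exact ((continuousAt_id (x := d k)).eventually_ne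
        (fun h => hl (hd h).symm)).filter_mono nhdsWithin_le_nhds
  exact (h3.and h1).exists

open scoped Topology in
theorem good_step {V : Type} [Fintype V] [DecidableEq V] [Nonempty V]
    (G : SimpleGraph (V ⊕ Unit)) (h : Good (G.comap Sum.inl))
    (u₀ : V) (hu : G.Adj (Sum.inl u₀) (Sum.inr ())) : Good G := by
  classical
  obtain ⟨d', U', hd', hU', hS', hnz', hdet'⟩ := h
  obtain ⟨c, hc, hcU⟩ := exists_c U' hnz' (fun u => G.Adj (Sum.inl u) (Sum.inr ())) u₀ hu
  obtain ⟨x, hxd, hx⟩ := exists_x d' hd' U' hnz' _ hcU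
  have hU'' : U' * U'ᵀ = 1 := mul_eq_one_comm.mp hU'
  set A' := U' * diagonal d' * U'ᵀ with hA'
  have hxA : x • (1 : Matrix V V ℝ) - A' = U' * diagonal (fun l => x - d' l) * U'ᵀ := by
    have : diagonal (fun l => x - d' l) = x • (1 : Matrix V V ℝ) - diagonal d' := by
      ext i j; by_cases hij : i = j
      · subst hij; simp
      · simp [hij]
    rw [this, mul_sub, sub_mul, mul_smul_comm, mul_one, smul_mul_assoc, hU'']
  have hdetx : (x • (1 : Matrix V V ℝ) - A').det ≠ 0 := by
    rw [hxA, det_mul, det_mul, det_diagonal]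
    have h1 : U'.det * U'ᵀ.det = 1 := by rw [← det_mul, hU'', det_one]
    have h2 : ∏ i, (x - d' i) ≠ 0 :=
      Finset.prod_ne_zero_iff.mpr fun i _ => sub_ne_zero.mpr (hxd i)
    have : U'.det * (∏ i, (x - d' i)) * U'ᵀ.det = ∏ i, (x - d' i) := by
      rw [mul_right_comm, h1, one_mul]
    rw [this]; exact h2
  have hinv : (x • (1 : Matrix V V ℝ) - A') * (U' * diagonal (fun l => (x - d' l)⁻¹) * U'ᵀ) = 1 := by
    rw [hxA]
    have : diagonal (fun l => x - d' l) * diagonal (fun l => (x - d' l)⁻¹)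
        = (1 : Matrix V V ℝ) := by
      rw [diagonal_mul_diagonal, ← diagonal_one]
      congr 1; ext l; exact mul_inv_cancel₀ (sub_ne_zero.mpr (hxd l))
    calc U' * diagonal (fun l => x - d' l) * U'ᵀ * (U' * diagonal (fun l => (x - d' l)⁻¹) * U'ᵀ)
        = U' * diagonal (fun l => x - d' l) * (U'ᵀ * U') *
          diagonal (fun l => (x - d' l)⁻¹) * U'ᵀ := by simp only [mul_assoc]
      _ = U' * (diagonal (fun l => x - d' l) * diagonal (fun l => (x - d' l)⁻¹)) * U'ᵀ := by
          rw [hU', mul_one]; simp only [mul_assoc]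
      _ = 1 := by rw [this, mul_one, hU'']
  have hadj : ∀ i, ((x • (1 : Matrix V V ℝ) - A').adjugate *ᵥ c) i ≠ 0 := by
    intro i
    have e : (x • (1 : Matrix V V ℝ) - A').adjugate = (x • (1 : Matrix V V ℝ) - A').det •
        (U' * diagonal (fun l => (x - d' l)⁻¹) * U'ᵀ) := by
      have := congrArg (fun M => M * (U' * diagonal (fun l => (x - d' l)⁻¹) * U'ᵀ))
        (adjugate_mul (x • (1 : Matrix V V ℝ) - A'))
      rw [mul_assoc, hinv, mul_one, smul_mul_assoc, one_mul] at this
      exact this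
    rw [e, smul_mulVec, Pi.smul_apply, smul_eq_mul]
    refine mul_ne_zero hdetx ?_
    have e2 : ((U' * diagonal (fun l => (x - d' l)⁻¹) * U'ᵀ) *ᵥ c) i
        = ∑ l, U' i l * ((x - d' l)⁻¹ * ∑ u, c u * U' u l) := by
      rw [mul_assoc, ← mulVec_mulVec, ← mulVec_mulVec]
      change ∑ l, U' i l * (diagonal (fun l => (x - d' l)⁻¹) *ᵥ (U'ᵀ *ᵥ c)) l = _
      refine Finset.sum_congr rfl fun l _ => ?_
      rw [mulVec_diagonal]
      simp only [mulVec, dotProduct, transpose_apply, mul_comm]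
    rw [e2]; exact hx i
  let d : V ⊕ Unit → ℝ := Sum.elim d' (fun _ => x)
  let U₀ : Matrix (V ⊕ Unit) (V ⊕ Unit) ℝ := fromBlocks U' 0 0 1
  let R : Matrix (V ⊕ Unit) (V ⊕ Unit) ℝ :=
    fromBlocks 0 (Matrix.of fun u _ => c u) (Matrix.of fun _ u => c u) 0
  have hd : Function.Injective d := by
    rintro (i | i) (j | j) hij
    · exact congrArg _ (hd' hij)
    · exact absurd hij.symm (hxd i)
    · exact absurd hij (hxd j)
    · rfl
  have hU₀ : U₀ᵀ * U₀ = 1 := by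
    simp [U₀, fromBlocks_transpose, fromBlocks_multiply, hU', fromBlocks_one]
  have hdet0 : (Matrix.of fun i j => U₀ i j ^ 2).det ≠ 0 := by
    have : (Matrix.of fun i j => U₀ i j ^ 2)
        = fromBlocks (Matrix.of fun i j => U' i j ^ 2) 0 0 1 := by
      ext (i | i) (j | j) <;> simp [U₀]
    rw [this, det_fromBlocks_zero₁₂, det_one, mul_one]; exact hdet'
  have hR : R.IsSymm := by
    ext (i | i) (j | j) <;> simp [R]
  have hdiag : diagonal d = fromBlocks (diagonal d') 0 0 (diagonal fun _ : Unit => x) := by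
    rw [fromBlocks_diagonal]
  have hA₀ : U₀ * diagonal d * U₀ᵀ = fromBlocks A' 0 0 (diagonal fun _ : Unit => x) := by
    rw [hdiag]
    simp only [U₀, fromBlocks_transpose, fromBlocks_multiply, hA']
    simp
  obtain ⟨t, ht, U, a, hU, hA, ⟨p1, p2, p3, p4, p5⟩⟩ := perturb' d hd U₀ hU₀ hdet0 R hR
    (fun U => (∀ i j, U (Sum.inl i) (Sum.inl j) ≠ 0) ∧ U (Sum.inr ()) (Sum.inr ()) ≠ 0 ∧
      (∀ k, ∑ u, c u * U (Sum.inl u) (Sum.inl k) ≠ 0) ∧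
      (∀ i, ((x • (1 : Matrix V V ℝ) - (U * diagonal d * Uᵀ).submatrix Sum.inl Sum.inl).adjugate
        *ᵥ c) i ≠ 0) ∧ (Matrix.of fun i j => U i j ^ 2).det ≠ 0) (by
    have hent : ∀ i j, Continuous fun U : Matrix (V ⊕ Unit) (V ⊕ Unit) ℝ => U i j :=
      fun i j => continuous_apply_apply i j
    refine Filter.Eventually.and ?_ (Filter.Eventually.and ?_ (Filter.Eventually.and ?_
      (Filter.Eventually.and ?_ ?_)))
    · simp only [eventually_all]
      intro i j
      exact (hent _ _).continuousAt.eventually_ne (hnz' i j)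
    · exact (hent _ _).continuousAt.eventually_ne (by simp [U₀])
    · simp only [eventually_all]
      intro k
      exact (continuous_finsetSum _ fun u _ =>
        continuous_const.mul (hent _ _)).continuousAt.eventually_ne (hcU k)
    · simp only [eventually_all]
      intro i
      have hcont : Continuous fun U : Matrix (V ⊕ Unit) (V ⊕ Unit) ℝ =>
          ((x • (1 : Matrix V V ℝ) - (U * diagonal d * Uᵀ).submatrix Sum.inl Sum.inl).adjugate
            *ᵥ c) i := by
        refine (continuous_apply i).comp (Continuous.matrix_mulVec ?_ continuous_const)
        refine Continuous.matrix_adjugate ?_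
        refine continuous_const.sub (Continuous.matrix_submatrix ?_ _ _)
        exact (continuous_id.mul continuous_const).mul continuous_id.matrix_transpose
      refine hcont.continuousAt.eventually_ne ?_
      rw [hA₀]
      exact hadj i
    · refine Continuous.continuousAt ?_ |>.eventually_ne hdet0
      refine Continuous.matrix_det ?_
      exact continuous_matrix fun i j => (hent i j).pow 2)
  refine ⟨d, U, hd, hU, ?_, ?_, p5⟩
  · have hsymm : (U * diagonal d * Uᵀ).IsSymm := by
      unfold Matrix.IsSymm; simp [mul_assoc]
    refine ⟨hsymm, ?_⟩
    rw [hA, hA₀]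
    rintro (i | i) (j | j) hij
    · have := hS'.2 i j (fun h => hij (congrArg _ h))
      simpa [R, diagonal_apply_ne _ hij] using this
    · simpa [R, ht] using hc i
    · rw [G.adj_comm]
      simpa [R, ht] using hc j
    · exact absurd rfl hij
  · have hAU : (U * diagonal d * Uᵀ) * U = U * diagonal d := by
      rw [mul_assoc, hU, mul_one]
    set A := U * diagonal d * Uᵀ with hAdef
    have hAvu : ∀ u, A (Sum.inr ()) (Sum.inl u) = t * c u := by
      intro u; rw [hA, hA₀]; simp [R]
    have hAuv : ∀ u, A (Sum.inl u) (Sum.inr ()) = t * c u := by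
      intro u; rw [hA, hA₀]; simp [R]
    rintro (i | i) (j | j)
    · exact p1 i j
    · intro h0
      let y : V → ℝ := fun i => U (Sum.inl i) (Sum.inr ())
      have hy : (x • (1 : Matrix V V ℝ) - A.submatrix Sum.inl Sum.inl) *ᵥ y
          = (t * U (Sum.inr ()) (Sum.inr ())) • c := by
        ext k
        have := congrFun (congrFun hAU (Sum.inl k)) (Sum.inr ())
        rw [mul_diagonal, mul_apply, Fintype.sum_sum_type] at this
        simp only [Finset.univ_unique, Finset.sum_singleton, hAuv] at this
        rw [sub_mulVec, smul_mulVec, one_mulVec]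
        simp only [Pi.sub_apply, Pi.smul_apply, smul_eq_mul, mulVec, dotProduct, submatrix_apply]
        have hd2 : d (Sum.inr ()) = x := rfl
        rw [hd2] at this
        change _ + t * c k * U (Sum.inr ()) (Sum.inr ()) = _ at this
        simp only [y]
        linarith
      have := congrArg (fun w =>
        ((x • (1 : Matrix V V ℝ) - A.submatrix Sum.inl Sum.inl).adjugate *ᵥ w) i) hy
      simp only [mulVec_mulVec, adjugate_mul, mulVec_smul, smul_mulVec, one_mulVec,
        Pi.smul_apply, smul_eq_mul] at this
      have hyi : y i = 0 := h0
      rw [hyi, mul_zero] at this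
      exact mul_ne_zero (mul_ne_zero ht p2) (p4 i) this.symm
    · intro h0
      have := congrFun (congrFun hAU (Sum.inr ())) (Sum.inl j)
      have h0' : U (Sum.inr ()) (Sum.inl j) = 0 := h0
      rw [mul_diagonal, mul_apply, Fintype.sum_sum_type] at this
      simp only [Finset.univ_unique, Finset.sum_singleton, hAvu, mul_assoc,
        ← Finset.mul_sum] at this
      change _ + _ * U (Sum.inr ()) (Sum.inl j) = _ at this
      rw [h0', mul_zero, zero_mul, add_zero] at this
      exact mul_ne_zero ht (p3 j) this
    · exact p2

theorem good_of_connected (n : ℕ) : ∀ {V : Type} [Fintype V] [DecidableEq V] (G : SimpleGraph V),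
    Fintype.card V = n → G.Connected → Good G := by
  induction n with
  | zero =>
    intro V _ _ G hn hG
    have := hG.nonempty
    exact absurd hn Fintype.card_ne_zero
  | succ n ih =>
    intro V _ _ G hn hG
    rcases subsingleton_or_nontrivial V with hV | hV
    · refine ⟨0, 1, Function.injective_of_subsingleton _, by simp, ⟨by simp [IsSymm], ?_⟩, ?_, ?_⟩
      · intro i j hij; exact absurd (Subsingleton.elim i j) hij
      · intro i j; rw [Subsingleton.elim i j]; simp
      · have : (Matrix.of fun i j => (1 : Matrix V V ℝ) i j ^ 2) = 1 := by
          ext i j; rw [Subsingleton.elim i j]; simp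
        rw [this]; simp
    · obtain ⟨v, hv⟩ := hG.exists_connected_induce_compl_singleton_of_finite_nontrivial
      let e : {b // b ≠ v} ⊕ Unit ≃ V :=
        (Equiv.optionEquivSumPUnit _).symm.trans (Equiv.optionSubtypeNe v)
      have e1 : ∀ b, e (Sum.inl b) = b.1 := fun b => by simp [e]
      have e2 : e (Sum.inr ()) = v := by simp [e]
      obtain ⟨w, hw⟩ := hG.preconnected.exists_adj_of_nontrivial v
      have hwv : w ≠ v := hw.ne'
      have : Nonempty {b // b ≠ v} := ⟨⟨w, hwv⟩⟩
      apply good_transport e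
      refine good_step _ ?_ ⟨w, hwv⟩ ?_
      · apply ih
        · have := Fintype.card_congr e
          simp at this
          simp; omega
        · have : (G.comap e).comap Sum.inl = G.comap (fun b : {b // b ≠ v} => b.1) := by
            ext a b; simp [e1]
          rw [this]; exact hv
      · change G.Adj (e _) (e _)
        rw [e1, e2]; exact hw.symm

theorem exists_choice_aux {α : Type} [Fintype α] [DecidableEq α] [Nonempty α] (d : α → ℝ)
    (hd : Function.Injective d) (k : ℕ) (hk : k ≤ Fintype.card α) :
    ∃ (X : Finset α) (l m : ℝ), X.card = k ∧ (∀ i, i ∉ X → l < d i ∧ d i < m) ∧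
      (insert l (insert m (X.image d))).card ≤ max 2 k := by
  obtain ⟨i₀, h₀⟩ := Finite.exists_min d
  obtain ⟨i₁, h₁⟩ := Finite.exists_max d
  rcases Nat.lt_or_ge k 2 with h2 | h2
  · interval_cases k
    · refine ⟨∅, d i₀ - 1, d i₁ + 1, by simp, fun i _ => ?_, ?_⟩
      · have := h₀ i; have := h₁ i; constructor <;> linarith
      · simpa using Finset.card_le_two
    · refine ⟨{i₀}, d i₀, d i₁ + 1, by simp, fun i hi => ?_, ?_⟩
      · have h3 := h₁ i
        refine ⟨lt_of_le_of_ne (h₀ i) fun h => hi ?_, by linarith⟩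
        simp [hd h]
      · have : insert (d i₀) (insert (d i₁ + 1) (Finset.image d {i₀})) = {d i₀, d i₁ + 1} := by
          ext y; simp; tauto
        rw [this]; simpa using Finset.card_le_two
  · obtain ⟨X, hX, hXk⟩ := Finset.exists_superset_card_eq (s := {i₀, i₁}) (n := k)
      (Finset.card_le_two.trans h2) hk
    have m0 : i₀ ∈ X := hX (by simp)
    have m1 : i₁ ∈ X := hX (by simp)
    refine ⟨X, d i₀, d i₁, hXk, fun i hi => ⟨?_, ?_⟩, ?_⟩
    · exact lt_of_le_of_ne (h₀ i) fun h => hi (hd h ▸ m0)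
    · exact lt_of_le_of_ne (h₁ i) fun h => hi (hd h ▸ m1)
    · rw [Finset.insert_eq_of_mem (a := d i₁) (Finset.mem_image_of_mem d m1),
        Finset.insert_eq_of_mem (Finset.mem_image_of_mem d m0)]
      exact Finset.card_image_le.trans (hXk ▸ le_max_right _ _)

theorem exists_choice {α β : Type} [Fintype α] [DecidableEq α] [Fintype β] [Nonempty α]
    (d : α → ℝ) (hd : Function.Injective d) (hc : Fintype.card β ≤ Fintype.card α) :
    ∃ (f : β → α) (l m : ℝ) (S : Finset ℝ), Function.Injective f ∧
      (∀ j, l < d (f j) ∧ d (f j) < m) ∧ l ∈ S ∧ m ∈ S ∧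
      (∀ i, (∀ j, i ≠ f j) → d i ∈ S) ∧ S.card ≤ max 2 (Fintype.card α - Fintype.card β) := by
  obtain ⟨X, l, m, hX, hlm, hS⟩ := exists_choice_aux d hd
    (Fintype.card α - Fintype.card β) (Nat.sub_le _ _)
  have hcard : Fintype.card β = Fintype.card {i // i ∈ Xᶜ} := by
    rw [Fintype.card_coe, Finset.card_compl, hX]; omega
  let e := Fintype.equivOfCardEq hcard
  refine ⟨fun j => (e j).1, l, m, _, ?_, ?_, ?_, ?_, ?_, hS⟩
  · intro a b hab; exact e.injective (Subtype.ext hab)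
  · intro j; exact hlm _ (Finset.mem_compl.mp (e j).2)
  · simp
  · simp
  · intro i hi
    by_cases hiX : i ∈ X
    · exact Finset.mem_insert_of_mem (Finset.mem_insert_of_mem (Finset.mem_image_of_mem d hiX))
    · exact absurd (by simp) (hi (e.symm ⟨i, Finset.mem_compl.mpr hiX⟩))

theorem graphJoin_inl_inl {α β : Type} (G : SimpleGraph α) (H : SimpleGraph β) (a b : α) :
    (graphJoin G H).Adj (Sum.inl a) (Sum.inl b) ↔ G.Adj a b := by
  simp [graphJoin, partialJoin]

theorem graphJoin_inr_inr {α β : Type} (G : SimpleGraph α) (H : SimpleGraph β) (a b : β) :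
    (graphJoin G H).Adj (Sum.inr a) (Sum.inr b) ↔ H.Adj a b := by
  simp [graphJoin, partialJoin]

theorem graphJoin_inl_inr {α β : Type} (G : SimpleGraph α) (H : SimpleGraph β) (a : α) (b : β) :
    (graphJoin G H).Adj (Sum.inl a) (Sum.inr b) := by
  simp [graphJoin, partialJoin]

theorem graphJoin_inr_inl {α β : Type} (G : SimpleGraph α) (H : SimpleGraph β) (a : α) (b : β) :
    (graphJoin G H).Adj (Sum.inr b) (Sum.inl a) := by
  simp [graphJoin, partialJoin]

open scoped Topology in
theorem join_bound {α β : Type} [Fintype α] [DecidableEq α] [Fintype β] [DecidableEq β]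
    (G : SimpleGraph α) (H : SimpleGraph β) (hG : G.Connected)
    (hc : Fintype.card β ≤ Fintype.card α) :
    ∃ M, inS (graphJoin G H) M ∧ qMat M ≤ max 2 (Fintype.card α - Fintype.card β) := by
  classical
  have := hG.nonempty
  obtain ⟨d, U, hd, hU, hS, hnz, -⟩ := good_of_connected _ G rfl hG
  obtain ⟨f, l, m, S, hf, hlm, hlS, hmS, hdS, hScard⟩ := exists_choice (β := β) d hd hc
  let e : β → ℝ := fun j => l + m - d (f j)
  have he : Function.Injective e := by
    intro a b hab
    apply hf; apply hd
    simp only [e] at hab; linarith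
  let σ : β → ℝ := fun j => Real.sqrt ((d (f j) - l) * (m - d (f j)))
  have hpos : ∀ j, 0 < (d (f j) - l) * (m - d (f j)) := fun j =>
    mul_pos (by linarith [(hlm j).1]) (by linarith [(hlm j).2])
  have hσ : ∀ j, σ j ≠ 0 := fun j => (Real.sqrt_pos.mpr (hpos j)).ne'
  have hσ2 : ∀ j, σ j * σ j = (d (f j) - l) * (m - d (f j)) := fun j =>
    Real.mul_self_sqrt (hpos j).le
  let R : Matrix β β ℝ := H.adjMatrix ℝ
  let s : Matrix α β ℝ := Matrix.of fun i k => if i = f k then σ k else 0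
  obtain ⟨t, ht, W, a, hW, hC, hB⟩ := perturb' e he 1 (by simp)
    (by
      have : (Matrix.of fun i j => (1 : Matrix β β ℝ) i j ^ 2) = 1 := by
        ext i j; by_cases hij : i = j
        · subst hij; simp
        · simp [hij]
      rw [this]; simp) R (H.transpose_adjMatrix)
    (fun W => ∀ i j, (U * s * Wᵀ) i j ≠ 0) (by
      simp only [eventually_all]
      intro i j
      have hcont : Continuous fun W : Matrix β β ℝ => (U * s * Wᵀ) i j :=
        (continuous_apply_apply i j).comp
          (continuous_const.matrix_mul continuous_id.matrix_transpose)
      refine hcont.continuousAt.eventually_ne ?_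
      rw [transpose_one, Matrix.mul_one, mul_apply, Finset.sum_eq_single (f j)]
      · simp [s, hnz, hσ]
      · intro b _ hb; simp [s, hb]
      · simp)
  let Q : Matrix (α ⊕ β) (α ⊕ β) ℝ := fromBlocks U 0 0 W
  let M₀ : Matrix (α ⊕ β) (α ⊕ β) ℝ := fromBlocks (diagonal d) s sᵀ (diagonal e)
  have hQ : Qᵀ * Q = 1 := by
    simp [Q, fromBlocks_transpose, fromBlocks_multiply, hU, hW, fromBlocks_one]
  have hM : Q * M₀ * Qᵀ = fromBlocks (U * diagonal d * Uᵀ) (U * s * Wᵀ) (U * s * Wᵀ)ᵀ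
      (W * diagonal e * Wᵀ) := by
    simp only [Q, M₀, fromBlocks_transpose, fromBlocks_multiply]
    simp [mul_assoc, Matrix.mul_assoc]
  refine ⟨Q * M₀ * Qᵀ, ?_, ?_⟩
  · rw [hM]
    have hWs : (W * diagonal e * Wᵀ)ᵀ = W * diagonal e * Wᵀ := by simp [mul_assoc]
    refine ⟨?_, ?_⟩
    · unfold Matrix.IsSymm
      rw [fromBlocks_transpose, hS.1.eq, hWs, transpose_transpose]
    · rintro (i | i) (j | j) hij
      · rw [graphJoin_inl_inl]
        exact hS.2 i j (fun h => hij (congrArg _ h))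
      · simp only [graphJoin_inl_inr, iff_true]
        exact hB i j
      · simp only [graphJoin_inr_inl, iff_true]
        exact hB j i
      · rw [graphJoin_inr_inr, fromBlocks_apply₂₂, hC]
        have hij' : i ≠ j := fun h => hij (congrArg _ h)
        simp [R, hij', ht]
  · refine le_trans (Finset.card_le_card ?_) hScard
    intro x hx
    rw [specMultiset, Multiset.mem_toFinset] at hx
    have hroot := (Polynomial.mem_roots'.mp hx).2
    rw [charpoly_mul_comm, ← mul_assoc, hQ, one_mul, Polynomial.IsRoot, eval_charpoly] at hroot
    obtain ⟨z, hz0, hz⟩ := exists_mulVec_eq_zero_iff.mpr hroot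
    by_contra hxS
    apply hz0
    have hz' : M₀ *ᵥ z = x • z := by
      have h1 : scalar (α ⊕ β) x *ᵥ z = x • z := by
        ext i; simp [scalar_apply, mulVec_diagonal]
      rw [sub_mulVec, h1] at hz
      exact (sub_eq_zero.mp hz).symm
    have eqα : ∀ i, d i * z (Sum.inl i) + ∑ k, s i k * z (Sum.inr k) = x * z (Sum.inl i) := by
      intro i
      have := congrFun hz' (Sum.inl i)
      simp only [mulVec, dotProduct, Fintype.sum_sum_type, M₀, fromBlocks_apply₁₁,
        fromBlocks_apply₁₂, Pi.smul_apply, smul_eq_mul] at this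
      rw [← this]
      simp [diagonal_apply]
    have eqβ : ∀ j, σ j * z (Sum.inl (f j)) + e j * z (Sum.inr j) = x * z (Sum.inr j) := by
      intro j
      have := congrFun hz' (Sum.inr j)
      simp only [mulVec, dotProduct, Fintype.sum_sum_type, M₀, fromBlocks_apply₂₁,
        fromBlocks_apply₂₂, Pi.smul_apply, smul_eq_mul] at this
      rw [← this]
      simp [diagonal_apply, s]
    have hxl : x - l ≠ 0 := fun h => hxS (by rw [sub_eq_zero.mp h]; exact hlS)
    have hxm : x - m ≠ 0 := fun h => hxS (by rw [sub_eq_zero.mp h]; exact hmS)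
    have eqf : ∀ j, d (f j) * z (Sum.inl (f j)) + σ j * z (Sum.inr j)
        = x * z (Sum.inl (f j)) := by
      intro j
      have := eqα (f j)
      rw [Finset.sum_eq_single j] at this
      · simpa [s] using this
      · intro b _ hb
        have : f j ≠ f b := fun h => hb (hf h).symm
        simp [s, this]
      · simp
    have hβ : ∀ j, z (Sum.inr j) = 0 := by
      intro j
      have h1 := eqf j
      have h2 := eqβ j
      have h3 : (x - l) * (x - m) * z (Sum.inr j) = 0 := by
        simp only [e] at h2
        linear_combination (x - d (f j)) * (-h2) - σ j * h1 + z (Sum.inr j) * hσ2 j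
      exact (mul_eq_zero.mp h3).resolve_left (mul_ne_zero hxl hxm)
    ext (i | j)
    · by_cases hi : ∃ j, i = f j
      · obtain ⟨j, rfl⟩ := hi
        have := eqβ j
        rw [hβ j, mul_zero, mul_zero, add_zero] at this
        exact (mul_eq_zero.mp this).resolve_left (hσ j)
      · push Not at hi
        have h1 := eqα i
        simp only [hβ, mul_zero, Finset.sum_const_zero, add_zero] at h1
        have h2 : (d i - x) * z (Sum.inl i) = 0 := by linarith
        refine (mul_eq_zero.mp h2).resolve_left fun h => hxS ?_
        rw [← sub_eq_zero.mp h]; exact hdS i hi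
    · exact hβ j

theorem inS_join_swap {α β : Type} [Fintype α] [DecidableEq α] [Fintype β] [DecidableEq β]
    (G : SimpleGraph α) (H : SimpleGraph β) (M : Matrix (α ⊕ β) (α ⊕ β) ℝ)
    (h : inS (graphJoin G H) M) :
    inS (graphJoin H G) (M.reindex (Equiv.sumComm α β) (Equiv.sumComm α β)) := by
  refine ⟨h.1.submatrix _, ?_⟩
  rintro (i | i) (j | j) hij
  · have := h.2 (Sum.inr i) (Sum.inr j) (fun h => hij (by simpa using h))
    simpa [graphJoin_inl_inl, graphJoin_inr_inr] using this
  · have := h.2 (Sum.inr i) (Sum.inl j) (by simp)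
    simpa [graphJoin_inl_inr, graphJoin_inr_inl] using this
  · have := h.2 (Sum.inl i) (Sum.inr j) (by simp)
    simpa [graphJoin_inl_inr, graphJoin_inr_inl] using this
  · have := h.2 (Sum.inl i) (Sum.inl j) (fun h => hij (by simpa using h))
    simpa [graphJoin_inl_inl, graphJoin_inr_inr] using this

/-- Corollary 3.9, second part: for connected graphs `G` and `H`,
`q(G ∨ H) ≤ max {2, ||G| − |H||}`. -/
theorem statement15 (g h : ℕ) (G : SimpleGraph (Fin g)) (H : SimpleGraph (Fin h))
    (hG : G.Connected) (hH : H.Connected) :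
    qGraph (graphJoin G H) ≤ max 2 (Nat.dist g h) := by

  rcases le_total h g with hgh | hgh
  · obtain ⟨M, hM, hq⟩ := join_bound G H hG (by simpa using hgh)
    have hle : qGraph (graphJoin G H) ≤ qMat M := Nat.sInf_le ⟨M, hM, rfl⟩
    refine hle.trans ?_
    rw [Nat.dist_eq_sub_of_le_right hgh]
    simpa using hq
  · obtain ⟨M, hM, hq⟩ := join_bound H G hH (by simpa using hgh)
    have hle : qGraph (graphJoin G H) ≤ qMat (M.reindex (Equiv.sumComm (Fin h) (Fin g))
        (Equiv.sumComm (Fin h) (Fin g))) := Nat.sInf_le ⟨_, inS_join_swap H G M hM, rfl⟩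
    refine hle.trans ?_
    rw [Nat.dist_eq_sub_of_le hgh]
    have : qMat (M.reindex (Equiv.sumComm (Fin h) (Fin g)) (Equiv.sumComm (Fin h) (Fin g)))
        = qMat M := by
      unfold qMat specMultiset
      rw [charpoly_reindex]
    rw [this]
    simpa using hq
end

section
/- Let m ≥ 2. For any distinct real numbers λ₁ < λ₂ < … < λ_m there exist real numbers μ_i ∈ (λ_i, λ_{i+1}) for i ∈ {1,…,m−1} and a matrix N ∈ S(K₁ ∨ C_{4m−2}) with spectrum {λ₁^(3), μ₁, λ₂^(3), μ₂, …, μ_{m−1}, λ_m^(3)} (so N realises the ordered multiplicity list (3,1,3,1,…,3)). Moreover, q(K₁ ∨ C_{4m−2}) = 2m − 1. -/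
open Matrix Filter

open Polynomial in
/-- For a symmetric real matrix, algebraic multiplicity equals geometric multiplicity. -/
theorem count_roots_eq {V : Type*} [Fintype V] [DecidableEq V] (A : Matrix V V ℝ)
    (hA : A.IsSymm) (ν : ℝ) :
    A.charpoly.roots.count ν =
      Module.finrank ℝ (LinearMap.ker (A - scalar V ν).mulVecLin) := by
  have hM : (A - scalar V ν).IsHermitian := by
    rw [Matrix.IsHermitian, Matrix.conjTranspose_eq_transpose_of_trivial]
    simp [hA.eq]
  have h1 := hM.rank_eq_card_non_zero_eigs
  have h2 : (A - scalar V ν).charpoly.roots = Multiset.map hM.eigenvalues Finset.univ.val :=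
    hM.roots_charpoly_eq_eigenvalues
  have h3 : A.charpoly.roots.count ν = (A - scalar V ν).charpoly.roots.count 0 := by
    rw [count_roots, count_roots, Polynomial.rootMultiplicity_eq_rootMultiplicity,
      charpoly_sub_scalar]
  have h4 := LinearMap.finrank_range_add_finrank_ker (A - scalar V ν).mulVecLin
  rw [Module.finrank_fintype_fun_eq_card] at h4
  change (A - scalar V ν).rank + _ = _ at h4
  rw [h3, h2]
  have h5 : Multiset.count (0 : ℝ) (Multiset.map hM.eigenvalues Finset.univ.val)
      = Fintype.card {i // hM.eigenvalues i = 0} := by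
    rw [Multiset.count_map, Fintype.card_subtype]
    simp only [eq_comm (a := (0 : ℝ))]
    rfl
  rw [h5]
  have h6 := Fintype.card_subtype_compl (fun i => hM.eigenvalues i = 0)
  have h7 := Fintype.card_subtype_le (fun i => hM.eigenvalues i = 0)
  simp only [ne_eq] at h1
  omega

theorem card_roots_eq {V : Type*} [Fintype V] [DecidableEq V] (A : Matrix V V ℝ)
    (hA : A.IsSymm) : A.charpoly.roots.card = Fintype.card V := by
  have hM : A.IsHermitian := by
    rw [Matrix.IsHermitian, Matrix.conjTranspose_eq_transpose_of_trivial]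
    exact hA
  rw [hM.roots_charpoly_eq_eigenvalues]
  simp

open Polynomial in
/-- Partial fractions for strictly interlacing nodes. -/
theorem partial_fractions {n : ℕ} (d : Fin (n + 1) → ℝ) (g : Fin n → ℝ)
    (hg : StrictMono g)
    (hne : ∀ i j, d i ≠ g j) :
    ∃ a : ℝ, ∀ i, d i - a = ∑ j, (-(∏ l, (g j - d l)) * Lagrange.nodalWeight Finset.univ g j) /
      (d i - g j) := by
  classical
  set f : ℝ[X] := ∏ l, (X - C (d l)) with hf
  set χ : ℝ[X] := Lagrange.nodal Finset.univ g with hχ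
  have hχm : χ.Monic := Lagrange.nodal_monic
  have hfm : f.Monic := monic_prod_X_sub_C _ _
  have hfd : f.natDegree = n + 1 := by simp [hf, natDegree_prod_of_monic, monic_X_sub_C]
  have hχd : χ.natDegree = n := by simp [hχ]
  have hqd : (f /ₘ χ).natDegree = 1 := by
    rw [natDegree_divByMonic _ hχm, hfd, hχd]; omega
  have hqm : (f /ₘ χ).leadingCoeff = 1 := by
    rw [leadingCoeff_divByMonic_of_monic hχm]
    · exact hfm
    · rw [degree_eq_natDegree hχm.ne_zero, degree_eq_natDegree hfm.ne_zero, hfd, hχd]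
      exact_mod_cast Nat.le_succ n
  have hq : f /ₘ χ = X + C ((f /ₘ χ).coeff 0) := by
    have := eq_X_add_C_of_natDegree_le_one (p := f /ₘ χ) (by omega)
    rw [leadingCoeff, hqd] at hqm
    rw [hqm] at this
    simpa using this
  have hdiv := modByMonic_add_div f χ
  set R := f %ₘ χ with hR
  have hRd : R.degree < (Finset.univ : Finset (Fin n)).card := by
    have := degree_modByMonic_lt f hχm
    rw [degree_eq_natDegree hχm.ne_zero, hχd] at this
    rw [Finset.card_univ, Fintype.card_fin]
    exact this
  have hRi := Lagrange.eq_interpolate (s := Finset.univ) (v := g) hg.injective.injOn hRd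
  refine ⟨-(f /ₘ χ).coeff 0, fun i => ?_⟩
  have h1 : f.eval (d i) = 0 := by
    simp only [hf, eval_prod]
    exact Finset.prod_eq_zero (Finset.mem_univ i) (by simp)
  have h2 : ∀ j, R.eval (g j) = ∏ l, (g j - d l) := by
    intro j
    have : f.eval (g j) = R.eval (g j) := by
      conv_lhs => rw [← hdiv]
      simp [hχ, Lagrange.eval_nodal_at_node]
    rw [← this]; simp [hf, eval_prod]
  have h3 : R.eval (d i) = χ.eval (d i) * ∑ j, Lagrange.nodalWeight Finset.univ g j *
      (d i - g j)⁻¹ * ∏ l, (g j - d l) := by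
    conv_lhs => rw [hRi]
    rw [Lagrange.eval_interpolate_not_at_node _ (fun j _ => hne i j)]
    simp only [h2, hχ]
  have h4 : χ.eval (d i) ≠ 0 :=
    Lagrange.eval_nodal_not_at_node (fun j _ => hne i j)
  rw [← hdiv, eval_add, eval_mul, h3, hq] at h1
  simp only [eval_add, eval_X, eval_C] at h1
  rw [← mul_add] at h1
  have h5 := (mul_eq_zero.mp h1).resolve_left h4
  rw [sub_neg_eq_add]
  rw [eq_neg_of_add_eq_zero_right h5, ← Finset.sum_neg_distrib]
  refine Finset.sum_congr rfl fun j _ => ?_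
  rw [div_eq_mul_inv]; ring

/-- Positivity of the partial fraction weights under interlacing. -/
theorem weight_pos {n : ℕ} (d : Fin (n + 1) → ℝ) (g : Fin n → ℝ) (hd : StrictMono d)
    (h1 : ∀ j, d j.castSucc < g j) (h2 : ∀ j, g j < d j.succ) (j : Fin n) :
    0 < -(∏ l, (g j - d l)) * Lagrange.nodalWeight Finset.univ g j := by
  classical
  have hg : StrictMono g := by
    intro a b hab
    exact (h2 a).trans_le ((hd.monotone (Fin.succ_le_castSucc_iff.mpr hab)).trans (h1 b).le)
  rw [Lagrange.nodalWeight, Fin.prod_univ_succAbove _ j.castSucc,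
    ← Finset.mul_prod_erase Finset.univ _ (Finset.mem_univ j)]
  have hs : (j.castSucc).succAbove j = j.succ := Fin.succAbove_castSucc_self j
  rw [hs]
  have : -((g j - d j.castSucc) * ((g j - d j.succ) *
      ∏ x ∈ Finset.univ.erase j, (g j - d (j.castSucc.succAbove x)))) *
      ∏ x ∈ Finset.univ.erase j, (g j - g x)⁻¹ =
      (g j - d j.castSucc) * (d j.succ - g j) *
      ∏ x ∈ Finset.univ.erase j, ((g j - d (j.castSucc.succAbove x)) * (g j - g x)⁻¹) := by
    rw [Finset.prod_mul_distrib]; ring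
  rw [this]
  refine mul_pos (mul_pos (sub_pos.mpr (h1 j)) (sub_pos.mpr (h2 j))) (Finset.prod_pos ?_)
  intro x hx
  have hx' : x ≠ j := (Finset.mem_erase.mp hx).1
  rcases lt_or_gt_of_ne hx' with h | h
  · rw [Fin.succAbove_of_castSucc_lt _ _ (by simpa using h)]
    have := h1 j
    have h3 : d x.castSucc < d j.castSucc := hd (by simpa using h)
    exact mul_pos (by linarith) (inv_pos.mpr (sub_pos.mpr (hg h)))
  · rw [Fin.succAbove_of_le_castSucc _ _ (by simpa using h.le)]
    have := h2 j
    have h3 : d j.succ < d x.succ := hd (by simpa using h)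
    exact mul_pos_of_neg_of_neg (by linarith) (inv_lt_zero.mpr (sub_neg.mpr (hg h)))

open InnerProductSpace in
/-- Lanczos: a diagonal matrix with distinct entries is orthogonally similar to a Jacobi matrix
with prescribed first and last rows of the orthogonal matrix. -/
theorem lanczos_s17 {n : ℕ} (g : Fin (n + 1) → ℝ) (hg : Function.Injective g)
    (v t : Fin (n + 1) → ℝ) (hv : ∀ j, v j ≠ 0) (hv1 : ∑ j, v j ^ 2 = 1)
    (ht1 : ∑ j, t j ^ 2 = 1)
    (hort : ∀ k, k < n → ∑ j, t j * (g j ^ k * v j) = 0) :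
    ∃ V : Matrix (Fin (n + 1)) (Fin (n + 1)) ℝ, V * Vᵀ = 1 ∧
      (∀ j, V 0 j ^ 2 = v j ^ 2) ∧ (∀ j, V (Fin.last n) j ^ 2 = t j ^ 2) ∧
      (∀ k l : Fin (n + 1), k.val + 1 < l.val → (V * diagonal g * Vᵀ) k l = 0) ∧
      (∀ k : Fin n, (V * diagonal g * Vᵀ) k.castSucc k.succ ≠ 0) := by
  classical
  let f : ℕ → EuclideanSpace ℝ (Fin (n + 1)) := fun k => WithLp.toLp 2 (fun j => g j ^ k * v j)
  let D : EuclideanSpace ℝ (Fin (n + 1)) →ₗ[ℝ] EuclideanSpace ℝ (Fin (n + 1)) :=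
    { toFun := fun x => WithLp.toLp 2 (fun j => g j * x j)
      map_add' := by intro x y; ext j; simp [mul_add]
      map_smul' := by intro c x; ext j; simp; ring }
  have hDf : ∀ k, D (f k) = f (k + 1) := by
    intro k; ext j; simp [D, f, pow_succ]; ring
  have hin : ∀ x y : EuclideanSpace ℝ (Fin (n + 1)), inner ℝ x y = ∑ j, x j * y j := by
    intro x y
    simp [PiLp.inner_apply, mul_comm]
  have hDs : ∀ x y : EuclideanSpace ℝ (Fin (n + 1)), inner ℝ x (D y) = ∑ j, g j * x j * y j := by
    intro x y
    rw [hin]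
    refine Finset.sum_congr rfl fun j _ => ?_
    simp [D]; ring
  have hli : LinearIndependent ℝ (fun k : Fin (n + 1) => f k) := by
    rw [Fintype.linearIndependent_iff]
    intro c hc
    have h1 : (Matrix.vandermonde g) *ᵥ c = 0 := by
      ext j
      have h2 := congrArg (fun x : EuclideanSpace ℝ (Fin (n + 1)) => x j) hc
      simp [f] at h2
      simp only [Matrix.mulVec, dotProduct, Matrix.vandermonde_apply, Pi.zero_apply]
      apply mul_left_cancel₀ (hv j)
      rw [mul_zero, ← h2, Finset.mul_sum]
      refine Finset.sum_congr rfl fun k _ => by ring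
    have := Matrix.eq_zero_of_mulVec_eq_zero (Matrix.det_vandermonde_ne_zero_iff.mpr hg) h1
    exact fun i => congrFun this i
  let e : ℕ → EuclideanSpace ℝ (Fin (n + 1)) := gramSchmidtNormed ℝ f
  have hnorm : ∀ k, k ≤ n → ‖e k‖ = 1 := by
    intro k hk
    apply gramSchmidtNormed_unit_length_coe
    exact hli.comp (fun i : Set.Iic k => (⟨i.1, by have := Set.mem_Iic.mp i.2; omega⟩ : Fin (n+1)))
      (by intro a b h; simpa [Subtype.ext_iff] using h)
  have horth : ∀ a b, a ≠ b → inner ℝ (e a) (e b) = 0 := by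
    intro a b hab
    simp only [e, gramSchmidtNormed, inner_smul_left, inner_smul_right,
      gramSchmidt_orthogonal ℝ f hab, mul_zero]
  have hself : ∀ k, k ≤ n → inner ℝ (e k) (e k) = (1 : ℝ) := by
    intro k hk
    rw [real_inner_self_eq_norm_sq, hnorm k hk, one_pow]
  let S : ℕ → Submodule ℝ (EuclideanSpace ℝ (Fin (n + 1))) := fun k => Submodule.span ℝ (f '' Set.Iic k)
  have hSe : ∀ k, S k = Submodule.span ℝ (e '' Set.Iic k) := by
    intro k
    rw [span_gramSchmidtNormed, span_gramSchmidt_Iic]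
  have hmono : ∀ a b, a ≤ b → S a ≤ S b := fun a b hab =>
    Submodule.span_mono (Set.image_mono (Set.Iic_subset_Iic.mpr hab))
  have heS : ∀ k, e k ∈ S k := by
    intro k; rw [hSe]; exact Submodule.subset_span ⟨k, by simp, rfl⟩
  have hDS : ∀ k x, x ∈ S k → D x ∈ S (k + 1) := by
    intro k x hx
    have : S k ≤ (S (k + 1)).comap D := by
      refine Submodule.span_le.mpr ?_
      rintro _ ⟨i, hi, rfl⟩
      simp only [SetLike.mem_coe, Submodule.mem_comap, hDf]
      exact Submodule.subset_span ⟨i + 1, by simp at hi ⊢; omega, rfl⟩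
    exact this hx
  have hperp : ∀ k l x, k < l → x ∈ S k → inner ℝ (e l) x = 0 := by
    intro k l x hkl hx
    rw [hSe] at hx
    induction hx using Submodule.span_induction with
    | mem x h =>
      obtain ⟨i, hi, rfl⟩ := h
      simp at hi
      exact horth _ _ (by omega)
    | zero => simp
    | add x y _ _ hx hy => rw [inner_add_right, hx, hy, add_zero]
    | smul a x _ hx => rw [inner_smul_right, hx, mul_zero]
  have htri : ∀ k l, k + 1 < l → inner ℝ (e l) (D (e k)) = (0 : ℝ) := fun k l hkl =>
    hperp (k + 1) l _ hkl (hDS k _ (heS k))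
  have hnz : ∀ k, k < n → inner ℝ (e (k + 1)) (D (e k)) ≠ (0 : ℝ) := by
    intro k hk h0
    have h1 : D (e k) ∈ S k := by
      have h2 := hDS k _ (heS k)
      rw [hSe] at h2
      have h3 : Set.Iic (k + 1) = insert (k + 1) (Set.Iic k) := by
        ext i; simp; omega
      rw [h3, Set.image_insert_eq, Submodule.mem_span_insert] at h2
      obtain ⟨c, z, hz, hc⟩ := h2
      rw [← hSe] at hz
      rw [hc, inner_add_right, inner_smul_right, hself _ hk, hperp k _ z (by omega) hz] at h0
      have : c = 0 := by simpa using h0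
      rw [hc, this]; simpa using hz
    have h2 : ∀ x ∈ S k, D x ∈ S k := by
      intro x hx
      have : S k ≤ (S k).comap D := by
        conv_lhs => rw [hSe]
        refine Submodule.span_le.mpr ?_
        rintro _ ⟨i, hi, rfl⟩
        simp only [SetLike.mem_coe, Submodule.mem_comap]
        simp at hi
        rcases Nat.lt_or_ge i k with hik | hik
        · exact hmono (i + 1) k hik (hDS i _ (heS i))
        · have : i = k := by omega
          rw [this]; exact h1
      exact this hx
    have h3 : f (k + 1) ∈ S k := by
      rw [← hDf]; exact h2 _ (Submodule.subset_span ⟨k, by simp, rfl⟩)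
    have h4 : S (k + 1) ≤ S k := by
      refine Submodule.span_le.mpr ?_
      rintro _ ⟨i, hi, rfl⟩
      simp at hi
      rcases Nat.lt_or_ge k i with hik | hik
      · have : i = k + 1 := by omega
        rw [this]; exact h3
      · exact Submodule.subset_span ⟨i, by simpa using hik, rfl⟩
    have h5 := hperp k (k + 1) _ (by omega) (h4 (heS (k + 1)))
    rw [hself _ hk] at h5
    exact one_ne_zero h5
  let V : Matrix (Fin (n + 1)) (Fin (n + 1)) ℝ := Matrix.of fun k j => e k j
  have hVV : V * Vᵀ = 1 := by
    ext k l
    rw [Matrix.mul_apply, Matrix.one_apply]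
    simp only [Matrix.transpose_apply, V, Matrix.of_apply]
    rw [← hin]
    split_ifs with h
    · rw [h]; exact hself _ (by omega)
    · exact horth _ _ (by simpa [Fin.ext_iff] using h)
  have hJ : ∀ k l, (V * diagonal g * Vᵀ) k l = inner ℝ (e l) (D (e k)) := by
    intro k l
    rw [hDs, Matrix.mul_apply]
    refine Finset.sum_congr rfl fun j _ => ?_
    simp [V]; ring
  refine ⟨V, hVV, ?_, ?_, ?_, ?_⟩
  · intro j
    have h1 : e 0 = f 0 := by
      have h0 : gramSchmidt ℝ f 0 = f 0 := gramSchmidt_bot ℝ f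
      have h2 : ‖f 0‖ = 1 := by
        rw [EuclideanSpace.norm_eq]
        simp [f, hv1]
      simp only [e, gramSchmidtNormed, h0, h2]
      simp
    simp [V, h1, f]
  · have hVV' : Vᵀ * V = 1 := mul_eq_one_comm.mp hVV
    have h1 : ∀ k : Fin (n + 1), k ≠ Fin.last n → (V *ᵥ t) k = 0 := by
      intro k hk
      have hk' : k.val < n := by
        have := Fin.val_lt_last hk; exact this
      have h2 : ∀ x ∈ S k, inner ℝ x (WithLp.toLp 2 t : EuclideanSpace ℝ (Fin (n + 1))) = 0 := by
        intro x hx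
        induction hx using Submodule.span_induction with
        | mem x h =>
          obtain ⟨i, hi, rfl⟩ := h
          simp at hi
          rw [hin, ← hort i (by omega)]
          refine Finset.sum_congr rfl fun j _ => by simp [f]; ring
        | zero => simp
        | add x y _ _ hx hy => rw [inner_add_left, hx, hy, add_zero]
        | smul a x _ hx => rw [inner_smul_left, hx, mul_zero]
      have h3 := h2 _ (heS k)
      rw [hin] at h3
      simpa [Matrix.mulVec, dotProduct, V] using h3
    set c := (V *ᵥ t) (Fin.last n) with hc
    have h2 : ∀ j, t j = V (Fin.last n) j * c := by
      intro j
      have h3 : t = Vᵀ *ᵥ (V *ᵥ t) := by rw [Matrix.mulVec_mulVec, hVV', Matrix.one_mulVec]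
      conv_lhs => rw [h3]
      rw [Matrix.mulVec, dotProduct, Finset.sum_eq_single (Fin.last n)]
      · simp [hc]
      · intro b _ hb; rw [h1 b hb, mul_zero]
      · simp
    have h3 : ∑ j, V (Fin.last n) j ^ 2 = 1 := by
      have := hself n le_rfl
      rw [hin] at this
      rw [← this]
      refine Finset.sum_congr rfl fun j _ => by simp [V]; ring
    have h4 : c ^ 2 = 1 := by
      rw [← ht1]
      have : ∀ j, t j ^ 2 = V (Fin.last n) j ^ 2 * c ^ 2 := by
        intro j; rw [h2 j]; ring
      rw [Finset.sum_congr rfl (fun j _ => this j), ← Finset.sum_mul, h3, one_mul]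
    intro j
    rw [h2 j, mul_pow, h4, mul_one]
  · intro k l hkl
    rw [hJ]; exact htri _ _ hkl
  · intro k
    rw [hJ]
    have := hnz k.val k.2
    simpa using this


theorem sum_ite_val {N : ℕ} (F : Fin N → ℝ) (q : ℕ) :
    ∑ l : Fin N, (if l.val = q then F l else 0) = if h : q < N then F ⟨q, h⟩ else 0 := by
  split_ifs with h
  · rw [Finset.sum_eq_single ⟨q, h⟩]
    · simp
    · intro b _ hb
      rw [if_neg]; intro h'; exact hb (Fin.ext h')
    · simp
  · apply Finset.sum_eq_zero
    intro l _
    rw [if_neg]; have := l.2; omega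

noncomputable def pathA {n : ℕ} (J : Matrix (Fin (n + 1)) (Fin (n + 1)) ℝ) (a : ℝ) (p : ℕ) : ℝ :=
  if h : 1 ≤ p ∧ p ≤ n + 1 then J ⟨p - 1, by omega⟩ ⟨p - 1, by omega⟩ else a

noncomputable def pathB {n : ℕ} (J : Matrix (Fin (n + 1)) (Fin (n + 1)) ℝ) (b : ℝ) (p : ℕ) : ℝ :=
  if h : 1 ≤ p ∧ p ≤ n then J ⟨p - 1, by omega⟩ ⟨p, by omega⟩ else b

noncomputable def pathX {n : ℕ} (z : Fin (n + 1) → ℝ) (L R : ℝ) (p : ℕ) : ℝ :=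
  if p = 0 then L else if h : p ≤ n + 1 then z ⟨p - 1, by omega⟩ else R

theorem path_rec {n : ℕ} (J : Matrix (Fin (n + 1)) (Fin (n + 1)) ℝ) (hs : J.IsSymm)
    (ht : ∀ k l : Fin (n + 1), k.val + 1 < l.val → J k l = 0) (a b : ℝ)
    (z : Fin (n + 1) → ℝ) (L R : ℝ) (p : ℕ) (hp : p < n + 1) :
    pathB J b p * pathX z L R p + pathA J a (p + 1) * pathX z L R (p + 1)
      + pathB J b (p + 1) * pathX z L R (p + 2) =
    (J *ᵥ z) ⟨p, hp⟩ + (if p = 0 then b * L else 0) + (if p = n then b * R else 0) := by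
  have hsum : (J *ᵥ z) ⟨p, hp⟩ =
      (∑ l : Fin (n + 1), if l.val + 1 = p then J ⟨p, hp⟩ l * z l else 0) +
      (∑ l : Fin (n + 1), if l.val = p then J ⟨p, hp⟩ l * z l else 0) +
      (∑ l : Fin (n + 1), if l.val = p + 1 then J ⟨p, hp⟩ l * z l else 0) := by
    rw [Matrix.mulVec, dotProduct, ← Finset.sum_add_distrib, ← Finset.sum_add_distrib]
    refine Finset.sum_congr rfl fun l _ => ?_
    by_cases h1 : l.val + 1 = p
    · rw [if_pos h1, if_neg (by omega), if_neg (by omega)]; ring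
    by_cases h2 : l.val = p
    · rw [if_neg h1, if_pos h2, if_neg (by omega)]; ring
    by_cases h3 : l.val = p + 1
    · rw [if_neg h1, if_neg h2, if_pos h3]; ring
    rw [if_neg h1, if_neg h2, if_neg h3]
    have : J ⟨p, hp⟩ l = 0 := by
      rcases Nat.lt_or_ge l.val p with h | h
      · rw [← hs.apply]; exact ht _ _ (by simp only; omega)
      · exact ht _ _ (by simp only; omega)
    rw [this]; ring
  have hA : pathA J a (p + 1) = J ⟨p, hp⟩ ⟨p, hp⟩ := by
    rw [pathA, dif_pos (by omega)]; simp
  have hX : pathX z L R (p + 1) = z ⟨p, hp⟩ := by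
    rw [pathX, if_neg (by omega), dif_pos (by omega)]; simp
  rw [hsum, sum_ite_val, sum_ite_val, dif_pos hp, hA, hX]
  have h3 : pathB J b (p + 1) * pathX z L R (p + 2) =
      (if h : p + 1 < n + 1 then J ⟨p, hp⟩ ⟨p + 1, h⟩ * z ⟨p + 1, h⟩ else 0) +
      (if p = n then b * R else 0) := by
    by_cases h : p = n
    · rw [pathB, dif_neg (by omega), pathX, if_neg (by omega), dif_neg (by omega),
        dif_neg (by omega), if_pos h, zero_add]
    · rw [pathB, dif_pos (by omega), pathX, if_neg (by omega), dif_pos (by omega),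
        dif_pos (by omega), if_neg h, add_zero]
      simp
  have h4 : pathB J b p * pathX z L R p =
      (∑ l : Fin (n + 1), if l.val + 1 = p then J ⟨p, hp⟩ l * z l else 0) +
      (if p = 0 then b * L else 0) := by
    cases p with
    | zero => simp [pathB, pathX]
    | succ q =>
      simp only [Nat.add_right_cancel_iff]
      rw [sum_ite_val, dif_pos (by omega), pathB, dif_pos (by omega), pathX, if_neg (by omega),
        dif_pos (by omega), if_neg (by omega), add_zero]
      rw [← hs.apply]
      simp
  rw [h3, h4]; ring

theorem exists_level {n : ℕ} (d : Fin (n + 2) → ℝ) (hd : StrictMono d) :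
    ∃ (c : ℝ) (g : Fin (n + 1) → ℝ), 0 < c ∧
      (∀ j, d j.castSucc < g j ∧ g j < d j.succ) ∧ ∀ j, |∏ l, (g j - d l)| = c := by
  let F : ℝ → ℝ := fun x => |∏ l, (x - d l)|
  have hF : Continuous F := by fun_prop
  let mid : Fin (n + 1) → ℝ := fun j => (d j.castSucc + d j.succ) / 2
  have hlt : ∀ j : Fin (n + 1), d j.castSucc < d j.succ := fun j => hd (Fin.castSucc_lt_succ)
  have hpos : ∀ j, 0 < F (mid j) := by
    intro j
    apply abs_pos.mpr
    rw [Finset.prod_ne_zero_iff]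
    intro l _
    have := hlt j
    rcases le_or_gt l j.castSucc with h | h
    · have := hd.monotone h
      simp only [mid]; intro h0; linarith
    · have := hd.monotone (Fin.castSucc_lt_iff_succ_le.mp h)
      simp only [mid]; intro h0; linarith
  obtain ⟨j0, -, hj0⟩ := Finset.exists_min_image Finset.univ (fun j => F (mid j)) ⟨0, by simp⟩
  have : ∀ j : Fin (n + 1), ∃ x : ℝ, (d j.castSucc < x ∧ x < d j.succ) ∧ F x = F (mid j0) := by
    intro j
    have h0 : F (d j.castSucc) = 0 := by
      simp only [F, abs_eq_zero]
      exact Finset.prod_eq_zero (Finset.mem_univ j.castSucc) (by simp)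
    have hle : d j.castSucc ≤ mid j := by have := hlt j; simp only [mid]; linarith
    have hmem : F (mid j0) ∈ Set.Icc (F (d j.castSucc)) (F (mid j)) :=
      ⟨by rw [h0]; exact (hpos j0).le, hj0 j (Finset.mem_univ j)⟩
    obtain ⟨x, hx, hxe⟩ := intermediate_value_Icc hle hF.continuousOn hmem
    refine ⟨x, ⟨lt_of_le_of_ne hx.1 ?_, lt_of_le_of_lt hx.2 ?_⟩, hxe⟩
    · rintro rfl
      have := hpos j0
      rw [← hxe, h0] at this
      exact lt_irrefl _ this
    · have := hlt j; simp only [mid]; linarith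
  choose g hg hgc using this
  exact ⟨F (mid j0), g, hpos j0, hg, hgc⟩

theorem path_data {n : ℕ} (d : Fin (n + 2) → ℝ) (hd : StrictMono d) :
    ∃ α β : ℕ → ℝ, (∀ p, p < n + 2 → β p ≠ 0) ∧ ∀ i, ∃ x x' : ℕ → ℝ,
      (x 0 = 1 ∧ x (n + 2) = 0 ∧ α 0 + 2 * β 0 * x 1 = d i ∧
        ∀ p, p < n + 1 → β p * x p + α (p + 1) * x (p + 1) + β (p + 1) * x (p + 2)
          = d i * x (p + 1)) ∧
      (x' 0 = 0 ∧ x' (n + 2) = 1 ∧ α (n + 2) + 2 * β (n + 1) * x' (n + 1) = d i ∧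
        ∀ p, p < n + 1 → β p * x' p + α (p + 1) * x' (p + 1) + β (p + 1) * x' (p + 2)
          = d i * x' (p + 1)) := by
  classical
  obtain ⟨c, g, hc, hgi, hgc⟩ := exists_level d hd
  have hg : StrictMono g := by
    intro a b hab
    exact (hgi a).2.trans_le
      ((hd.monotone (Fin.succ_le_castSucc_iff.mpr hab)).trans (hgi b).1.le)
  have hne : ∀ i j, d i ≠ g j := by
    intro i j h
    have h1 := (hgi j).1
    have h2 := (hgi j).2
    rw [← h] at h1 h2
    have h1' := hd.lt_iff_lt.mp h1
    have h2' := hd.lt_iff_lt.mp h2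
    exact absurd (Fin.castSucc_lt_iff_succ_le.mp h1') (not_le.mpr h2')
  obtain ⟨a, ha⟩ := partial_fractions d g hg hne
  have hWpos := weight_pos d g hd (fun j => (hgi j).1) (fun j => (hgi j).2)
  set f : Fin (n + 1) → ℝ := fun j => ∏ l, (g j - d l) with hf
  set ω : Fin (n + 1) → ℝ := fun j => Lagrange.nodalWeight Finset.univ g j with hω
  set W : Fin (n + 1) → ℝ := fun j => -f j * ω j with hW
  set T : ℝ := ∑ j, W j with hT
  have hTpos : 0 < T := Finset.sum_pos (fun j _ => hWpos j) ⟨0, by simp⟩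
  have hwpos : ∀ j, 0 < W j / T := fun j => div_pos (hWpos j) hTpos
  have hsq : ∀ j, √(W j / T) ^ 2 = W j / T := fun j => Real.sq_sqrt (hwpos j).le
  have hfc : ∀ j, f j ^ 2 = c ^ 2 := by
    intro j; rw [← hgc j, sq_abs]
  have hsum1 : ∑ j, W j / T = 1 := by
    rw [← Finset.sum_div]; exact div_self hTpos.ne'
  have htsq : ∀ j, (f j / c * √(W j / T)) ^ 2 = W j / T := by
    intro j
    rw [mul_pow, div_pow, hfc, div_self (pow_ne_zero 2 hc.ne'), one_mul, hsq]
  have hort : ∀ k, k < n → ∑ j, (f j / c * √(W j / T)) * (g j ^ k * √(W j / T)) = 0 := by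
    intro k hk
    have h1 := Lagrange.coeff_eq_sum (s := Finset.univ) (v := g) hg.injective.injOn
      (P := (Polynomial.X ^ k : Polynomial ℝ)) (by
        rw [Polynomial.degree_X_pow, Finset.card_univ, Fintype.card_fin]
        exact_mod_cast (by omega : k < n + 1))
    rw [Finset.card_univ, Fintype.card_fin, Polynomial.coeff_X_pow, if_neg (by omega)] at h1
    have h2 : ∀ j, (f j / c * √(W j / T)) * (g j ^ k * √(W j / T)) =
        -(c / T) * ((Polynomial.X ^ k : Polynomial ℝ).eval (g j) /
          ∏ l ∈ Finset.univ.erase j, (g j - g l)) := by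
      intro j
      have : (f j / c * √(W j / T)) * (g j ^ k * √(W j / T)) =
        f j / c * g j ^ k * √(W j / T) ^ 2 := by ring
      rw [this, hsq]
      have h3 : W j = -f j * (∏ l ∈ Finset.univ.erase j, (g j - g l))⁻¹ := by
        simp only [hW, hω, Lagrange.nodalWeight, Finset.prod_inv_distrib]
      rw [h3, Polynomial.eval_pow, Polynomial.eval_X]
      have h4 : f j / c * g j ^ k * (-f j * (∏ l ∈ Finset.univ.erase j, (g j - g l))⁻¹ / T) =
        - (f j ^ 2) / c / T * (g j ^ k * (∏ l ∈ Finset.univ.erase j, (g j - g l))⁻¹) := by ring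
      rw [h4, hfc]
      field_simp
    rw [Finset.sum_congr rfl (fun j _ => h2 j), ← Finset.mul_sum, ← h1, mul_zero]
  obtain ⟨V, hVV, hV0, hVl, hJ0, hJ1⟩ := lanczos_s17 g hg.injective (fun j => √(W j / T))
    (fun j => f j / c * √(W j / T)) (fun j => (Real.sqrt_pos.mpr (hwpos j)).ne')
    (by rw [Finset.sum_congr rfl (fun j _ => hsq j), hsum1])
    (by rw [Finset.sum_congr rfl (fun j _ => htsq j), hsum1]) hort
  set J := V * diagonal g * Vᵀ with hJ
  have hJs : J.IsSymm := by
    rw [Matrix.IsSymm, hJ]; simp [Matrix.transpose_mul, Matrix.mul_assoc]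
  have hVV' : Vᵀ * V = 1 := mul_eq_one_comm.mp hVV
  set b : ℝ := √(T / 2) with hb
  have hbpos : 0 < b := Real.sqrt_pos.mpr (by positivity)
  have hb2 : 2 * b ^ 2 = T := by rw [hb, Real.sq_sqrt (by positivity)]; ring
  refine ⟨pathA J a, pathB J b, ?_, ?_⟩
  · intro p hp
    unfold pathB
    split_ifs with h
    · have := hJ1 ⟨p - 1, by omega⟩
      have e : (⟨p, by omega⟩ : Fin (n + 1)) = Fin.succ ⟨p - 1, by omega⟩ := by
        apply Fin.ext; simp only [Fin.val_succ]; omega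
      rw [e]
      exact this
    · exact hbpos.ne'
  intro i
  set R : Matrix (Fin (n + 1)) (Fin (n + 1)) ℝ :=
    V * diagonal (fun j => (d i - g j)⁻¹) * Vᵀ with hR
  have hJR : J * R = d i • R - 1 := by
    have h1 : J * R = V * (diagonal g * diagonal (fun j => (d i - g j)⁻¹)) * Vᵀ := by
      calc J * R = V * diagonal g * (Vᵀ * V) * diagonal (fun j => (d i - g j)⁻¹) * Vᵀ := by
            simp only [hJ, hR, Matrix.mul_assoc]
        _ = _ := by rw [hVV', Matrix.mul_one, Matrix.mul_assoc V]
    have h2 : diagonal g * diagonal (fun j => (d i - g j)⁻¹) =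
        d i • diagonal (fun j => (d i - g j)⁻¹) - 1 := by
      rw [Matrix.diagonal_mul_diagonal, ← Matrix.diagonal_smul, ← Matrix.diagonal_one,
        Matrix.diagonal_sub]
      congr 1
      funext j
      have : d i - g j ≠ 0 := sub_ne_zero.mpr (hne i j)
      simp only [Pi.smul_apply, smul_eq_mul]
      field_simp
      ring
    rw [h1, h2, Matrix.mul_sub, Matrix.sub_mul, Matrix.mul_one, hVV, Matrix.mul_smul,
      Matrix.smul_mul]
  have hRss : ∀ s, (∀ j, V s j ^ 2 = W j / T) → a + 2 * b * (b * R s s) = d i := by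
    intro s hs
    have h1 : R s s = ∑ j, (W j / T) / (d i - g j) := by
      rw [hR, Matrix.mul_apply]
      refine Finset.sum_congr rfl fun j _ => ?_
      rw [← hs j, Matrix.mul_diagonal, Matrix.transpose_apply]
      ring
    have h2 : 2 * b * (b * R s s) = T * R s s := by rw [← hb2]; ring
    have h3 : T * R s s = d i - a := by
      rw [ha i, h1, Finset.mul_sum]
      refine Finset.sum_congr rfl fun j _ => ?_
      have : d i - g j ≠ 0 := sub_ne_zero.mpr (hne i j)
      change _ = W j / (d i - g j)
      field_simp
    rw [h2, h3]; ring
  have hrow : ∀ s p : Fin (n + 1), (J *ᵥ (fun k => b * R k s)) p =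
      d i * (b * R p s) - (if p = s then b else 0) := by
    intro s p
    have h1 := congrFun (congrFun hJR p) s
    rw [Matrix.mul_apply, Matrix.sub_apply, Matrix.smul_apply, Matrix.one_apply] at h1
    have h2 : (J *ᵥ (fun k => b * R k s)) p = b * ∑ j, J p j * R j s := by
      rw [Matrix.mulVec, dotProduct, Finset.mul_sum]
      refine Finset.sum_congr rfl fun j _ => by ring
    rw [h2, h1, smul_eq_mul]
    split_ifs <;> ring
  refine ⟨pathX (fun k => b * R k 0) 1 0, pathX (fun k => b * R k (Fin.last n)) 0 1,
    ⟨?_, ?_, ?_, ?_⟩, ⟨?_, ?_, ?_, ?_⟩⟩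
  · simp [pathX]
  · simp [pathX]
  · have := hRss 0 (fun j => by rw [hV0, hsq])
    simpa [pathX, pathA, pathB] using this
  · intro p hp
    rw [path_rec J hJs hJ0 a b _ _ _ p hp, hrow]
    have h1 : pathX (fun k => b * R k 0) 1 0 (p + 1) = b * R ⟨p, hp⟩ 0 := by
      rw [pathX, if_neg (by omega), dif_pos (by omega)]; simp
    rw [h1]
    simp [Fin.ext_iff]
  · simp [pathX]
  · simp [pathX]
  · have := hRss (Fin.last n) (fun j => by rw [hVl, htsq])
    simpa [pathX, pathA, pathB, Fin.last] using this
  · intro p hp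
    rw [path_rec J hJs hJ0 a b _ _ _ p hp, hrow]
    have h1 : pathX (fun k => b * R k (Fin.last n)) 0 1 (p + 1) = b * R ⟨p, hp⟩ (Fin.last n) := by
      rw [pathX, if_neg (by omega), dif_pos (by omega)]; simp
    rw [h1]
    simp [Fin.ext_iff]


theorem cyc_ne {t : ℕ} (v : Fin (t + 3)) : v - 1 ≠ v ∧ v + 1 ≠ v ∧ v - 1 ≠ v + 1 := by
  have h1 : (1 : Fin (t + 3)) ≠ 0 := by simp [Fin.ext_iff]
  have h2 : (1 : Fin (t + 3)) + 1 ≠ 0 := by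
    intro h
    have := congrArg Fin.val h
    rw [Fin.val_add] at this
    have h3 : (1 : Fin (t + 3)).val = 1 := rfl
    rw [h3, Nat.mod_eq_of_lt (by omega)] at this
    simp at this
  refine ⟨?_, ?_, ?_⟩
  · intro h; simp at h
  · intro h; simp at h
  · intro h; apply h2
    rw [sub_eq_iff_eq_add, add_assoc] at h
    simpa using h.symm

theorem cyc_mulVec {t : ℕ} (B : Matrix (Fin (t + 3)) (Fin (t + 3)) ℝ)
    (hB : inS (SimpleGraph.cycleGraph (t + 3)) B) (x : Fin (t + 3) → ℝ) (v : Fin (t + 3)) :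
    (B *ᵥ x) v = B v (v - 1) * x (v - 1) + B v v * x v + B v (v + 1) * x (v + 1) := by
  obtain ⟨h1, h2, h3⟩ := cyc_ne v
  have : (B *ᵥ x) v = ∑ w ∈ ({v - 1, v, v + 1} : Finset (Fin (t + 3))), B v w * x w := by
    rw [Matrix.mulVec, dotProduct]
    symm
    apply Finset.sum_subset (Finset.subset_univ _)
    intro w _ hw
    simp only [Finset.mem_insert, Finset.mem_singleton, not_or] at hw
    have h0 : B v w = 0 := by
      by_contra hne
      have := (hB.2 v w (fun h => hw.2.1 h.symm)).mp hne
      rw [SimpleGraph.cycleGraph_adj] at this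
      rcases this with h | h
      · exact hw.1 (by rw [← h]; simp)
      · exact hw.2.2 (by rw [← h]; simp)
    rw [h0, zero_mul]
  rw [this, Finset.sum_insert (by simp [h1, h3]), Finset.sum_insert (by simpa using h2.symm),
    Finset.sum_singleton]
  ring

theorem cyc_adj_succ {t : ℕ} (B : Matrix (Fin (t + 3)) (Fin (t + 3)) ℝ)
    (hB : inS (SimpleGraph.cycleGraph (t + 3)) B) (v : Fin (t + 3)) : B v (v + 1) ≠ 0 := by
  obtain ⟨h1, h2, h3⟩ := cyc_ne v
  rw [hB.2 v (v + 1) h2.symm, SimpleGraph.cycleGraph_adj]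
  right; simp

theorem cyc_propagate {t : ℕ} (B : Matrix (Fin (t + 3)) (Fin (t + 3)) ℝ)
    (hB : inS (SimpleGraph.cycleGraph (t + 3)) B) (x : Fin (t + 3) → ℝ) (ν : ℝ)
    (hx : B *ᵥ x = ν • x) (v : Fin (t + 3)) (h0 : x v = 0) (h1 : x (v + 1) = 0) : x = 0 := by
  have key : ∀ j : Fin (t + 3), x (v + j) = 0 ∧ x (v + j + 1) = 0 := by
    intro j
    induction j using Fin.induction with
    | zero => simp [h0, h1]
    | succ j ih =>
      rw [← Fin.coeSucc_eq_succ, ← add_assoc]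
      refine ⟨ih.2, ?_⟩
      have h := congrFun hx (v + j.castSucc + 1)
      rw [cyc_mulVec B hB] at h
      simp only [add_sub_cancel_right, Pi.smul_apply, smul_eq_mul, ih.1, ih.2, mul_zero,
        zero_add] at h
      exact (mul_eq_zero.mp h).resolve_left (cyc_adj_succ B hB _)
  funext w
  have := (key (w - v)).1
  simpa using this

noncomputable def cycA (n : ℕ) (α : ℕ → ℝ) (p : ℕ) : ℝ :=
  if p ≤ n + 2 then α p else α (2 * (n + 2) - p)

noncomputable def cycB (n : ℕ) (β : ℕ → ℝ) (p : ℕ) : ℝ :=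
  if p < n + 2 then β p else if p = n + 2 then - β (n + 1) else β (2 * (n + 2) - 1 - p)

noncomputable def cycX (n : ℕ) (s : ℝ) (x : ℕ → ℝ) (p : ℕ) : ℝ :=
  if p ≤ n + 2 then x p else s * x (2 * (n + 2) - p)

noncomputable def cycM (n : ℕ) (α β : ℕ → ℝ) :
    Matrix (Fin (2 * n + 1 + 3)) (Fin (2 * n + 1 + 3)) ℝ := fun v w =>
  if v = w then cycA n α v.val else if w = v + 1 then cycB n β v.val
    else if v = w + 1 then cycB n β w.val else 0

theorem cycM_inS (n : ℕ) (α β : ℕ → ℝ) (hβ : ∀ p, p < n + 2 → β p ≠ 0) :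
    inS (SimpleGraph.cycleGraph (2 * n + 1 + 3)) (cycM n α β) := by
  have hb : ∀ v : Fin (2 * n + 1 + 3), cycB n β v.val ≠ 0 := by
    intro v
    have := v.isLt
    unfold cycB
    split_ifs with h1 h2
    · exact hβ _ h1
    · exact neg_ne_zero.mpr (hβ _ (by omega))
    · exact hβ _ (by omega)
  constructor
  · ext v w
    rw [Matrix.transpose_apply]
    unfold cycM
    by_cases h : v = w
    · subst h; rfl
    · rw [if_neg h, if_neg (Ne.symm h)]
      by_cases h1 : w = v + 1
      · have h2 : v ≠ w + 1 := by
          rintro h2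
          apply (cyc_ne w).2.2
          rw [← h2, h1]; simp
        rw [if_neg h2, if_pos h1, if_pos h1]
      · rw [if_neg h1, if_neg h1]
  · intro v w h
    rw [SimpleGraph.cycleGraph_adj]
    unfold cycM
    rw [if_neg h]
    by_cases h1 : w = v + 1
    · rw [if_pos h1]
      refine iff_of_true (hb _) (Or.inr (by rw [h1]; simp))
    · rw [if_neg h1]
      by_cases h2 : v = w + 1
      · rw [if_pos h2]
        refine iff_of_true (hb _) (Or.inl (by rw [h2]; simp))
      · rw [if_neg h2]
        refine iff_of_false (by simp) ?_
        rintro (h3 | h3)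
        · exact h2 (by rw [← h3]; simp)
        · exact h1 (by rw [← h3]; simp)

theorem cycM_eig (n : ℕ) (α β : ℕ → ℝ) (hβ : ∀ p, p < n + 2 → β p ≠ 0) (s : ℝ) (x : ℕ → ℝ) (ν : ℝ)
    (hper : s * x 0 = x 0) 
    (hmid : β (n + 1) * x (n + 1) + α (n + 2) * x (n + 2) - β (n + 1) * (s * x (n + 1)) =
      ν * x (n + 2)) (hsx : s * x (n + 2) = - x (n + 2))
    (h0 : β 0 * (s * x 1) + α 0 * x 0 + β 0 * x 1 = ν * x 0)
    (hrec : ∀ p, p < n + 1 → β p * x p + α (p + 1) * x (p + 1) + β (p + 1) * x (p + 2)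
          = ν * x (p + 1)) :
    cycM n α β *ᵥ (fun v => cycX n s x v.val) = ν • (fun v => cycX n s x v.val) := by
  have hS := cycM_inS n α β hβ
  funext v
  rw [cyc_mulVec _ hS]
  obtain ⟨c1, c2, c3⟩ := cyc_ne v
  have e1 : cycM n α β v v = cycA n α v.val := by simp [cycM]
  have e2 : cycM n α β v (v + 1) = cycB n β v.val := by simp [cycM, c2.symm]
  have e3 : cycM n α β v (v - 1) = cycB n β (v - 1).val := by
    unfold cycM
    rw [if_neg c1.symm, if_neg c3, if_pos (by simp)]
  rw [e1, e2, e3]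
  simp only [Pi.smul_apply, smul_eq_mul]
  have key : ∀ p, p < 2 * n + 3 → cycB n β p * cycX n s x p + cycA n α (p + 1) * cycX n s x (p + 1)
      + cycB n β (p + 1) * cycX n s x (p + 2) = ν * cycX n s x (p + 1) := by
    intro p hp
    rcases lt_trichotomy p (n + 1) with h | h | h
    · have := hrec p h
      simpa only [cycB, cycA, cycX, if_pos (show p < n + 2 by omega),
        if_pos (show p ≤ n + 2 by omega), if_pos (show p + 1 ≤ n + 2 by omega),
        if_pos (show p + 1 < n + 2 by omega), if_pos (show p + 2 ≤ n + 2 by omega)] using this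
    · subst h
      have f1 : cycB n β (n + 1) = β (n + 1) := by unfold cycB; rw [if_pos (by omega)]
      have f2 : cycX n s x (n + 1) = x (n + 1) := by unfold cycX; rw [if_pos (by omega)]
      have f3 : cycA n α (n + 1 + 1) = α (n + 2) := by unfold cycA; rw [if_pos (by omega)]
      have f4 : cycX n s x (n + 1 + 1) = x (n + 2) := by unfold cycX; rw [if_pos (by omega)]
      have f5 : cycB n β (n + 1 + 1) = - β (n + 1) := by
        unfold cycB; rw [if_neg (by omega), if_pos (by omega)]
      have f6 : cycX n s x (n + 1 + 2) = s * x (n + 1) := by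
        unfold cycX
        rw [if_neg (by omega), show 2 * (n + 2) - (n + 1 + 2) = n + 1 by omega]
      rw [f1, f2, f3, f4, f5, f6]
      linarith
    · obtain ⟨j, hj, rfl⟩ : ∃ j, j < n + 1 ∧ p = 2 * n + 2 - j := ⟨2 * n + 2 - p, by omega, by omega⟩
      have hr := hrec j hj
      have f1 : cycX n s x (2 * n + 2 - j + 1) = s * x (j + 1) := by
        unfold cycX
        rw [if_neg (by omega), show 2 * (n + 2) - (2 * n + 2 - j + 1) = j + 1 by omega]
      have f2 : cycX n s x (2 * n + 2 - j + 2) = s * x j := by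
        unfold cycX
        rw [if_neg (by omega), show 2 * (n + 2) - (2 * n + 2 - j + 2) = j by omega]
      have f3 : cycA n α (2 * n + 2 - j + 1) = α (j + 1) := by
        unfold cycA
        rw [if_neg (by omega), show 2 * (n + 2) - (2 * n + 2 - j + 1) = j + 1 by omega]
      have f4 : cycB n β (2 * n + 2 - j + 1) = β j := by
        unfold cycB
        rw [if_neg (by omega), if_neg (by omega),
          show 2 * (n + 2) - 1 - (2 * n + 2 - j + 1) = j by omega]
      have f5 : cycB n β (2 * n + 2 - j) * cycX n s x (2 * n + 2 - j) =
          β (j + 1) * (s * x (j + 2)) := by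
        unfold cycB cycX
        rw [if_neg (by omega)]
        by_cases hjn : j = n
        · subst hjn
          rw [if_pos (by omega), if_pos (by omega), hsx,
            show 2 * j + 2 - j = j + 2 by omega]
          ring
        · rw [if_neg (by omega), if_neg (by omega),
            show 2 * (n + 2) - 1 - (2 * n + 2 - j) = j + 1 by omega,
            show 2 * (n + 2) - (2 * n + 2 - j) = j + 2 by omega]
      rw [f1, f2, f3, f4, f5]
      linear_combination s * hr
  have hX : cycX n s x (2 * n + 4) = cycX n s x 0 := by
    unfold cycX
    rw [if_neg (by omega), if_pos (by omega), show 2 * (n + 2) - (2 * n + 4) = 0 by omega, hper]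
  have hsucc : cycX n s x (v + 1).val = cycX n s x (v.val + 1) := by
    by_cases hv : v = Fin.last _
    · subst hv
      rw [Fin.last_add_one, Fin.val_last, ← hX.symm]
      rfl
    · rw [Fin.val_add_one_of_lt (lt_of_le_of_ne (Fin.le_last _) hv)]
  rw [hsucc]
  by_cases hv : v.val = 0
  · have hv0 : v = 0 := Fin.ext hv
    subst hv0
    have h8 : ((0 : Fin (2 * n + 1 + 3)) - 1).val = 2 * n + 3 := by
      rw [Fin.sub_def]; simp
    have h9 : (0 : Fin (2 * n + 1 + 3)).val = 0 := rfl
    have f1 : cycB n β (2 * n + 3) = β 0 := by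
      unfold cycB
      rw [if_neg (by omega), if_neg (by omega), show 2 * (n + 2) - 1 - (2 * n + 3) = 0 by omega]
    have f2 : cycX n s x (2 * n + 3) = s * x 1 := by
      unfold cycX
      rw [if_neg (by omega), show 2 * (n + 2) - (2 * n + 3) = 1 by omega]
    have f3 : cycA n α 0 = α 0 := by unfold cycA; rw [if_pos (by omega)]
    have f4 : cycX n s x 0 = x 0 := by unfold cycX; rw [if_pos (by omega)]
    have f5 : cycB n β 0 = β 0 := by unfold cycB; rw [if_pos (by omega)]
    have f6 : cycX n s x (0 + 1) = x 1 := by unfold cycX; rw [if_pos (by omega)]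
    rw [h8, h9, f1, f2, f3, f4, f5, f6]
    exact h0
  · have hv' := v.isLt
    have hpred : (v - 1).val = v.val - 1 := by
      rw [Fin.sub_val_of_le]
      · rfl
      · rw [Fin.le_def]; simp; omega
    have := key (v.val - 1) (by omega)
    rw [hpred]
    rw [show v.val - 1 + 1 = v.val by omega, show v.val - 1 + 2 = v.val + 1 by omega] at this
    exact this

theorem cycle_data {n : ℕ} (d : Fin (n + 2) → ℝ) (hd : StrictMono d) :
    ∃ B : Matrix (Fin (2 * n + 1 + 3)) (Fin (2 * n + 1 + 3)) ℝ,
      inS (SimpleGraph.cycleGraph (2 * n + 1 + 3)) B ∧ ∃ p q, ∀ i, ∃ φ φ' : Fin (2 * n + 1 + 3) → ℝ,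
        B *ᵥ φ = d i • φ ∧ B *ᵥ φ' = d i • φ' ∧ φ p = 1 ∧ φ q = 0 ∧ φ' p = 0 ∧ φ' q = 1 := by
  obtain ⟨α, β, hβ, h⟩ := path_data d hd
  refine ⟨cycM n α β, cycM_inS n α β hβ, 0, ⟨n + 2, by omega⟩, fun i => ?_⟩
  obtain ⟨x, x', ⟨h0, h1, h2, h3⟩, ⟨h0', h1', h2', h3'⟩⟩ := h i
  refine ⟨_, _, cycM_eig n α β hβ 1 x (d i) (by ring) (by rw [h1]; ring) (by rw [h1]; ring)
    (by rw [h0]; linarith) h3, cycM_eig n α β hβ (-1) x' (d i) (by rw [h0']; ring)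
    (by rw [h1']; linarith) (by ring) (by rw [h0']; ring) h3', ?_, ?_, ?_, ?_⟩
  · simp [cycX, h0]
  · simp [cycX, h1]
  · simp [cycX, h0']
  · simp [cycX, h1']


theorem dot_self_pos {V : Type*} [Fintype V] (x : V → ℝ) (p : V) (hp : x p ≠ 0) : 0 < x ⬝ᵥ x := by
  have h : 0 ≤ x ⬝ᵥ x := Finset.sum_nonneg (fun i _ => mul_self_nonneg (x i))
  refine lt_of_le_of_ne h (fun h0 => hp ?_)
  rw [dotProduct_self_eq_zero.mp h0.symm]; rfl

theorem scale_norm {V : Type*} [Fintype V] (x : V → ℝ) (W : ℝ) (hW : 0 < W) (hx : 0 < x ⬝ᵥ x) :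
    (√(W / (x ⬝ᵥ x)) • x) ⬝ᵥ (√(W / (x ⬝ᵥ x)) • x) = W := by
  rw [smul_dotProduct, dotProduct_smul, smul_eq_mul, smul_eq_mul, ← mul_assoc,
    Real.mul_self_sqrt (by positivity)]
  field_simp

theorem exists_tau {V : Type*} [Fintype V] (c e e' : V → ℝ) (h : ∀ v, ¬ (e v = 0 ∧ e' v = 0)) :
    ∃ τ : ℝ, ∀ v, c v * (1 + τ ^ 2) + e v * (1 - τ ^ 2) + e' v * (2 * τ) ≠ 0 := by
  classical
  set P : V → Polynomial ℝ := fun v => Polynomial.C (c v) * (1 + Polynomial.X ^ 2) +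
    Polynomial.C (e v) * (1 - Polynomial.X ^ 2) + Polynomial.C (e' v) * (2 * Polynomial.X) with hP
  have hev : ∀ v τ, (P v).eval τ = c v * (1 + τ ^ 2) + e v * (1 - τ ^ 2) + e' v * (2 * τ) := by
    intro v τ; simp [hP]
  have hne : ∀ v, P v ≠ 0 := by
    intro v h0
    have h1 := hev v 0
    have h2 := hev v 1
    have h3 := hev v (-1)
    rw [h0, Polynomial.eval_zero] at h1 h2 h3
    exact h v ⟨by linarith, by linarith⟩
  have hprod : ∏ v, P v ≠ 0 := Finset.prod_ne_zero_iff.mpr (fun v _ => hne v)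
  by_contra hcon
  push Not at hcon
  apply hprod
  apply Polynomial.funext
  intro τ
  obtain ⟨v, hv⟩ := hcon τ
  rw [Polynomial.eval_prod, Polynomial.eval_zero]
  exact Finset.prod_eq_zero (Finset.mem_univ v) (by rw [hev, hv])

theorem hub_vector {t K : ℕ} (B : Matrix (Fin (t + 3)) (Fin (t + 3)) ℝ)
    (hB : inS (SimpleGraph.cycleGraph (t + 3)) B) (p q : Fin (t + 3)) (mu W : Fin (K + 1) → ℝ)
    (hW : ∀ i, 0 < W i)
    (φ φ' : Fin (K + 1) → Fin (t + 3) → ℝ)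
    (hφ : ∀ i, B *ᵥ φ i = mu i • φ i) (hφ' : ∀ i, B *ᵥ φ' i = mu i • φ' i)
    (h1 : ∀ i, φ i p = 1) (h2 : ∀ i, φ i q = 0) (h3 : ∀ i, φ' i p = 0) (h4 : ∀ i, φ' i q = 1) :
    ∃ U : Fin (K + 1) → Fin (t + 3) → ℝ, (∀ i, B *ᵥ U i = mu i • U i) ∧
      (∀ i, U i ⬝ᵥ U i = W i) ∧ ∀ v, ∑ i, U i v ≠ 0 := by
  have hpos : ∀ i, 0 < φ i ⬝ᵥ φ i := fun i => dot_self_pos _ p (by rw [h1]; norm_num)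
  set e : Fin (t + 3) → ℝ := φ 0 with he
  set f : Fin (t + 3) → ℝ := φ' 0 - ((e ⬝ᵥ φ' 0) / (e ⬝ᵥ e)) • e with hf
  have hfpos : 0 < f ⬝ᵥ f := dot_self_pos _ q (by simp [hf, he, h4, h2])
  have hef : e ⬝ᵥ f = 0 := by
    have h9 : e ⬝ᵥ e ≠ 0 := (hpos 0).ne'
    rw [hf, dotProduct_sub, dotProduct_smul, smul_eq_mul, div_mul_cancel₀ _ h9, sub_self]
  have hBe : B *ᵥ e = mu 0 • e := hφ 0
  have hBf : B *ᵥ f = mu 0 • f := by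
    rw [hf, mulVec_sub, mulVec_smul, hBe, hφ', smul_sub, smul_comm]
  have hnz : ∀ v, ¬ (e v = 0 ∧ f v = 0) := by
    rintro v ⟨hev, hfv⟩
    have hv' : φ' 0 v = 0 := by
      simpa [hf, hev] using hfv
    have hy := cyc_propagate B hB (φ' 0 (v + 1) • e - e (v + 1) • φ' 0) (mu 0)
      (by rw [mulVec_sub, mulVec_smul, mulVec_smul, hBe, hφ', smul_sub, smul_comm,
        smul_comm (e (v + 1))]) v (by simp [hev, hv']) (by simp [mul_comm])
    have hyq := congrFun hy q
    simp [h4, he, h2] at hyq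
    have := cyc_propagate B hB e (mu 0) hBe v hev hyq
    have h5 := congrFun this p
    simp [he, h1] at h5
  set c1 := √(W 0 / (e ⬝ᵥ e)) with hc1
  set c2 := √(W 0 / (f ⬝ᵥ f)) with hc2
  have hc1p : 0 < c1 := Real.sqrt_pos.mpr (div_pos (hW 0) (hpos 0))
  have hc2p : 0 < c2 := Real.sqrt_pos.mpr (div_pos (hW 0) hfpos)
  obtain ⟨τ, hτ⟩ := exists_tau
    (fun v => ∑ i : Fin K, (√(W i.succ / (φ i.succ ⬝ᵥ φ i.succ)) • φ i.succ) v) (c1 • e) (c2 • f)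
    (by
      rintro v ⟨ha, hb⟩
      apply hnz v
      simp only [Pi.smul_apply, smul_eq_mul, mul_eq_zero] at ha hb
      exact ⟨ha.resolve_left hc1p.ne', hb.resolve_left hc2p.ne'⟩)
  have hden : (1 + τ ^ 2) ≠ 0 := by positivity
  refine ⟨Fin.cons (((1 - τ ^ 2) / (1 + τ ^ 2)) • (c1 • e) + ((2 * τ) / (1 + τ ^ 2)) • (c2 • f))
    (fun i => √(W i.succ / (φ i.succ ⬝ᵥ φ i.succ)) • φ i.succ), ?_, ?_, ?_⟩
  · intro i
    refine Fin.cases ?_ (fun i => ?_) i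
    · simp only [Fin.cons_zero, mulVec_add, mulVec_smul, hBe, hBf, smul_add]
      congr 1 <;> (funext v; simp only [Pi.smul_apply, smul_eq_mul]; ring)
    · simp only [Fin.cons_succ, mulVec_smul, hφ]
      rw [smul_comm]
  · intro i
    refine Fin.cases ?_ (fun i => ?_) i
    · have hE := scale_norm e (W 0) (hW 0) (hpos 0)
      have hF := scale_norm f (W 0) (hW 0) hfpos
      rw [← hc1] at hE
      rw [← hc2] at hF
      have hEF : (c1 • e) ⬝ᵥ (c2 • f) = 0 := by
        rw [smul_dotProduct, dotProduct_smul, hef]; simp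
      have hFE : (c2 • f) ⬝ᵥ (c1 • e) = 0 := by rw [dotProduct_comm, hEF]
      rw [Fin.cons_zero, add_dotProduct, dotProduct_add, dotProduct_add]
      simp only [smul_dotProduct _ (c1 • e), smul_dotProduct _ (c2 • f),
        dotProduct_smul _ _ (c1 • e), dotProduct_smul _ _ (c2 • f), hE, hF, hEF, hFE]
      simp only [smul_eq_mul]
      field_simp
      ring
    · rw [Fin.cons_succ]
      exact scale_norm _ _ (hW _) (hpos _)
  · intro v h0
    apply hτ v
    rw [Fin.sum_univ_succ] at h0
    simp only [Fin.cons_zero, Fin.cons_succ] at h0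
    simp only [Pi.add_apply, Pi.smul_apply, smul_eq_mul] at h0 ⊢
    field_simp at h0
    linarith


theorem count_ge {V : Type*} [Fintype V] [DecidableEq V] (A : Matrix V V ℝ) (hA : A.IsSymm)
    (ν : ℝ) {j : ℕ} (w : Fin j → V → ℝ) (hw : LinearIndependent ℝ w)
    (h : ∀ i, A *ᵥ w i = ν • w i) : j ≤ A.charpoly.roots.count ν := by
  rw [count_roots_eq A hA]
  have hm : ∀ i, w i ∈ LinearMap.ker (A - scalar V ν).mulVecLin := by
    intro i
    rw [LinearMap.mem_ker, mulVecLin_apply, sub_mulVec, h]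
    ext v
    simp [Matrix.scalar_apply, Matrix.mulVec_diagonal]
  have hli : LinearIndependent ℝ (fun i => (⟨w i, hm i⟩ : LinearMap.ker (A - scalar V ν).mulVecLin)) :=
    LinearIndependent.of_comp (Submodule.subtype _) hw
  simpa using hli.fintype_card_le_finrank

theorem eig_orth {V : Type*} [Fintype V] (B : Matrix V V ℝ) (hB : B.IsSymm)
    (x y : V → ℝ) (α β : ℝ) (hx : B *ᵥ x = α • x) (hy : B *ᵥ y = β • y) (h : α ≠ β) :
    x ⬝ᵥ y = 0 := by
  have h1 : x ⬝ᵥ (B *ᵥ y) = (B *ᵥ x) ⬝ᵥ y := by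
    rw [dotProduct_mulVec]
    congr 1
    rw [← vecMul_transpose, hB.eq]
  rw [hx, hy, dotProduct_smul, smul_dotProduct, smul_eq_mul, smul_eq_mul] at h1
  have : (β - α) * (x ⬝ᵥ y) = 0 := by linarith
  exact (mul_eq_zero.mp this).resolve_left (sub_ne_zero.mpr h.symm)

noncomputable def hubM {V : Type*} (a : ℝ) (u : V → ℝ) (B : Matrix V V ℝ) :
    Matrix (Fin 1 ⊕ V) (Fin 1 ⊕ V) ℝ :=
  fromBlocks (Matrix.of fun _ _ => a) (Matrix.of fun _ v => u v) (Matrix.of fun v _ => u v) B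

theorem hubM_mulVec {V : Type*} [Fintype V] (a : ℝ) (u : V → ℝ) (B : Matrix V V ℝ) (ν h : ℝ)
    (x : V → ℝ) (h1 : a * h + u ⬝ᵥ x = ν * h) (h2 : h • u + B *ᵥ x = ν • x) :
    hubM a u B *ᵥ (Sum.elim (fun _ => h) x) = ν • (Sum.elim (fun _ => h) x) := by
  unfold hubM
  rw [fromBlocks_mulVec]
  funext s
  rcases s with s | v
  · simp only [Sum.elim_comp_inl, Sum.elim_comp_inr, Sum.elim_inl, Pi.smul_apply, smul_eq_mul,
      Pi.add_apply]
    rw [← h1]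
    simp [Matrix.mulVec, dotProduct]
  · have := congrFun h2 v
    simp only [Pi.add_apply, Pi.smul_apply, smul_eq_mul] at this
    simp only [Sum.elim_comp_inl, Sum.elim_comp_inr, Sum.elim_inr, Pi.smul_apply, smul_eq_mul,
      Pi.add_apply]
    rw [← this]
    simp [Matrix.mulVec, dotProduct, mul_comm]

theorem wheel_inS {V : Type*} (G : SimpleGraph V) (A : Matrix (Fin 1 ⊕ V) (Fin 1 ⊕ V) ℝ) :
    inS (graphJoin (⊤ : SimpleGraph (Fin 1)) G) A ↔
      A.IsSymm ∧ inS G A.toBlocks₂₂ ∧ ∀ v, A (Sum.inl 0) (Sum.inr v) ≠ 0 := by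
  constructor
  · intro h
    refine ⟨h.1, ⟨?_, ?_⟩, ?_⟩
    · ext i j
      exact h.1.apply _ _
    · intro i j hij
      have := h.2 (Sum.inr i) (Sum.inr j) (by simpa using hij)
      simpa [graphJoin, partialJoin, toBlocks₂₂] using this
    · intro v
      rw [h.2 _ _ (by simp)]
      simp [graphJoin, partialJoin]
  · rintro ⟨h1, h2, h3⟩
    refine ⟨h1, ?_⟩
    rintro (i | i) (j | j) hij
    · exact absurd (congrArg Sum.inl (Subsingleton.elim i j)) hij
    · rw [Subsingleton.elim i 0]
      exact iff_of_true (h3 j) (by simp [graphJoin, partialJoin])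
    · rw [Subsingleton.elim j 0, h1.apply]
      exact iff_of_true (h3 i) (by simp [graphJoin, partialJoin])
    · have := h2.2 i j (by simpa using hij)
      simpa [graphJoin, partialJoin, toBlocks₂₂] using this

theorem upper (k : ℕ) (lam : Fin (k + 2) → ℝ) (hlam : StrictMono lam) :
    (∃ mu : Fin (k + 1) → ℝ,
      (∀ i : Fin (k + 1), lam i.castSucc < mu i ∧ mu i < lam i.succ) ∧
      ∃ N : Matrix (Fin 1 ⊕ Fin (2 * (2 * k + 1) + 1 + 3)) (Fin 1 ⊕ Fin (2 * (2 * k + 1) + 1 + 3)) ℝ,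
        inS (graphJoin (⊤ : SimpleGraph (Fin 1))
          (SimpleGraph.cycleGraph (2 * (2 * k + 1) + 1 + 3))) N ∧
        specMultiset N = 3 • (Finset.univ.val.map lam) + Finset.univ.val.map mu) := by
  set d : Fin (2 * k + 1 + 2) → ℝ := fun j =>
    (lam ⟨j.val / 2, by omega⟩ + lam ⟨(j.val + 1) / 2, by omega⟩) / 2 with hd
  have hdm : StrictMono d := by
    intro i j hij
    rw [Fin.lt_def] at hij
    have h1 : lam ⟨i.val / 2, by omega⟩ ≤ lam ⟨j.val / 2, by omega⟩ :=
      hlam.monotone (by rw [Fin.le_def]; simp only; omega)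
    have h2 : lam ⟨(i.val + 1) / 2, by omega⟩ ≤ lam ⟨(j.val + 1) / 2, by omega⟩ :=
      hlam.monotone (by rw [Fin.le_def]; simp only; omega)
    simp only [hd]
    by_cases h : i.val / 2 < j.val / 2
    · have h3 : lam ⟨i.val / 2, by omega⟩ < lam ⟨j.val / 2, by omega⟩ :=
        hlam (by rw [Fin.lt_def]; simp only; omega)
      linarith
    · have h3 : lam ⟨(i.val + 1) / 2, by omega⟩ < lam ⟨(j.val + 1) / 2, by omega⟩ :=
        hlam (by rw [Fin.lt_def]; simp only; omega)
      linarith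
  obtain ⟨B, hB, p, q, hdata⟩ := cycle_data d hdm
  have hBs : B.IsSymm := hB.1
  set mu : Fin (k + 1) → ℝ := fun i => (lam i.castSucc + lam i.succ) / 2 with hmu
  have hint : ∀ i : Fin (k + 1), lam i.castSucc < mu i ∧ mu i < lam i.succ := by
    intro i
    have := hlam (Fin.castSucc_lt_succ (i := i))
    simp only [hmu]
    constructor <;> linarith
  have hdl : ∀ i, ∃ j, d j = lam i := by
    intro i
    refine ⟨⟨2 * i.val, by omega⟩, ?_⟩
    have e1 : (⟨2 * i.val / 2, by omega⟩ : Fin (k + 2)) = i := Fin.ext (by simp)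
    have e2 : (⟨(2 * i.val + 1) / 2, by omega⟩ : Fin (k + 2)) = i := Fin.ext (by simp only; omega)
    simp only [hd, e1, e2]
    ring
  have hdmu : ∀ i, ∃ j, d j = mu i := by
    intro i
    refine ⟨⟨2 * i.val + 1, by omega⟩, ?_⟩
    have e1 : (⟨(2 * i.val + 1) / 2, by omega⟩ : Fin (k + 2)) = i.castSucc :=
      Fin.ext (by simp only [Fin.val_castSucc]; omega)
    have e2 : (⟨(2 * i.val + 1 + 1) / 2, by omega⟩ : Fin (k + 2)) = i.succ :=
      Fin.ext (by simp only [Fin.val_succ]; omega)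
    simp only [hd, e1, e2, hmu]
  have hmum : StrictMono mu := by
    intro a b hab
    exact (hint a).2.trans_le
      ((hlam.monotone (Fin.succ_le_castSucc_iff.mpr hab)).trans (hint b).1.le)
  have hne : ∀ i j, lam i ≠ mu j := by
    intro i j h
    have h1 := (hint j).1
    have h2 := (hint j).2
    rw [← h] at h1 h2
    have h1' := hlam.lt_iff_lt.mp h1
    have h2' := hlam.lt_iff_lt.mp h2
    exact absurd (Fin.castSucc_lt_iff_succ_le.mp h1') (not_le.mpr h2')
  obtain ⟨a, ha⟩ := partial_fractions lam mu hmum hne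
  have hWpos := weight_pos lam mu hlam (fun j => (hint j).1) (fun j => (hint j).2)
  set W : Fin (k + 1) → ℝ :=
    fun j => -(∏ l, (mu j - lam l)) * Lagrange.nodalWeight Finset.univ mu j with hWdef
  have hmudata : ∀ i, ∃ φ φ' : Fin (2 * (2 * k + 1) + 1 + 3) → ℝ,
        B *ᵥ φ = mu i • φ ∧ B *ᵥ φ' = mu i • φ' ∧ φ p = 1 ∧ φ q = 0 ∧ φ' p = 0 ∧ φ' q = 1 := by
    intro i
    obtain ⟨j, hj⟩ := hdmu i
    rw [← hj]; exact hdata j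
  choose φ φ' g1 g2 g3 g4 g5 g6 using hmudata
  obtain ⟨U, hU1, hU2, hU3⟩ := hub_vector B hB p q mu W hWpos φ φ' g1 g2 g3 g4 g5 g6
  set u : Fin (2 * (2 * k + 1) + 1 + 3) → ℝ := ∑ i, U i with hu
  have hNs : (hubM a u B).IsSymm := by
    ext i j
    rcases i with i | i <;> rcases j with j | j <;> simp [hubM, hBs.apply]
  refine ⟨mu, hint, hubM a u B, ?_, ?_⟩
  · rw [wheel_inS]
    refine ⟨hNs, ?_, ?_⟩
    · unfold hubM
      rw [toBlocks_fromBlocks₂₂]; exact hB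
    · intro v
      have := hU3 v
      simpa [hubM, hu, Finset.sum_apply] using this
  · have hl3 : ∀ i, 3 ≤ (hubM a u B).charpoly.roots.count (lam i) := by
      intro i
      obtain ⟨j, hj⟩ := hdl i
      obtain ⟨x, x', k1, k2, k3, k4, k5, k6⟩ := hdata j
      rw [hj] at k1 k2
      have hux : ∀ y, B *ᵥ y = lam i • y → u ⬝ᵥ y = 0 := by
        intro y hy
        rw [hu, sum_dotProduct]
        exact Finset.sum_eq_zero (fun l _ => eig_orth B hBs _ _ _ _ (hU1 l) hy (hne i l).symm)
      set ψ : Fin (2 * (2 * k + 1) + 1 + 3) → ℝ := ∑ l, (lam i - mu l)⁻¹ • U l with hψ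
      have hψ1 : u ⬝ᵥ ψ = lam i - a := by
        rw [ha i, hψ, dotProduct_sum]
        apply Finset.sum_congr rfl
        intro l _
        rw [dotProduct_smul, hu, sum_dotProduct, Finset.sum_eq_single l, hU2]
        · rw [smul_eq_mul, div_eq_inv_mul]
        · intro b _ hb
          exact eig_orth B hBs _ _ _ _ (hU1 b) (hU1 l) (hmum.injective.ne hb)
        · simp
      have hψ2 : u + B *ᵥ ψ = lam i • ψ := by
        rw [hu, hψ, mulVec_sum, Finset.smul_sum, ← Finset.sum_add_distrib]
        apply Finset.sum_congr rfl
        intro l _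
        have : lam i - mu l ≠ 0 := sub_ne_zero.mpr (hne i l)
        rw [mulVec_smul, hU1]
        funext v
        simp only [Pi.add_apply, Pi.smul_apply, smul_eq_mul]
        field_simp
        ring
      refine count_ge _ hNs _ ![Sum.elim (fun _ => 0) x, Sum.elim (fun _ => 0) x',
        Sum.elim (fun _ => 1) ψ] ?_ ?_
      · rw [Fintype.linearIndependent_iff]
        intro g hg
        rw [Fin.sum_univ_three] at hg
        have e1 := congrFun hg (Sum.inl 0)
        have e2 := congrFun hg (Sum.inr p)
        have e3 := congrFun hg (Sum.inr q)
        simp at e1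
        simp [e1, k3, k5] at e2
        simp [e1, k4, k6] at e3
        intro l
        fin_cases l
        · exact e2
        · exact e3
        · exact e1
      · intro l
        fin_cases l
        · exact hubM_mulVec _ _ _ _ _ _ (by rw [hux x k1]; ring) (by rw [k1]; simp)
        · exact hubM_mulVec _ _ _ _ _ _ (by rw [hux x' k2]; ring) (by rw [k2]; simp)
        · exact hubM_mulVec _ _ _ _ _ _ (by rw [hψ1]; ring) (by rw [one_smul, hψ2])
    have hm1 : ∀ i, 1 ≤ (hubM a u B).charpoly.roots.count (mu i) := by
      intro i
      obtain ⟨ψ, hψ, hψ0, hψu⟩ : ∃ ψ, B *ᵥ ψ = mu i • ψ ∧ ψ ≠ 0 ∧ u ⬝ᵥ ψ = 0 := by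
        by_cases h0 : u ⬝ᵥ φ' i = 0
        · refine ⟨φ' i, g2 i, ?_, h0⟩
          intro h
          have := g6 i
          rw [h] at this; simp at this
        · refine ⟨(u ⬝ᵥ φ' i) • φ i - (u ⬝ᵥ φ i) • φ' i, ?_, ?_, ?_⟩
          · rw [mulVec_sub, mulVec_smul, mulVec_smul, g1, g2, smul_sub, smul_comm,
              smul_comm (u ⬝ᵥ φ i)]
          · intro h
            have := congrFun h p
            simp [g3, g5] at this
            exact h0 this
          · rw [dotProduct_sub, dotProduct_smul, dotProduct_smul, smul_eq_mul, smul_eq_mul]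
            ring
      refine count_ge _ hNs _ ![Sum.elim (fun _ => 0) ψ] ?_ ?_
      · rw [Fintype.linearIndependent_iff]
        intro g hg
        rw [Fin.sum_univ_one] at hg
        obtain ⟨v, hv⟩ := Function.ne_iff.mp hψ0
        have e2 := congrFun hg (Sum.inr v)
        simp at e2
        intro l
        fin_cases l
        exact e2.resolve_right hv
      · intro l
        fin_cases l
        exact hubM_mulVec _ _ _ _ _ _ (by rw [hψu]; ring) (by rw [hψ]; simp)
    symm
    apply Multiset.eq_of_le_of_card_le
    · rw [Multiset.le_iff_count]
      intro ν
      rw [Multiset.count_add, Multiset.count_nsmul]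
      have nd1 : (Finset.univ.val.map lam).Nodup := Finset.univ.nodup.map hlam.injective
      have nd2 : (Finset.univ.val.map mu).Nodup := Finset.univ.nodup.map hmum.injective
      by_cases c1 : ν ∈ Finset.univ.val.map lam
      · have c2 : ν ∉ Finset.univ.val.map mu := by
          intro c2
          rw [Multiset.mem_map] at c1 c2
          obtain ⟨i, -, hi⟩ := c1
          obtain ⟨j, -, hj⟩ := c2
          exact hne i j (hi.trans hj.symm)
        rw [Multiset.count_eq_zero.mpr c2, Multiset.count_eq_one_of_mem nd1 c1]
        rw [Multiset.mem_map] at c1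
        obtain ⟨i, -, rfl⟩ := c1
        exact hl3 i
      · rw [Multiset.count_eq_zero.mpr c1]
        by_cases c2 : ν ∈ Finset.univ.val.map mu
        · rw [Multiset.count_eq_one_of_mem nd2 c2]
          rw [Multiset.mem_map] at c2
          obtain ⟨i, -, rfl⟩ := c2
          rw [mul_zero, zero_add]; exact hm1 i
        · rw [Multiset.count_eq_zero.mpr c2]; simp
    · rw [specMultiset, card_roots_eq _ hNs]
      simp
      omega

theorem upper_q (k : ℕ) (lam : Fin (k + 2) → ℝ) (hlam : StrictMono lam) (mu : Fin (k + 1) → ℝ)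
    {V : Type*} [Fintype V] [DecidableEq V] (N : Matrix V V ℝ) 
    (h : specMultiset N = 3 • (Finset.univ.val.map lam) + Finset.univ.val.map mu) :
    qMat N ≤ 2 * k + 3 := by
  classical
  unfold qMat
  rw [h]
  have : (3 • (Finset.univ.val.map lam) + Finset.univ.val.map mu).toFinset ⊆
      Finset.univ.image lam ∪ Finset.univ.image mu := by
    intro x hx
    rw [Multiset.mem_toFinset, Multiset.mem_add] at hx
    rw [Finset.mem_union, Finset.mem_image, Finset.mem_image]
    rcases hx with hx | hx
    · left
      obtain ⟨i, -, hi⟩ := Multiset.mem_map.mp (Multiset.mem_of_mem_nsmul hx)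
      exact ⟨i, Finset.mem_univ _, hi⟩
    · right
      obtain ⟨i, -, hi⟩ := Multiset.mem_map.mp hx
      exact ⟨i, Finset.mem_univ _, hi⟩
  refine (Finset.card_le_card this).trans ((Finset.card_union_le _ _).trans ?_)
  have h1 := Finset.card_image_le (s := Finset.univ) (f := lam)
  have h2 := Finset.card_image_le (s := Finset.univ) (f := mu)
  simp only [Finset.card_univ, Fintype.card_fin] at h1 h2
  omega


theorem comb_bound (m : ℝ → ℕ) (F : Finset ℝ) : (∀ s ∈ F, m s ≤ 3) →
    ((∀ s ∈ F, m s = 3 → Even (∑ r ∈ F.filter (fun r => s < r), m r)) →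
      ∑ s ∈ F, m s ≤ 2 * F.card + 1) ∧
    ((∀ s ∈ F, m s = 3 → Odd (∑ r ∈ F.filter (fun r => s < r), m r)) →
      ∑ s ∈ F, m s ≤ 2 * F.card) := by
  classical
  induction F using Finset.induction_on_min with
  | empty => simp
  | insert a F ha ih =>
    intro h3
    have hna : a ∉ F := fun h => lt_irrefl _ (ha a h)
    have hm : m a ≤ 3 := h3 a (by simp)
    obtain ⟨ih1, ih2⟩ := ih (fun s hs => h3 s (by simp [hs]))
    have hfa : (insert a F).filter (fun r => a < r) = F := by
      ext r
      simp only [Finset.mem_filter, Finset.mem_insert]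
      constructor
      · rintro ⟨rfl | h, h'⟩
        · exact absurd h' (lt_irrefl _)
        · exact h
      · intro h
        exact ⟨Or.inr h, ha r h⟩
    have hfs : ∀ s ∈ F, (insert a F).filter (fun r => s < r) = F.filter (fun r => s < r) := by
      intro s hs
      rw [Finset.filter_insert, if_neg (not_lt.mpr (ha s hs).le)]
    rw [Finset.sum_insert hna, Finset.card_insert_of_notMem hna]
    constructor
    · intro h
      have := ih1 (fun s hs h' => by
        have := h s (by simp [hs]) h'
        rwa [hfs s hs] at this)
      by_cases hm3 : m a = 3
      · have he := h a (by simp) hm3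
        rw [hfa] at he
        obtain ⟨c, hc⟩ := he
        omega
      · omega
    · intro h
      have := ih2 (fun s hs h' => by
        have := h s (by simp [hs]) h'
        rwa [hfs s hs] at this)
      by_cases hm3 : m a = 3
      · have he := h a (by simp) hm3
        rw [hfa] at he
        obtain ⟨c, hc⟩ := he
        omega
      · omega

theorem sign_multiset (ν : ℝ) (S : Multiset ℝ) :
    0 < (-1 : ℝ) ^ (S.filter (fun r => ν < r)).card *
      ((S.filter (fun r => r ≠ ν)).map (fun r => ν - r)).prod := by
  induction S using Multiset.induction_on with
  | empty => simp
  | cons a S ih =>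
    rcases lt_trichotomy a ν with h | h | h
    · rw [Multiset.filter_cons_of_neg _ (not_lt.mpr h.le), Multiset.filter_cons_of_pos (p := fun r => r ≠ ν) _ h.ne,
        Multiset.map_cons, Multiset.prod_cons]
      have : 0 < ν - a := by linarith
      have := mul_pos this ih
      linarith
    · rw [Multiset.filter_cons_of_neg _ (not_lt.mpr h.le), Multiset.filter_cons_of_neg _ (by simpa using h)]
      exact ih
    · rw [Multiset.filter_cons_of_pos _ h, Multiset.filter_cons_of_pos (p := fun r => r ≠ ν) _ h.ne',
        Multiset.map_cons, Multiset.prod_cons, Multiset.card_cons, pow_succ]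
      have : 0 < a - ν := by linarith
      have := mul_pos this ih
      linarith

theorem rank_factor {V ι : Type*} [Fintype V] [DecidableEq V] [Fintype ι] [DecidableEq ι]
    (M : Matrix V V ℝ) (hM : M.IsSymm) (f : ι → V) (hQ : (M.submatrix f f).det ≠ 0)
    (hker : Fintype.card V ≤
      Module.finrank ℝ (LinearMap.ker M.mulVecLin) + Fintype.card ι) :
    M = (M.submatrix f id)ᵀ * ((M.submatrix f f)⁻¹ * M.submatrix f id) := by
  set Q := M.submatrix f f with hQd
  set R := M.submatrix f id with hR
  set E : Matrix V ι ℝ := (1 : Matrix V V ℝ).submatrix id f with hE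
  have hu : IsUnit Q.det := isUnit_iff_ne_zero.mpr hQ
  have hRE : R * E = Q := by
    rw [hR, hE, hQd]
    have := Matrix.submatrix_mul_equiv M (1 : Matrix V V ℝ) f (Equiv.refl V) f
    rw [mul_one] at this
    exact this
  have hME : M * E = Rᵀ := by
    have := Matrix.submatrix_mul_equiv M (1 : Matrix V V ℝ) id (Equiv.refl V) f
    rw [mul_one] at this
    rw [hR, transpose_submatrix, hM.eq]
    exact this
  have hsurj : Function.Surjective R.mulVecLin := by
    intro z
    refine ⟨(E * Q⁻¹) *ᵥ z, ?_⟩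
    rw [mulVecLin_apply, mulVec_mulVec, ← Matrix.mul_assoc, hRE, Matrix.mul_nonsing_inv _ hu, one_mulVec]
  have hle : LinearMap.ker M.mulVecLin ≤ LinearMap.ker R.mulVecLin := by
    intro x hx
    rw [LinearMap.mem_ker, mulVecLin_apply] at hx ⊢
    funext i
    exact congrFun hx (f i)
  have hrn := LinearMap.finrank_range_add_finrank_ker R.mulVecLin
  rw [LinearMap.range_eq_top.mpr hsurj, finrank_top, Module.finrank_fintype_fun_eq_card,
    Module.finrank_fintype_fun_eq_card] at hrn
  have heq : LinearMap.ker M.mulVecLin = LinearMap.ker R.mulVecLin :=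
    Submodule.eq_of_le_of_finrank_le hle (by omega)
  have hz : M * (1 - E * (Q⁻¹ * R)) = 0 := by
    apply Matrix.ext_of_mulVec_single
    intro i
    rw [← mulVec_mulVec, zero_mulVec]
    set y := (1 - E * (Q⁻¹ * R)) *ᵥ Pi.single i 1 with hy
    have : y ∈ LinearMap.ker R.mulVecLin := by
      rw [LinearMap.mem_ker, mulVecLin_apply, hy, mulVec_mulVec, Matrix.mul_sub, Matrix.mul_one, ← Matrix.mul_assoc,
        hRE, ← Matrix.mul_assoc, Matrix.mul_nonsing_inv _ hu, Matrix.one_mul, sub_self, zero_mulVec]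
    rw [← heq, LinearMap.mem_ker, mulVecLin_apply] at this
    exact this
  rw [Matrix.mul_sub, Matrix.mul_one, ← Matrix.mul_assoc, hME, sub_eq_zero] at hz
  exact hz

theorem det_sign {V ι : Type*} [Fintype V] [DecidableEq V] [Fintype ι] [DecidableEq ι]
    (M : Matrix V V ℝ) (hM : M.IsSymm) (f : ι → V) (hQ : (M.submatrix f f).det ≠ 0)
    (hc : Fintype.card ι ≤ Fintype.card V)
    (hker : Fintype.card V ≤
      Module.finrank ℝ (LinearMap.ker M.mulVecLin) + Fintype.card ι) :
    ∃ h : Polynomial ℝ, M.charpoly = Polynomial.X ^ (Fintype.card V - Fintype.card ι) * h ∧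
      0 < h.eval 0 * ((-1) ^ (Fintype.card ι) * (M.submatrix f f).det) := by
  have hfac := rank_factor M hM f hQ hker
  set Q := M.submatrix f f with hQd
  set R := M.submatrix f id with hR
  have hQs : Q.IsSymm := by
    rw [Matrix.IsSymm, hQd, transpose_submatrix, hM.eq]
  refine ⟨(Q⁻¹ * R * Rᵀ).charpoly, ?_, ?_⟩
  · rw [← charpoly_mul_comm_of_le _ _ hc, ← hfac]
  · have hpos : 0 < (R * Rᵀ).det := by
      have h1 : 0 ≤ (R * Rᵀ).det := by
        have := (posSemidef_self_mul_conjTranspose R).det_nonneg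
        rwa [conjTranspose_eq_transpose_of_trivial] at this
      refine lt_of_le_of_ne h1 (fun h0 => ?_)
      obtain ⟨z, hz0, hz⟩ := exists_mulVec_eq_zero_iff.mpr h0.symm
      have h2 : (Rᵀ *ᵥ z) ⬝ᵥ (Rᵀ *ᵥ z) = 0 := by
        rw [dotProduct_mulVec, vecMul_transpose, mulVec_mulVec, hz, zero_dotProduct]
      have h3 := dotProduct_self_eq_zero.mp h2
      apply hQ
      apply exists_mulVec_eq_zero_iff.mp
      refine ⟨z, hz0, ?_⟩
      funext i
      have h4 := congrFun h3 (f i)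
      rw [← hQs.eq]
      exact h4
    rw [eval_charpoly]
    simp only [map_zero, zero_sub]
    rw [det_neg, Matrix.mul_assoc, det_mul, det_nonsing_inv, Ring.inverse_eq_inv']
    have : ((-1 : ℝ) ^ Fintype.card ι * (Q.det⁻¹ * (R * Rᵀ).det)) *
      ((-1) ^ Fintype.card ι * Q.det) = ((-1) ^ Fintype.card ι) ^ 2 * (R * Rᵀ).det *
        (Q.det⁻¹ * Q.det) := by ring
    rw [this, inv_mul_cancel₀ hQ]
    have : ((-1 : ℝ) ^ Fintype.card ι) ^ 2 = 1 := by
      rw [← pow_mul, mul_comm, pow_mul]; simp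
    rw [this]; linarith


/-- Adjacency on the cycle forces values to be consecutive or the two ends. -/
theorem cyc_val {t : ℕ} {v w : Fin (t + 3)} (h : (SimpleGraph.cycleGraph (t + 3)).Adj v w) :
    w.val = v.val + 1 ∨ v.val = w.val + 1 ∨ (v.val = 0 ∧ w.val = t + 2) ∨
      (w.val = 0 ∧ v.val = t + 2) := by
  have h1 : (1 : Fin (t + 3)).val = 1 := rfl
  have hv := v.isLt
  have hw := w.isLt
  rw [SimpleGraph.cycleGraph_adj] at h
  rcases h with h | h
  · have h' : v = w + 1 := by rw [← h]; simp
    have h2 := congrArg Fin.val h'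
    rw [Fin.val_add, h1] at h2
    by_cases hc : w.val + 1 < t + 3
    · rw [Nat.mod_eq_of_lt hc] at h2; omega
    · have : w.val + 1 = t + 3 := by omega
      rw [this, Nat.mod_self] at h2; omega
  · have h' : w = v + 1 := by rw [← h]; simp
    have h2 := congrArg Fin.val h'
    rw [Fin.val_add, h1] at h2
    by_cases hc : v.val + 1 < t + 3
    · rw [Nat.mod_eq_of_lt hc] at h2; omega
    · have : v.val + 1 = t + 3 := by omega
      rw [this, Nat.mod_self] at h2; omega

theorem cyc_det {t : ℕ} (B : Matrix (Fin (t + 3)) (Fin (t + 3)) ℝ)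
    (hB : inS (SimpleGraph.cycleGraph (t + 3)) B) :
    ∃ ε : ℝ, ε ≠ 0 ∧ ∀ (ν : ℝ) (y : Fin (t + 3) → ℝ), y ≠ 0 → y 0 = 0 → B *ᵥ y = ν • y →
      ((B - scalar (Fin (t + 3)) ν).submatrix (fun i : Fin (t + 1) => i.castSucc.succ)
        (fun i : Fin (t + 1) => i.castSucc.succ)).det = ε := by
  have hsucc : ∀ i : Fin (t + 2), B i.castSucc i.succ ≠ 0 := by
    intro i
    rw [← Fin.coeSucc_eq_succ]
    exact cyc_adj_succ B hB _
  have hcorner : B 0 (Fin.last (t + 2)) ≠ 0 := by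
    have := cyc_adj_succ B hB (Fin.last (t + 2))
    rw [Fin.last_add_one] at this
    rwa [hB.1.apply] at this
  set K1 : ℝ := B 0 1 * ∏ i : Fin (t + 1), B i.succ.castSucc i.succ.succ with hK1
  have hK1' : K1 ≠ 0 := by
    refine mul_ne_zero (hsucc 0) (Finset.prod_ne_zero_iff.mpr fun i _ => hsucc i.succ)
  set K2 : ℝ := (-1) ^ (t + 1) * B 0 (Fin.last (t + 2)) with hK2
  have hK2' : K2 ≠ 0 := mul_ne_zero (by simp) hcorner
  refine ⟨-K1 / K2, div_ne_zero (neg_ne_zero.mpr hK1') hK2', ?_⟩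
  intro ν y hy hy0 hBy
  set M := B - scalar (Fin (t + 3)) ν with hM
  have hMy : M *ᵥ y = 0 := by
    rw [hM, sub_mulVec, hBy]
    ext v
    simp [Matrix.scalar_apply]
  have hMoff : ∀ i j, i ≠ j → M i j = B i j := by
    intro i j hij
    simp [hM, Matrix.scalar_apply, Matrix.diagonal_apply_ne _ hij]
  have hMzero : ∀ i j : Fin (t + 3), i ≠ j → ¬ (SimpleGraph.cycleGraph (t + 3)).Adj i j →
      M i j = 0 := by
    intro i j hij hadj
    rw [hMoff i j hij]
    by_contra h
    exact hadj ((hB.2 i j hij).mp h)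
  set L : Matrix (Fin (t + 2)) (Fin (t + 2)) ℝ :=
    M.submatrix Fin.castSucc Fin.succ with hL
  have hdet : L.det = 0 := by
    apply exists_mulVec_eq_zero_iff.mp
    refine ⟨fun j => y j.succ, ?_, ?_⟩
    · intro h
      apply hy
      funext v
      refine Fin.cases hy0 (fun j => ?_) v
      exact congrFun h j
    · funext i
      have := congrFun hMy i.castSucc
      rw [Matrix.mulVec, dotProduct, Fin.sum_univ_succ, hy0, mul_zero, zero_add] at this
      exact this
  have hexp : L.det = K1 + K2 * (M.submatrix (fun i : Fin (t + 1) => i.castSucc.succ)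
        (fun i : Fin (t + 1) => i.castSucc.succ)).det := by
    rw [det_succ_row_zero, Fin.sum_univ_succ, Fin.sum_univ_castSucc]
    have hz : ∑ j : Fin t, (-1 : ℝ) ^ (j.castSucc.succ.val) * L 0 j.castSucc.succ *
        (L.submatrix Fin.succ (j.castSucc.succ).succAbove).det = 0 := by
      apply Finset.sum_eq_zero
      intro j _
      have : L 0 j.castSucc.succ = 0 := by
        rw [hL, submatrix_apply]
        apply hMzero
        · simp [Fin.ext_iff]
        · intro h
          have := cyc_val h
          have := j.isLt
          simp at *
          omega
      rw [this]; ring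
    rw [hz, zero_add]
    have hT : (L.submatrix Fin.succ (0 : Fin (t + 2)).succAbove).det =
        ∏ i : Fin (t + 1), B i.succ.castSucc i.succ.succ := by
      rw [det_of_isLowerTriangular]
      · apply Finset.prod_congr rfl
        intro i _
        simp only [submatrix_apply, hL, Fin.succAbove_zero]
        apply hMoff
        simp [Fin.ext_iff]
      · intro i j hij
        have hij' : i < j := hij
        rw [Fin.lt_def] at hij'
        simp only [submatrix_apply, hL, Fin.succAbove_zero]
        have := j.isLt
        apply hMzero
        · simp only [ne_eq, Fin.ext_iff, Fin.val_castSucc, Fin.val_succ]; omega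
        · intro h
          have := cyc_val h
          simp only [Fin.val_castSucc, Fin.val_succ] at this
          omega
    have hQ : (L.submatrix Fin.succ (Fin.last t).succ.succAbove) =
        M.submatrix (fun i : Fin (t + 1) => i.castSucc.succ)
          (fun i : Fin (t + 1) => i.castSucc.succ) := by
      rw [Fin.succ_last, Fin.succAbove_last, hL, submatrix_submatrix]
      congr 1
    rw [hT, hQ]
    have e1 : L 0 0 = B 0 1 := by
      rw [hL, submatrix_apply]
      exact hMoff _ _ (by simp [Fin.ext_iff])
    have e2 : L 0 (Fin.last t).succ = B 0 (Fin.last (t + 2)) := by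
      rw [hL, submatrix_apply, Fin.succ_last, Fin.succ_last]
      exact hMoff _ _ (by simp [Fin.ext_iff])
    rw [e1, e2, hK1, hK2]
    simp
  rw [hdet] at hexp
  rw [eq_div_iff hK2']
  linarith

theorem wheel_ker {t : ℕ} (A : Matrix (Fin 1 ⊕ Fin (t + 3)) (Fin 1 ⊕ Fin (t + 3)) ℝ) (ν : ℝ)
    (x : Fin 1 ⊕ Fin (t + 3) → ℝ)
    (hx : x ∈ LinearMap.ker (A - scalar (Fin 1 ⊕ Fin (t + 3)) ν).mulVecLin)
    (h0 : x (Sum.inl 0) = 0) :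
    A.toBlocks₂₂ *ᵥ (fun v => x (Sum.inr v)) = ν • (fun v => x (Sum.inr v)) := by
  rw [LinearMap.mem_ker, mulVecLin_apply, sub_mulVec, sub_eq_zero] at hx
  funext v
  have := congrFun hx (Sum.inr v)
  rw [Matrix.mulVec, dotProduct, Fintype.sum_sum_type] at this
  simp [h0] at this
  simpa [Matrix.mulVec, dotProduct, toBlocks₂₂] using this

theorem lower {t : ℕ} (A : Matrix (Fin 1 ⊕ Fin (t + 3)) (Fin 1 ⊕ Fin (t + 3)) ℝ)
    (hA : inS (graphJoin (⊤ : SimpleGraph (Fin 1)) (SimpleGraph.cycleGraph (t + 3))) A) :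
    t + 4 ≤ 2 * qMat A + 1 := by
  obtain ⟨hAs, hB, hb⟩ := (wheel_inS _ A).mp hA
  set B := A.toBlocks₂₂ with hBd
  set S := A.charpoly.roots with hS
  have hcard : S.card = t + 4 := by
    rw [hS, card_roots_eq A hAs]; simp; omega
  have hle3 : ∀ ν, S.count ν ≤ 3 := by
    intro ν
    rw [hS, count_roots_eq A hAs]
    set P : (Fin 1 ⊕ Fin (t + 3) → ℝ) →ₗ[ℝ] (Fin 3 → ℝ) :=
      LinearMap.funLeft ℝ ℝ ![Sum.inl 0, Sum.inr 0, Sum.inr 1] with hP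
    have hinj : Function.Injective (P.comp (Submodule.subtype
        (LinearMap.ker (A - scalar (Fin 1 ⊕ Fin (t + 3)) ν).mulVecLin))) := by
      rw [injective_iff_map_eq_zero]
      rintro ⟨x, hx⟩ h
      have e0 : x (Sum.inl 0) = 0 := congrFun h 0
      have e1 : x (Sum.inr 0) = 0 := congrFun h 1
      have e2 : x (Sum.inr 1) = 0 := congrFun h 2
      have hk := wheel_ker A ν x hx e0
      have := cyc_propagate _ hB _ ν hk 0 e1 (by rw [zero_add]; exact e2)
      ext s
      rcases s with s | s
      · rw [Subsingleton.elim s 0]; exact e0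
      · exact congrFun this s
    have := LinearMap.finrank_le_finrank_of_injective hinj
    simpa using this
  obtain ⟨ε, hε, hdet⟩ := cyc_det B hB
  set δ : ℝ := (-1) ^ (t + 1) * ε with hδ
  have hδ0 : δ ≠ 0 := mul_ne_zero (by simp) hε
  have hsign : ∀ ν, S.count ν = 3 → 0 < (-1 : ℝ) ^ (S.filter (fun r => ν < r)).card * δ := by
    intro ν hν
    have hfin : Module.finrank ℝ
        (LinearMap.ker (A - scalar (Fin 1 ⊕ Fin (t + 3)) ν).mulVecLin) = 3 := by
      rw [← count_roots_eq A hAs]; exact hν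
    obtain ⟨y, hy, hy0, hBy⟩ : ∃ y : Fin (t + 3) → ℝ, y ≠ 0 ∧ y 0 = 0 ∧ B *ᵥ y = ν • y := by
      set P : (Fin 1 ⊕ Fin (t + 3) → ℝ) →ₗ[ℝ] (Fin 2 → ℝ) :=
        LinearMap.funLeft ℝ ℝ ![Sum.inl 0, Sum.inr 0] with hP
      have hninj : ¬ Function.Injective (P.comp (Submodule.subtype
          (LinearMap.ker (A - scalar (Fin 1 ⊕ Fin (t + 3)) ν).mulVecLin))) := by
        intro h
        have := LinearMap.finrank_le_finrank_of_injective h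
        rw [hfin] at this
        simp at this
      rw [injective_iff_map_eq_zero] at hninj
      push Not at hninj
      obtain ⟨⟨x, hx⟩, h, hne⟩ := hninj
      have e0 : x (Sum.inl 0) = 0 := congrFun h 0
      have e1 : x (Sum.inr 0) = 0 := congrFun h 1
      refine ⟨fun v => x (Sum.inr v), ?_, e1, wheel_ker A ν x hx e0⟩
      intro h'
      apply hne
      ext s
      rcases s with s | s
      · rw [Subsingleton.elim s 0]; exact e0
      · exact congrFun h' s
    have hd := hdet ν y hy hy0 hBy
    set M := A - scalar (Fin 1 ⊕ Fin (t + 3)) ν with hM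
    have hMs : M.IsSymm := by
      rw [Matrix.IsSymm, hM, transpose_sub, hAs.eq]
      simp [Matrix.scalar_apply]
    set f : Fin (t + 1) → Fin 1 ⊕ Fin (t + 3) := fun i => Sum.inr i.castSucc.succ with hf
    have hsub : M.submatrix f f = (B - scalar (Fin (t + 3)) ν).submatrix
        (fun i : Fin (t + 1) => i.castSucc.succ) (fun i : Fin (t + 1) => i.castSucc.succ) := by
      ext i j
      simp [hM, hf, hBd, toBlocks₂₂, Matrix.scalar_apply, Matrix.diagonal_apply]
    rw [← hsub] at hd
    obtain ⟨h, hh1, hh2⟩ := det_sign M hMs f (by rw [hd]; exact hε) (by simp; omega)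
      (by rw [hfin]; simp; omega)
    rw [hd] at hh2
    have hfc : A.charpoly = (S.map (fun a => Polynomial.X - Polynomial.C a)).prod := by
      symm
      apply Polynomial.prod_multiset_X_sub_C_of_monic_of_roots_card_eq (charpoly_monic A)
      rw [card_roots_eq A hAs, charpoly_natDegree_eq_dim]
    have hMc : M.charpoly = (S.map (fun a => Polynomial.X - Polynomial.C (a - ν))).prod := by
      rw [hM, charpoly_sub_scalar, hfc, Polynomial.multiset_prod_comp, Multiset.map_map]
      congr 1
      apply Multiset.map_congr rfl
      intro a _
      simp
      ring
    have hsplit : M.charpoly = Polynomial.X ^ 3 *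
        ((S.filter (fun r => r ≠ ν)).map (fun a => Polynomial.X - Polynomial.C (a - ν))).prod := by
      rw [hMc]
      conv_lhs => rw [← Multiset.filter_add_not (fun r => r = ν) S]
      rw [Multiset.map_add, Multiset.prod_add, Multiset.filter_eq', hν, Multiset.map_replicate,
        Multiset.prod_replicate]
      simp
    have hcd : Fintype.card (Fin 1 ⊕ Fin (t + 3)) - Fintype.card (Fin (t + 1)) = 3 := by
      simp; omega
    rw [hcd] at hh1
    have hheq : h =
        ((S.filter (fun r => r ≠ ν)).map (fun a => Polynomial.X - Polynomial.C (a - ν))).prod :=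
      mul_left_cancel₀ (pow_ne_zero 3 Polynomial.X_ne_zero) (hh1.symm.trans hsplit)
    have hev : h.eval 0 = ((S.filter (fun r => r ≠ ν)).map (fun r => ν - r)).prod := by
      rw [hheq, Polynomial.eval_multiset_prod, Multiset.map_map]
      congr 1
      apply Multiset.map_congr rfl
      intro a _
      simp
    have hs := sign_multiset ν S
    rw [← hev] at hs
    rw [Fintype.card_fin, ← hδ] at hh2
    have h3 := mul_pos hs hh2
    have h4 : 0 < (h.eval 0) ^ 2 := by
      apply sq_pos_of_ne_zero
      intro h0; rw [h0] at hh2; simp at hh2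
    have h5 : (-1 : ℝ) ^ (S.filter (fun r => ν < r)).card * h.eval 0 * (h.eval 0 * δ) =
      (h.eval 0) ^ 2 * ((-1 : ℝ) ^ (S.filter (fun r => ν < r)).card * δ) := by ring
    rw [h5] at h3
    exact (mul_pos_iff_of_pos_left h4).mp h3
  have habove : ∀ ν, ∑ r ∈ S.toFinset.filter (fun r => ν < r), S.count r =
      (S.filter (fun r => ν < r)).card := by
    intro ν
    rw [← Multiset.toFinset_sum_count_eq, Multiset.toFinset_filter]
    apply Finset.sum_congr rfl
    intro r hr
    rw [Multiset.count_filter_of_pos (Finset.mem_filter.mp hr).2]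
  have hcb := comb_bound (fun r => S.count r) S.toFinset (fun s _ => hle3 s)
  have hsum := Multiset.toFinset_sum_count_eq S
  have hq : qMat A = S.toFinset.card := rfl
  rw [hq]
  rcases lt_or_gt_of_ne hδ0 with hneg | hpos
  · have := hcb.2 (by
      intro s _ hs
      rw [habove s]
      by_contra hodd
      rw [Nat.not_odd_iff_even] at hodd
      have := hsign s hs
      rw [hodd.neg_one_pow] at this
      linarith)
    omega
  · have := hcb.1 (by
      intro s _ hs
      rw [habove s]
      by_contra hev
      rw [Nat.not_even_iff_odd] at hev
      have := hsign s hs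
      rw [hev.neg_one_pow] at this
      linarith)
    omega

theorem main_aux (k n : ℕ) (hn : n = 2 * (2 * k + 1) + 1 + 3) (lam : Fin (k + 2) → ℝ)
    (hlam : StrictMono lam) :
    (∃ mu : Fin (k + 1) → ℝ,
      (∀ i : Fin (k + 1), lam i.castSucc < mu i ∧ mu i < lam i.succ) ∧
      ∃ N : Matrix (Fin 1 ⊕ Fin n) (Fin 1 ⊕ Fin n) ℝ,
        inS (graphJoin (⊤ : SimpleGraph (Fin 1))
          (SimpleGraph.cycleGraph n)) N ∧
        specMultiset N = 3 • (Finset.univ.val.map lam) + Finset.univ.val.map mu) ∧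
    qGraph (graphJoin (⊤ : SimpleGraph (Fin 1))
      (SimpleGraph.cycleGraph n)) = 2 * (k + 2) - 1 := by
  subst hn
  obtain ⟨mu, hmu, N, hN, hspec⟩ := upper k lam hlam
  refine ⟨⟨mu, hmu, N, hN, hspec⟩, ?_⟩
  have h1 := upper_q k lam hlam mu N hspec
  unfold qGraph
  apply le_antisymm
  · refine le_trans (b := qMat N) ?_ (by omega)
    apply Nat.sInf_le
    exact ⟨N, hN, rfl⟩
  · refine le_csInf ⟨qMat N, N, hN, rfl⟩ ?_
    rintro q ⟨A, hA, rfl⟩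
    have := lower A hA
    omega

/-- Example 3.12: for `m = k + 2 ≥ 2` and any `λ₁ < … < λ_m`, there are
`μ_i ∈ (λ_i, λ_{i+1})` and `N ∈ S(K₁ ∨ C_{4m−2})` with spectrum
`{λ₁^(3), μ₁, λ₂^(3), …, μ_{m−1}, λ_m^(3)}`; moreover `q(K₁ ∨ C_{4m−2}) = 2m − 1`. -/
theorem statement17 (k : ℕ) (lam : Fin (k + 2) → ℝ) (hlam : StrictMono lam) :
    (∃ mu : Fin (k + 1) → ℝ,
      (∀ i : Fin (k + 1), lam i.castSucc < mu i ∧ mu i < lam i.succ) ∧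
      ∃ N : Matrix (Fin 1 ⊕ Fin (4 * (k + 2) - 2)) (Fin 1 ⊕ Fin (4 * (k + 2) - 2)) ℝ,
        inS (graphJoin (⊤ : SimpleGraph (Fin 1))
          (SimpleGraph.cycleGraph (4 * (k + 2) - 2))) N ∧
        specMultiset N = 3 • (Finset.univ.val.map lam) + Finset.univ.val.map mu) ∧
    qGraph (graphJoin (⊤ : SimpleGraph (Fin 1))
      (SimpleGraph.cycleGraph (4 * (k + 2) - 2))) = 2 * (k + 2) - 1 := by
  exact main_aux k _ (by omega) lam hlam
end
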